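/- arXiv:0709.2638 — 6 statements merged into one kernel-verified Lean document; each statement's English description precedes it below -/
import Mathlib

section
/- Let α ∈ (0,1) be irrational and x₀ ∈ [0,1), and let s be the Sturmian word with slope α and intercept x₀. Then s is a fixed point of some substitution φ over {0,1} different from the identity (i.e., φ(0) ≠ 0 or φ(1) ≠ 1 as words) if and only if the following three conditions hold: (i) α is a Sturm number; (ii) x₀ = p + qα for some rationals p, q; (iii) min(α′, 1−α′) ≤ p + qα′ ≤ max(α′, 1−α′), where α′ is the conjugate of α and p + qα′ is the conjugate x₀′ of x₀. -/
/-- The extension of a substitution `φ` to finite words, by concatenation. -/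
def substWord {A : Type*} (φ : A → List A) (w : List A) : List A := w.flatMap φ

/-- A right-infinite word `s : ℕ → A` is a fixed point of the substitution `φ`. -/
def IsFixedPointSubst {A : Type*} (φ : A → List A) (s : ℕ → A) : Prop :=
  ∃ k : ℕ → ℕ, StrictMono k ∧ k 0 = 0 ∧
    (∀ n, k (n + 1) = k n + (φ (s n)).length) ∧
    ∀ n, ∀ i, (h : i < (φ (s n)).length) → s (k n + i) = (φ (s n)).get ⟨i, h⟩

/-- The Sturmian word with slope `α` and intercept `x₀`:
`s n = ⌊(n+1)α + x₀⌋ − ⌊nα + x₀⌋ ∈ {0,1}`. -/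
noncomputable def sturmianWord (α x₀ : ℝ) (n : ℕ) : Fin 2 :=
  if ⌊((n : ℝ) + 1) * α + x₀⌋ - ⌊(n : ℝ) * α + x₀⌋ = 1 then 1 else 0

namespace SturmSub

lemma dense_orbit {α : ℝ} (hirr : Irrational α) (x u v : ℝ) (hu : 0 ≤ u) (huv : u < v)
    (hv : v ≤ 1) : ∃ n : ℕ, u < n * α + x - ⌊n * α + x⌋ ∧ n * α + x - ⌊n * α + x⌋ < v := by
  have hd : DenseRange (fun n : ℕ => n • (α : AddCircle (1 : ℝ))) := by
    rw [← denseRange_zsmul_iff_nsmul, AddCircle.denseRange_zsmul_coe_iff]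
    simpa using hirr
  have hop : IsOpen ((fun z : ℝ => (z : AddCircle (1 : ℝ))) '' Set.Ioo (u - x) (v - x)) :=
    QuotientAddGroup.isOpenMap_coe _ isOpen_Ioo
  obtain ⟨n, z, hz, hn⟩ := hd.exists_mem_open hop
    ((Set.nonempty_Ioo.2 (by linarith)).image _)
  refine ⟨n, ?_⟩
  simp only at hn
  rw [← AddCircle.coe_nsmul, ← sub_eq_zero, ← AddCircle.coe_sub, AddCircle.coe_eq_zero_iff] at hn
  obtain ⟨N, hN⟩ := hn
  simp only [nsmul_eq_mul, zsmul_eq_mul, mul_one] at hN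
  have hfl : ⌊(n : ℝ) * α + x⌋ = -N := by
    rw [Int.floor_eq_iff]
    push_cast
    constructor <;> linarith [hz.1, hz.2]
  rw [hfl]
  push_cast
  constructor <;> linarith [hz.1, hz.2]

/-- number of ones in the prefix of length `n` -/
noncomputable def mm (α x : ℝ) (n : ℕ) : ℤ := ⌊(n : ℝ) * α + x⌋

lemma mm_zero {α x : ℝ} (hx : x ∈ Set.Ico (0 : ℝ) 1) : mm α x 0 = 0 := by
  simp [mm, Int.floor_eq_iff]; exact hx

lemma mm_succ {α x : ℝ} (hα : α ∈ Set.Ioo (0 : ℝ) 1) (n : ℕ) :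
    mm α x (n + 1) = mm α x n + ((sturmianWord α x n).val : ℤ) := by
  have h1 : mm α x n ≤ mm α x (n + 1) := by
    apply Int.floor_le_floor; push_cast; nlinarith [hα.1]
  have h2 : mm α x (n + 1) ≤ mm α x n + 1 := by
    unfold mm
    rw [← Int.floor_add_one]
    apply Int.floor_le_floor; push_cast; nlinarith [hα.2]
  unfold sturmianWord
  unfold mm at *
  push_cast at *
  split_ifs with h
  · simp; omega
  · simp; omega

lemma letter_eq {α x : ℝ} (hα : α ∈ Set.Ioo (0 : ℝ) 1) (n : ℕ) :
    (sturmianWord α x n = 0 ↔ n * α + x - mm α x n < 1 - α) := by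
  have h := mm_succ (x := x) hα n
  have hf := Int.floor_le ((n : ℝ) * α + x)
  have hf2 := Int.floor_le (((n + 1 : ℕ) : ℝ) * α + x)
  have hf3 := Int.lt_floor_add_one (((n + 1 : ℕ) : ℝ) * α + x)
  change (mm α x n : ℝ) ≤ _ at hf
  change (mm α x (n + 1) : ℝ) ≤ _ at hf2
  change _ < (mm α x (n + 1) : ℝ) + 1 at hf3
  push_cast at hf2 hf3
  constructor
  · intro h0
    rw [h0] at h
    simp at h
    rw [h] at hf2 hf3
    linarith
  · intro h0
    by_contra h1
    have h1 : sturmianWord α x n = 1 := by omega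
    rw [h1] at h
    simp at h
    rw [h] at hf2 hf3
    push_cast at hf2 hf3
    linarith

lemma list_prop (u v : List (Fin 2)) (h : u ++ v = v ++ u) :
    u.length * v.count 1 = v.length * u.count 1 := by
  induction hn : u.length + v.length using Nat.strong_induction_on generalizing u v with
  | _ N ih =>
    subst hn
    rcases Nat.eq_zero_or_pos u.length with hu | hu
    · simp [List.length_eq_zero_iff.1 hu]
    rcases Nat.eq_zero_or_pos v.length with hv | hv
    · simp [List.length_eq_zero_iff.1 hv]
    rcases List.append_eq_append_iff.1 h with ⟨w, hw, hw'⟩ | ⟨w, hw, hw'⟩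
    · have := ih (u.length + w.length) (by rw [hw]; simp; omega) u w
        (by rw [← hw, ← hw']) rfl
      subst hw
      simp only [List.length_append, List.count_append]
      nlinarith
    · have := ih (w.length + v.length) (by rw [hw]; simp; omega) w v
        (by rw [← hw, ← hw']) rfl
      subst hw
      simp only [List.length_append, List.count_append]
      nlinarith

lemma list_ext_count (u v : List (Fin 2)) (hl : u.length = v.length)
    (h : ∀ j ≤ u.length, (u.take j).count 1 = (v.take j).count 1) : u = v := by
  apply List.ext_getElem hl
  intro i h1 h2
  have ha := h i h1.le
  have hb := h (i + 1) h1
  rw [List.take_add_one, List.take_add_one, List.getElem?_eq_getElem h1,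
    List.getElem?_eq_getElem h2, List.count_append, List.count_append, ha] at hb
  simp only [Option.toList_some, List.count_singleton, add_right_inj] at hb
  generalize u[i] = p at hb
  generalize v[i] = q at hb
  revert p q; decide

lemma mm_word {α x : ℝ} (hα : α ∈ Set.Ioo (0 : ℝ) 1) (w : List (Fin 2)) (k : ℕ)
    (h : ∀ i, (hi : i < w.length) → sturmianWord α x (k + i) = w[i]) (j : ℕ)
    (hj : j ≤ w.length) :
    mm α x (k + j) = mm α x k + ((w.take j).count 1 : ℤ) := by
  induction j with
  | zero => simp
  | succ j ih =>
    rw [← add_assoc, mm_succ hα, ih (by omega), h j hj, List.take_add_one,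
      List.getElem?_eq_getElem hj, List.count_append]
    simp only [Option.toList_some, List.count_singleton]
    generalize w[j] = p
    revert p
    intro p
    fin_cases p <;> simp [add_assoc]

set_option maxHeartbeats 4000000 in
/-- The word built from the affine map is a fixed point. -/
lemma suff_core {α β x x' lam mu : ℝ} {a b c d g h : ℤ} (hα : α ∈ Set.Ioo (0 : ℝ) 1)
    (hx : x ∈ Set.Ico (0 : ℝ) 1)
    (h1 : lam = a + b * α) (h2 : lam * α = c + d * α)
    (h3 : mu = a + b * β) (h4 : mu * β = c + d * β)
    (h5 : a * α - c = mu * α) (h6 : d - b * α = mu)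
    (h7 : a * β - c = lam * β) (h8 : d - b * β = lam)
    (hlm : lam * mu = 1) (hmu0 : 0 < mu) (hmu1 : mu < 1)
    (hx1 : x * (1 - lam) = g + h * α) (hx2 : x' * (1 - mu) = g + h * β)
    (hβ : (β < 0 ∧ β ≤ x' ∧ x' ≤ 1 - β) ∨ (1 < β ∧ 1 - β ≤ x' ∧ x' ≤ β)) :
    ∃ φ : Fin 2 → List (Fin 2), (∀ a, φ a ≠ []) ∧ (φ 0 ≠ [0] ∨ φ 1 ≠ [1]) ∧
        IsFixedPointSubst φ (sturmianWord α x) := by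
  obtain ⟨hα0, hα1⟩ := hα
  obtain ⟨hx0, hxl⟩ := hx
  have hlam : 1 < lam := by
    by_contra hc
    push Not at hc
    nlinarith
  -- lengths are positive
  have hb : b ≠ 0 := by
    rintro rfl
    simp at h1 h3
    linarith
  have hpos : 0 < a ∧ 0 < a + b := by
    rcases hβ with ⟨hb0, -, -⟩ | ⟨hb1, -, -⟩
    · have hb' : (0 : ℝ) < b := by
        by_contra hc
        push Not at hc
        nlinarith
      have ha : (0 : ℝ) < a := by nlinarith
      have hb'' : 0 < b := by exact_mod_cast hb'
      have ha' : 0 < a := by exact_mod_cast ha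
      omega
    · have hb' : (b : ℝ) < 0 := by
        by_contra hc
        push Not at hc
        nlinarith
      have ha : (0 : ℝ) < a + b := by nlinarith
      have hb'' : b < 0 := by exact_mod_cast hb'
      have ha' : 0 < a + b := by exact_mod_cast ha
      omega
  obtain ⟨hapos, habpos⟩ := hpos
  set T : ℝ → ℝ := fun y => mu * (y - x) + x with hT
  have hT01 : ∀ y, 0 ≤ y → y < 1 → 0 ≤ T y ∧ T y < 1 := by
    intro y hy0 hy1
    simp only [hT]
    constructor <;> nlinarith
  have hT1 : T 1 ≤ 1 := by simp only [hT]; nlinarith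
  have hT0 : 0 ≤ T 0 := (hT01 0 le_rfl one_pos).1
  -- preimage of a discontinuity
  have hpre : ∀ i j : ℤ, ∃ i' j' : ℤ, ∀ lo hi : ℝ, T lo < i - j * α → i - j * α < T hi →
      lo < i' - j' * α ∧ (i' : ℝ) - j' * α < hi ∧
      (i' : ℝ) - j' * β = x' * (1 - mu) + mu * (i - j * β) := by
    intro i j
    refine ⟨g + a * i - j * c, -(h + b * i - d * j), fun lo hi hlo hhi => ?_⟩
    have e1 : ((g + a * i - j * c : ℤ) : ℝ) - ((-(h + b * i - d * j) : ℤ) : ℝ) * α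
        = x * (1 - lam) + lam * (i - j * α) := by
      push_cast
      linear_combination -hx1 - i * h1 + j * h2
    have e2 : ((g + a * i - j * c : ℤ) : ℝ) - ((-(h + b * i - d * j) : ℤ) : ℝ) * β
        = x' * (1 - mu) + mu * (i - j * β) := by
      push_cast
      linear_combination -hx2 - i * h3 + j * h4
    refine ⟨?_, ?_, e2⟩
    · rw [e1]
      have := mul_lt_mul_of_pos_left hlo (by linarith : 0 < lam)
      simp only [hT] at this
      have e : lam * (mu * (lo - x) + x) = lo - x + lam * x := by
        linear_combination (lo - x) * hlm
      linarith
    · rw [e1]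
      have := mul_lt_mul_of_pos_left hhi (by linarith : 0 < lam)
      simp only [hT] at this
      have e : lam * (mu * (hi - x) + x) = hi - x + lam * x := by
        linear_combination (hi - x) * hlm
      linarith
  -- no discontinuity in the first interval
  have key0 : ∀ i j : ℤ, 1 ≤ j → j < a → T 0 < i - j * α → i - j * α < T (1 - α) → False := by
    intro i j hj1 hja hlo hhi
    obtain ⟨i', j', H⟩ := hpre i j
    obtain ⟨E1, E2, E3⟩ := H _ _ hlo hhi
    have hj1r : (1 : ℝ) ≤ j := by exact_mod_cast hj1
    have hjar : (j : ℝ) + 1 ≤ a := by exact_mod_cast hja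
    have hTT : T (1 - α) + mu * α = T 1 := by simp only [hT]; ring
    have hmα : 0 < mu * α := mul_pos hmu0 hα0
    have P1 : 0 < (j : ℝ) * α := mul_pos (by linarith) hα0
    have P2 : 0 ≤ (j : ℝ) * (1 - α) := mul_nonneg (by linarith) (by linarith)
    have P3 : 0 ≤ (a - j - 1 : ℝ) * α := mul_nonneg (by linarith) hα0.le
    have P4 : 0 ≤ (a - j - 1 : ℝ) * (1 - α) := mul_nonneg (by linarith) (by linarith)
    have hi0 : 1 ≤ i := by
      have : (0 : ℝ) < i := by linarith
      exact_mod_cast this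
    have hij : i ≤ j := by
      have : (i : ℝ) < j + 1 := by linarith
      have : i < j + 1 := by exact_mod_cast this
      omega
    have hic : i ≤ c := by
      have : (i : ℝ) < c + 1 := by linarith
      have : i < c + 1 := by exact_mod_cast this
      omega
    have hci : c - i ≤ a - j - 1 := by
      have : (c : ℝ) - i < a - j := by linarith
      have : c - i < a - j := by exact_mod_cast this
      omega
    have hi0r : (1 : ℝ) ≤ i := by exact_mod_cast hi0
    have hijr : (i : ℝ) ≤ j := by exact_mod_cast hij
    have hicr : (i : ℝ) ≤ c := by exact_mod_cast hic
    have hcir : (c : ℝ) - i ≤ a - j - 1 := by exact_mod_cast hci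
    rcases hβ with ⟨hb0, hx'1, hx'2⟩ | ⟨hb1, hx'1, hx'2⟩
    · have Q1 : 0 < (j : ℝ) * (-β) := mul_pos (by linarith) (by linarith)
      have Q2 : 0 ≤ (a - j - 1 : ℝ) * (-β) := mul_nonneg (by linarith) (by linarith)
      have Q3 : 0 ≤ (x' - β) * (1 - mu) := mul_nonneg (by linarith) (by linarith)
      have Q4 : 0 ≤ (1 - β - x') * (1 - mu) := mul_nonneg (by linarith) (by linarith)
      have Q5 : 0 < mu * (-β) := mul_pos hmu0 (by linarith)
      have D1 : 0 < i - j * β := by linarith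
      have D2 : i - j * β ≤ -(lam - 1) * β := by linarith
      have D3 : mu * (i - j * β) ≤ - (1 - mu) * β := by
        have := mul_le_mul_of_nonneg_left D2 hmu0.le
        linear_combination this - β * hlm
      have F1 : β < i' - j' * β := by
        rw [E3]; linarith [mul_pos hmu0 D1]
      have F2 : i' - j' * β < 1 - 2 * β := by
        rw [E3]; linarith
      rcases le_or_gt j' (-1) with hj | hj
      · have hjr : (j' : ℝ) ≤ -1 := by exact_mod_cast hj
        have : (i' : ℝ) < 1 := by nlinarith only [hjr, E1, E2, hα0, hα1]
        have : i' < 1 := by exact_mod_cast this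
        have : i' ≤ 0 := by omega
        have : (i' : ℝ) ≤ 0 := by exact_mod_cast this
        nlinarith only [hjr, this, F1, F2, hb0]
      · rcases le_or_gt 2 j' with hj2 | hj2
        · have hjr : (2 : ℝ) ≤ j' := by exact_mod_cast hj2
          have : (0 : ℝ) < i' := by nlinarith only [hjr, E1, E2, hα0, hα1]
          have : 0 < i' := by exact_mod_cast this
          have : 1 ≤ i' := by omega
          have : (1 : ℝ) ≤ i' := by exact_mod_cast this
          nlinarith only [hjr, this, F1, F2, hb0]
        · have : j' = 0 ∨ j' = 1 := by omega
          rcases this with rfl | rfl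
          · simp at E1 E2
            have : (i' : ℝ) < 1 := by linarith
            have : i' < 1 := by exact_mod_cast this
            omega
          · simp at E1 E2
            have : (i' : ℝ) < 1 := by linarith
            have : i' < 1 := by exact_mod_cast this
            have : (0 : ℝ) < i' := by linarith
            have : 0 < i' := by exact_mod_cast this
            omega
    · have Q1 : 0 < (j : ℝ) * (β - 1) := mul_pos (by linarith) (by linarith)
      have Q2 : 0 ≤ (a - j - 1 : ℝ) * (β - 1) := mul_nonneg (by linarith) (by linarith)
      have Q3 : 0 ≤ (β - x') * (1 - mu) := mul_nonneg (by linarith) (by linarith)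
      have Q4 : 0 ≤ (x' - 1 + β) * (1 - mu) := mul_nonneg (by linarith) (by linarith)
      have Q5 : 0 < mu * (β - 1) := mul_pos hmu0 (by linarith)
      have D1 : i - j * β < 0 := by linarith
      have D2 : -(lam - 1) * β ≤ i - j * β := by linarith
      have D3 : - (1 - mu) * β ≤ mu * (i - j * β) := by
        have := mul_le_mul_of_nonneg_left D2 hmu0.le
        linear_combination this + β * hlm
      have F1 : i' - j' * β < β := by
        rw [E3]; linarith [mul_pos hmu0 (neg_pos.2 D1)]
      have F2 : 1 - 2 * β < i' - j' * β := by
        rw [E3]; linarith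
      rcases le_or_gt j' (-1) with hj | hj
      · have hjr : (j' : ℝ) ≤ -1 := by exact_mod_cast hj
        have : (j' : ℝ) < i' := by nlinarith only [hjr, E1, E2, hα0, hα1]
        have : j' < i' := by exact_mod_cast this
        have : j' + 1 ≤ i' := by omega
        have : (j' : ℝ) + 1 ≤ i' := by exact_mod_cast this
        nlinarith only [hjr, this, F1, F2, hb1]
      · rcases le_or_gt 2 j' with hj2 | hj2
        · have hjr : (2 : ℝ) ≤ j' := by exact_mod_cast hj2
          have : (i' : ℝ) < j' := by nlinarith only [hjr, E1, E2, hα0, hα1]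
          have : i' < j' := by exact_mod_cast this
          have : i' + 1 ≤ j' := by omega
          have : (i' : ℝ) + 1 ≤ j' := by exact_mod_cast this
          nlinarith only [hjr, this, F1, F2, hb1]
        · have : j' = 0 ∨ j' = 1 := by omega
          rcases this with rfl | rfl
          · simp at E1 E2
            have : (i' : ℝ) < 1 := by linarith
            have : i' < 1 := by exact_mod_cast this
            omega
          · simp at E1 E2
            have : (i' : ℝ) < 1 := by linarith
            have : i' < 1 := by exact_mod_cast this
            have : (0 : ℝ) < i' := by linarith
            have : 0 < i' := by exact_mod_cast this
            omega
  have key1 : ∀ i j : ℤ, 1 ≤ j → j < a + b → T (1 - α) < i - j * α → i - j * α < T 1 →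
      False := by
    intro i j hj1 hja hlo hhi
    obtain ⟨i', j', H⟩ := hpre i j
    obtain ⟨E1, E2, E3⟩ := H _ _ hlo hhi
    have hj1r : (1 : ℝ) ≤ j := by exact_mod_cast hj1
    have hjar : (j : ℝ) + 1 ≤ a + b := by exact_mod_cast hja
    have hTT : T 0 + mu * (1 - α) = T (1 - α) := by simp only [hT]; ring
    have hmα : 0 < mu * (1 - α) := mul_pos hmu0 (by linarith)
    have P1 : 0 < (j : ℝ) * α := mul_pos (by linarith) hα0
    have P2 : 0 ≤ (j : ℝ) * (1 - α) := mul_nonneg (by linarith) (by linarith)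
    have P3 : 0 ≤ ((a + b) - j - 1 : ℝ) * α := mul_nonneg (by linarith) hα0.le
    have P4 : 0 ≤ ((a + b) - j - 1 : ℝ) * (1 - α) := mul_nonneg (by linarith) (by linarith)
    have hi0 : 1 ≤ i := by
      have : (0 : ℝ) < i := by linarith
      exact_mod_cast this
    have hij : i ≤ j := by
      have : (i : ℝ) < j + 1 := by linarith
      have : i < j + 1 := by exact_mod_cast this
      omega
    have hic : i ≤ c + d := by
      have : (i : ℝ) < c + d + 1 := by linarith
      have : i < c + d + 1 := by exact_mod_cast this
      omega
    have hci : c + d - i ≤ a + b - j - 1 := by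
      have : (c : ℝ) + d - i < a + b - j := by linarith
      have : c + d - i < a + b - j := by exact_mod_cast this
      omega
    have hi0r : (1 : ℝ) ≤ i := by exact_mod_cast hi0
    have hijr : (i : ℝ) ≤ j := by exact_mod_cast hij
    have hicr : (i : ℝ) ≤ c + d := by exact_mod_cast hic
    have hcir : (c : ℝ) + d - i ≤ a + b - j - 1 := by exact_mod_cast hci
    rcases hβ with ⟨hb0, hx'1, hx'2⟩ | ⟨hb1, hx'1, hx'2⟩
    · have Q1 : 0 < (j : ℝ) * (-β) := mul_pos (by linarith) (by linarith)
      have Q2 : 0 ≤ ((a + b) - j - 1 : ℝ) * (-β) := mul_nonneg (by linarith) (by linarith)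
      have Q3 : 0 ≤ (x' - β) * (1 - mu) := mul_nonneg (by linarith) (by linarith)
      have Q4 : 0 ≤ (1 - β - x') * (1 - mu) := mul_nonneg (by linarith) (by linarith)
      have Q5 : 0 < mu * (-β) := mul_pos hmu0 (by linarith)
      have D1 : 0 < i - j * β := by linarith
      have D2 : i - j * β ≤ lam * (1 - β) + β := by linarith
      have D3 : mu * (i - j * β) ≤ 1 - β + mu * β := by
        have := mul_le_mul_of_nonneg_left D2 hmu0.le
        linear_combination this + (1 - β) * hlm
      have F1 : β < i' - j' * β := by
        rw [E3]; linarith [mul_pos hmu0 D1]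
      have F2 : i' - j' * β < 2 - 2 * β := by
        rw [E3]; linarith
      rcases le_or_gt j' (-1) with hj | hj
      · have hjr : (j' : ℝ) ≤ -1 := by exact_mod_cast hj
        have : (i' : ℝ) < 1 := by nlinarith only [hjr, E1, E2, hα0, hα1]
        have : i' < 1 := by exact_mod_cast this
        have : i' ≤ 0 := by omega
        have : (i' : ℝ) ≤ 0 := by exact_mod_cast this
        nlinarith only [hjr, this, F1, F2, hb0]
      · rcases le_or_gt 2 j' with hj2 | hj2
        · have hjr : (2 : ℝ) ≤ j' := by exact_mod_cast hj2
          have : (1 : ℝ) < i' := by nlinarith only [hjr, E1, E2, hα0, hα1]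
          have : 1 < i' := by exact_mod_cast this
          have : 2 ≤ i' := by omega
          have : (2 : ℝ) ≤ i' := by exact_mod_cast this
          nlinarith only [hjr, this, F1, F2, hb0]
        · have : j' = 0 ∨ j' = 1 := by omega
          rcases this with rfl | rfl
          · push_cast at E1 E2
            have : (0 : ℝ) < i' := by linarith
            have : 0 < i' := by exact_mod_cast this
            have : (i' : ℝ) < 1 := by linarith
            have : i' < 1 := by exact_mod_cast this
            omega
          · push_cast at E1 E2
            have : (i' : ℝ) < 2 := by linarith
            have : i' < 2 := by exact_mod_cast this
            have : (1 : ℝ) < i' := by linarith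
            have : 1 < i' := by exact_mod_cast this
            omega
    · have Q1 : 0 < (j : ℝ) * (β - 1) := mul_pos (by linarith) (by linarith)
      have Q2 : 0 ≤ ((a + b) - j - 1 : ℝ) * (β - 1) := mul_nonneg (by linarith) (by linarith)
      have Q3 : 0 ≤ (β - x') * (1 - mu) := mul_nonneg (by linarith) (by linarith)
      have Q4 : 0 ≤ (x' - 1 + β) * (1 - mu) := mul_nonneg (by linarith) (by linarith)
      have Q5 : 0 < mu * (β - 1) := mul_pos hmu0 (by linarith)
      have D1 : i - j * β < 0 := by linarith
      have D2 : lam * (1 - β) + β ≤ i - j * β := by linarith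
      have D3 : 1 - β + mu * β ≤ mu * (i - j * β) := by
        have := mul_le_mul_of_nonneg_left D2 hmu0.le
        linear_combination this - (1 - β) * hlm
      have F1 : i' - j' * β < β := by
        rw [E3]; linarith [mul_pos hmu0 (neg_pos.2 D1)]
      have F2 : 2 - 2 * β < i' - j' * β := by
        rw [E3]; linarith
      rcases le_or_gt j' (-1) with hj | hj
      · have hjr : (j' : ℝ) ≤ -1 := by exact_mod_cast hj
        have : (j' : ℝ) < i' := by nlinarith only [hjr, E1, E2, hα0, hα1]
        have : j' < i' := by exact_mod_cast this
        have : j' + 1 ≤ i' := by omega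
        have : (j' : ℝ) + 1 ≤ i' := by exact_mod_cast this
        nlinarith only [hjr, this, F1, F2, hb1]
      · rcases le_or_gt 2 j' with hj2 | hj2
        · have hjr : (2 : ℝ) ≤ j' := by exact_mod_cast hj2
          have : (i' : ℝ) < j' + 1 := by nlinarith only [hjr, E1, E2, hα0, hα1]
          have : i' < j' + 1 := by exact_mod_cast this
          have : i' ≤ j' := by omega
          have : (i' : ℝ) ≤ j' := by exact_mod_cast this
          nlinarith only [hjr, this, F1, F2, hb1]
        · have : j' = 0 ∨ j' = 1 := by omega
          rcases this with rfl | rfl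
          · push_cast at E1 E2
            have : (0 : ℝ) < i' := by linarith
            have : 0 < i' := by exact_mod_cast this
            have : (i' : ℝ) < 1 := by linarith
            have : i' < 1 := by exact_mod_cast this
            omega
          · push_cast at E1 E2
            have : (i' : ℝ) < 2 := by linarith
            have : i' < 2 := by exact_mod_cast this
            have : (1 : ℝ) < i' := by linarith
            have : 1 < i' := by exact_mod_cast this
            omega
  have hTmono : ∀ y z, y < z → T y < T z := by
    intro y z hyz; simp only [hT]; nlinarith
  -- constancy of the floors
  have hfl0 : ∀ y, 0 ≤ y → y < 1 - α → ∀ j : ℕ, (j : ℤ) ≤ a →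
      ⌊(j : ℝ) * α + T y⌋ = ⌊(j : ℝ) * α + T 0⌋ := by
    intro y hy0 hy1 j hj
    rcases hy0.eq_or_lt with rfl | hy0'
    · rfl
    rcases Nat.eq_zero_or_pos j with rfl | hjp
    · have e1 := hT01 y hy0 (by linarith)
      have e2 := hT01 0 le_rfl one_pos
      rw [(Int.floor_eq_iff (z := 0)).2, (Int.floor_eq_iff (z := 0)).2] <;> simpa
    rcases hj.lt_or_eq with hj' | hj'
    · by_contra hne
      have hle : ⌊(j : ℝ) * α + T 0⌋ ≤ ⌊(j : ℝ) * α + T y⌋ :=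
        Int.floor_le_floor (by linarith [hTmono _ _ hy0'])
      have hlt := lt_of_le_of_ne hle (Ne.symm hne)
      rw [Int.floor_lt] at hlt
      have := Int.floor_le ((j : ℝ) * α + T y)
      refine key0 ⌊(j : ℝ) * α + T y⌋ j (by exact_mod_cast hjp) hj' ?_ ?_
      · push_cast; linarith
      · push_cast; linarith [hTmono _ _ hy1]
    · have hja : (j : ℝ) = a := by exact_mod_cast hj'
      have e1 := hT01 (y + α) (by linarith) (by linarith)
      have e2 := hT01 (0 + α) (by linarith) (by linarith)
      simp only [hT] at e1 e2
      rw [(Int.floor_eq_iff (z := c)).2, (Int.floor_eq_iff (z := c)).2] <;>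
      · simp only [hT]; rw [hja]; constructor <;> linarith
  have hfl1 : ∀ y, 1 - α ≤ y → y < 1 → ∀ j : ℕ, (j : ℤ) ≤ a + b →
      ⌊(j : ℝ) * α + T y⌋ = ⌊(j : ℝ) * α + T (1 - α)⌋ := by
    intro y hy0 hy1 j hj
    rcases hy0.eq_or_lt with rfl | hy0'
    · rfl
    rcases Nat.eq_zero_or_pos j with rfl | hjp
    · have e1 := hT01 y (by linarith) (by linarith)
      have e2 := hT01 (1 - α) (by linarith) (by linarith)
      rw [(Int.floor_eq_iff (z := 0)).2, (Int.floor_eq_iff (z := 0)).2] <;> simpa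
    rcases hj.lt_or_eq with hj' | hj'
    · by_contra hne
      have hle : ⌊(j : ℝ) * α + T (1 - α)⌋ ≤ ⌊(j : ℝ) * α + T y⌋ :=
        Int.floor_le_floor (by linarith [hTmono _ _ hy0'])
      have hlt := lt_of_le_of_ne hle (Ne.symm hne)
      rw [Int.floor_lt] at hlt
      have := Int.floor_le ((j : ℝ) * α + T y)
      refine key1 ⌊(j : ℝ) * α + T y⌋ j (by exact_mod_cast hjp) hj' ?_ ?_
      · push_cast; linarith
      · push_cast; linarith [hTmono _ _ hy1]
    · have hja : (j : ℝ) = a + b := by exact_mod_cast hj'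
      have e1 := hT01 (y + α - 1) (by linarith) (by linarith)
      have e2 := hT01 (1 - α + α - 1) (by linarith) (by linarith)
      simp only [hT] at e1 e2
      rw [(Int.floor_eq_iff (z := c + d)).2, (Int.floor_eq_iff (z := c + d)).2] <;>
      · simp only [hT]; rw [hja]; push_cast; constructor <;> linarith
  -- the substitution
  let φ : Fin 2 → List (Fin 2) := fun l =>
    if l = 0 then List.ofFn (fun i : Fin a.toNat => sturmianWord α (T 0) i)
    else List.ofFn (fun i : Fin (a + b).toNat => sturmianWord α (T (1 - α)) i)
  have hφ0 : φ 0 = List.ofFn (fun i : Fin a.toNat => sturmianWord α (T 0) i) := rfl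
  have hφ1 : φ 1 = List.ofFn (fun i : Fin (a + b).toNat => sturmianWord α (T (1 - α)) i) := rfl
  have hl0 : (φ 0).length = a.toNat := by rw [hφ0]; simp
  have hl1 : (φ 1).length = (a + b).toNat := by rw [hφ1]; simp
  refine ⟨φ, ?_, ?_, ?_⟩
  · intro l
    have : 0 < (φ l).length := by
      fin_cases l
      · change 0 < (φ 0).length; omega
      · change 0 < (φ 1).length; omega
    exact List.length_pos_iff.1 this
  · by_contra hc
    push Not at hc
    rw [hc.1] at hl0
    rw [hc.2] at hl1
    simp at hl0 hl1
    omega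
  · let k : ℕ → ℕ := fun n => ∑ i ∈ Finset.range n, (φ (sturmianWord α x i)).length
    have hk0 : k 0 = 0 := by simp [k]
    have hks : ∀ n, k (n + 1) = k n + (φ (sturmianWord α x n)).length :=
      fun n => Finset.sum_range_succ _ n
    have hkint : ∀ n, (k n : ℤ) = a * n + b * mm α x n := by
      intro n
      induction n with
      | zero => rw [mm_zero ⟨hx0, hxl⟩]; simp [hk0]
      | succ n ih =>
        rw [hks, mm_succ ⟨hα0, hα1⟩]
        push_cast
        rw [ih]
        generalize hl : sturmianWord α x n = l
        have : l = 0 ∨ l = 1 := by omega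
        rcases this with rfl | rfl
        · rw [hl0, Int.toNat_of_nonneg hapos.le]; simp; ring
        · rw [hl1, Int.toNat_of_nonneg habpos.le]; simp; ring
    refine ⟨k, ?_, hk0, hks, ?_⟩
    · apply strictMono_nat_of_lt_succ
      intro n
      rw [hks]
      have : sturmianWord α x n = 0 ∨ sturmianWord α x n = 1 := by omega
      rcases this with h | h <;> rw [h] <;> omega
    · intro n i hi
      set y := n * α + x - mm α x n with hy
      have hy0 : 0 ≤ y := by
        have := Int.floor_le ((n : ℝ) * α + x); simp only [hy, mm]; linarith
      have hy1 : y < 1 := by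
        have := Int.lt_floor_add_one ((n : ℝ) * α + x); simp only [hy, mm]; linarith
      have hkr : (k n : ℝ) = a * n + b * mm α x n := by exact_mod_cast hkint n
      have hTy : ∀ j : ℝ, ((k n : ℝ) + j) * α + x
          = (j * α + T y) + ((c * n + d * mm α x n : ℤ) : ℝ) := by
        intro j
        simp only [hT, hy]
        rw [hkr]
        push_cast
        linear_combination (n : ℝ) * h5 - (mm α x n : ℝ) * h6
      have hshift : ∀ z, (∀ j : ℕ, j ≤ i + 1 → ⌊(j : ℝ) * α + T y⌋ = ⌊(j : ℝ) * α + T z⌋) →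
          sturmianWord α x (k n + i) = sturmianWord α (T z) i := by
        intro z hz
        have z1 := hz i (by omega)
        have z2 := hz (i + 1) le_rfl
        unfold sturmianWord
        push_cast at z2 ⊢
        rw [add_assoc (k n : ℝ), hTy, hTy, Int.floor_add_intCast, Int.floor_add_intCast, z1, z2,
          add_sub_add_right_eq_sub]
      have hlet := letter_eq (x := x) ⟨hα0, hα1⟩ n
      have : sturmianWord α x n = 0 ∨ sturmianWord α x n = 1 := by omega
      rcases this with h | h
      · have hi' : i < a.toNat := by rw [h] at hi; omega
        have e : sturmianWord α x (k n + i) = sturmianWord α (T 0) i :=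
          hshift 0 (fun j hj => hfl0 y hy0 (hlet.1 h) j (by omega))
        rw [e]
        simp only [h, hφ0, List.get_eq_getElem, List.getElem_ofFn]
      · have hi' : i < (a + b).toNat := by rw [h] at hi; omega
        have hge : 1 - α ≤ y := by
          by_contra hc
          push Not at hc
          have := hlet.2 hc
          rw [h] at this
          simp at this
        have e : sturmianWord α x (k n + i) = sturmianWord α (T (1 - α)) i :=
          hshift (1 - α) (fun j hj => hfl1 y hge hy1 j (by omega))
        rw [e]
        simp only [h, hφ1, List.get_eq_getElem, List.getElem_ofFn]

lemma suff {α x : ℝ} (hirr : Irrational α) (hα : α ∈ Set.Ioo (0 : ℝ) 1)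
    (hx : x ∈ Set.Ico (0 : ℝ) 1) (A B C : ℤ) (p q : ℚ) (hA : A ≠ 0)
    (hq : (A : ℝ) * α ^ 2 + (B : ℝ) * α + (C : ℝ) = 0) (β : ℝ)
    (hβ : β = -(B : ℝ) / (A : ℝ) - α) (hβ01 : β ∉ Set.Ioo (0 : ℝ) 1)
    (hxpq : x = (p : ℝ) + (q : ℝ) * α)
    (hmin : min β (1 - β) ≤ (p : ℝ) + (q : ℝ) * β)
    (hmax : (p : ℝ) + (q : ℝ) * β ≤ max β (1 - β)) :
    ∃ φ : Fin 2 → List (Fin 2), (∀ a, φ a ≠ []) ∧ (φ 0 ≠ [0] ∨ φ 1 ≠ [1]) ∧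
        IsFixedPointSubst φ (sturmianWord α x) := by
  have hAr : (A : ℝ) ≠ 0 := by exact_mod_cast hA
  have hAβ : (A : ℝ) * β = -B - A * α := by rw [hβ]; field_simp
  have hqβ : (A : ℝ) * β ^ 2 + B * β + C = 0 := by
    linear_combination (β - α) * hAβ + hq
  have hβ0 : β ≠ 0 := by
    intro h
    apply hirr
    refine ⟨-(B : ℚ) / A, ?_⟩
    push_cast
    linarith
  have hβ1 : β ≠ 1 := by
    intro h
    apply hirr
    refine ⟨-(B : ℚ) / A - 1, ?_⟩
    push_cast
    linarith
  have hcase : (β < 0 ∧ β ≤ p + q * β ∧ p + q * β ≤ 1 - β) ∨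
      (1 < β ∧ 1 - β ≤ p + q * β ∧ p + q * β ≤ β) := by
    rcases lt_or_gt_of_ne hβ0 with h | h
    · left
      rw [min_eq_left (by linarith)] at hmin
      rw [max_eq_right (by linarith)] at hmax
      exact ⟨h, hmin, hmax⟩
    · right
      have h1 : 1 < β := by
        by_contra hc
        push Not at hc
        exact hβ01 ⟨h, lt_of_le_of_ne hc hβ1⟩
      rw [min_eq_right (by linarith)] at hmin
      rw [max_eq_left (by linarith)] at hmax
      exact ⟨h1, hmin, hmax⟩
  obtain ⟨M, P, Q, hM, hMp, hMq⟩ : ∃ M P Q : ℤ, 0 < M ∧ (M : ℝ) * p = P ∧ (M : ℝ) * q = Q := by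
    refine ⟨p.den * q.den, p.num * q.den, q.num * p.den, ?_, ?_, ?_⟩
    · have := p.den_pos; have := q.den_pos; positivity
    · have : (p : ℝ) * p.den = p.num := by exact_mod_cast Rat.mul_den_eq_num p
      push_cast
      linear_combination (q.den : ℝ) * this
    · have : (q : ℝ) * q.den = q.num := by exact_mod_cast Rat.mul_den_eq_num q
      push_cast
      linear_combination (p.den : ℝ) * this
  have hMr : (0 : ℝ) < M := by exact_mod_cast hM
  set s0 : ℝ := 2 * A * α + B with hs0
  have hs2 : s0 ^ 2 = ((B ^ 2 - 4 * A * C : ℤ) : ℝ) := by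
    push_cast
    rw [hs0]
    linear_combination 4 * (A : ℝ) * hq
  have hirr' : ∀ m : ℤ, s0 * M ≠ m := by
    intro m hm
    apply hirr
    refine ⟨((m : ℚ) / M - B) / (2 * A), ?_⟩
    push_cast
    field_simp
    rw [← hm, hs0]
    ring
  have hs00 : s0 ≠ 0 := by
    intro h
    apply hirr' 0
    simp [h]
  set Δ : ℤ := B ^ 2 - 4 * A * C with hΔ
  have hΔpos : 0 < Δ := by
    have : (0 : ℝ) < Δ := by rw [← hs2]; positivity
    exact_mod_cast this
  obtain ⟨t, v, htv, hv⟩ := Pell.exists_of_not_isSquare (d := Δ * M ^ 2) (by positivity) (by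
    rintro ⟨r, hr⟩
    have hr' : (Δ : ℝ) * M ^ 2 = r * r := by exact_mod_cast hr
    have h0 : (s0 * M - r) * (s0 * M + r) = 0 := by
      rw [← hs2] at hr'
      linear_combination hr'
    rcases mul_eq_zero.1 h0 with h | h
    · exact hirr' r (by linarith)
    · exact hirr' (-r) (by push_cast; linarith))
  have ht : t ≠ 0 := by
    rintro rfl
    have : 0 < Δ * M ^ 2 * v ^ 2 := by positivity
    linarith
  obtain ⟨w, hw, hw2⟩ : ∃ w : ℤ, 0 < w * s0 ∧ w ^ 2 = (2 * t * v) ^ 2 := by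
    have h1 : (t : ℝ) * v * s0 ≠ 0 := by
      simp [ht, hv, hs00]
    rcases lt_or_gt_of_ne h1 with h | h
    · exact ⟨-(2 * t * v), by push_cast; linarith, by ring⟩
    · exact ⟨2 * t * v, by push_cast; linarith, by ring⟩
  have hw2r : (w : ℝ) ^ 2 = (2 * t * v) ^ 2 := by exact_mod_cast hw2
  have htvr : (t : ℝ) ^ 2 - s0 ^ 2 * M ^ 2 * v ^ 2 = 1 := by
    rw [hs2]; exact_mod_cast htv
  set e : ℤ := 2 * Δ * M * v ^ 2 with he
  have her : (e : ℝ) = 2 * s0 ^ 2 * M * v ^ 2 := by rw [hs2, he]; push_cast; ring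
  have hepos : (0 : ℝ) < e := by rw [her]; have : (v : ℝ) ≠ 0 := by exact_mod_cast hv
                                 positivity
  have hMe : 0 < (M : ℝ) * e := mul_pos hMr hepos
  have hMw : 0 < (M : ℝ) * w * s0 := by have := mul_pos hMr hw; linarith
  have hlm : (1 + M * e + M * w * s0) * (1 + M * e - M * w * s0) = (1 : ℝ) := by
    rw [her]
    linear_combination (-M ^ 2 * s0 ^ 2) * hw2r - (4 * M ^ 2 * s0 ^ 2 * v ^ 2) * htvr
  refine suff_core (α := α) (β := β) (x := x) (x' := p + q * β) (lam := 1 + M * e + M * w * s0)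
    (mu := 1 + M * e - M * w * s0) (a := 1 + M * e + M * w * B) (b := 2 * M * w * A)
    (c := -2 * M * w * C) (d := 1 + M * e - M * w * B)
    (g := -(P * (e + w * B) - 2 * w * Q * C))
    (h := -(Q * (e + w * B) + 2 * w * A * P - 2 * w * Q * B))
    hα hx ?_ ?_ ?_ ?_ ?_ ?_ ?_ ?_ hlm ?_ ?_ ?_ ?_ hcase
  · push_cast; rw [hs0]; ring
  · push_cast; rw [hs0]; linear_combination 2 * M * w * hq
  · push_cast; rw [hs0]; linear_combination -2 * M * w * hAβ
  · push_cast; rw [hs0]; linear_combination 2 * M * w * hqβ - 2 * M * w * β * hAβ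
  · push_cast; rw [hs0]; linear_combination 2 * M * w * hq
  · push_cast; rw [hs0]; ring
  · push_cast; rw [hs0]; linear_combination 2 * M * w * hqβ - 2 * M * w * β * hAβ
  · push_cast; rw [hs0]; linear_combination -2 * M * w * hAβ
  · by_contra hc
    push Not at hc
    nlinarith
  · by_contra hc
    push Not at hc
    nlinarith
  · push_cast; rw [hxpq, ← hMp, ← hMq, hs0]
    linear_combination (-2 * M * q * w) * hq
  · push_cast; rw [← hMp, ← hMq, hs0]
    linear_combination (-2 * M * q * w) * hqβ + (2 * M * w * (p + q * β)) * hAβ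

lemma bounded_mul_nat {X K : ℝ} (h : ∀ n : ℕ, |(n : ℝ) * X| ≤ K) : X = 0 := by
  by_contra hX
  obtain ⟨n, hn⟩ := exists_nat_gt (K / |X|)
  have := h n
  rw [abs_mul, Nat.abs_cast] at this
  rw [div_lt_iff₀ (abs_pos.2 hX)] at hn
  linarith

lemma floor_locally_const {t : ℝ} (ht : ∀ i : ℤ, t ≠ i) :
    ∀ᶠ z in nhds t, ⌊z⌋ = ⌊t⌋ := by
  have h1 : (⌊t⌋ : ℝ) < t := lt_of_le_of_ne (Int.floor_le t) (Ne.symm (ht _))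
  have h2 := Int.lt_floor_add_one t
  filter_upwards [Ioo_mem_nhds h1 h2] with z hz
  rw [Int.floor_eq_iff]
  exact ⟨hz.1.le, hz.2⟩

set_option maxHeartbeats 1000000 in
lemma nec {α x : ℝ} (hirr : Irrational α) (hα : α ∈ Set.Ioo (0 : ℝ) 1)
    (hx : x ∈ Set.Ico (0 : ℝ) 1) (φ : Fin 2 → List (Fin 2)) (hne : ∀ a, φ a ≠ [])
    (hid : φ 0 ≠ [0] ∨ φ 1 ≠ [1]) (hfix : IsFixedPointSubst φ (sturmianWord α x)) :
    ∃ (A B C : ℤ) (p q : ℚ),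
      A ≠ 0 ∧ (A : ℝ) * α ^ 2 + (B : ℝ) * α + (C : ℝ) = 0 ∧
      (-(B : ℝ) / (A : ℝ) - α) ∉ Set.Ioo (0 : ℝ) 1 ∧
      x = (p : ℝ) + (q : ℝ) * α ∧
      min (-(B : ℝ) / (A : ℝ) - α) (1 - (-(B : ℝ) / (A : ℝ) - α))
        ≤ (p : ℝ) + (q : ℝ) * (-(B : ℝ) / (A : ℝ) - α) ∧
      (p : ℝ) + (q : ℝ) * (-(B : ℝ) / (A : ℝ) - α)
        ≤ max (-(B : ℝ) / (A : ℝ) - α) (1 - (-(B : ℝ) / (A : ℝ) - α)) := by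
  obtain ⟨k, hkm, hk0, hks, hkw⟩ := hfix
  have hα0 := hα.1
  have hα1 := hα.2
  have hirr1 : ∀ u v : ℤ, v ≠ 0 → (u : ℝ) + v * α ≠ 0 := by
    intro u v hv h
    have hvr : (v : ℝ) ≠ 0 := by exact_mod_cast hv
    apply hirr
    refine ⟨-(u : ℚ) / v, ?_⟩
    push_cast
    field_simp
    linarith
  have hL0 : 1 ≤ (φ 0).length := List.length_pos_iff.2 (hne 0)
  have hL1 : 1 ≤ (φ 1).length := List.length_pos_iff.2 (hne 1)
  obtain ⟨a, ha⟩ : ∃ a : ℤ, a = (φ 0).length := ⟨_, rfl⟩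
  obtain ⟨b, hb⟩ : ∃ b : ℤ, b = (φ 1).length - (φ 0).length := ⟨_, rfl⟩
  obtain ⟨c, hc⟩ : ∃ c : ℤ, c = (φ 0).count 1 := ⟨_, rfl⟩
  obtain ⟨d, hd⟩ : ∃ d : ℤ, d = (φ 1).count 1 - (φ 0).count 1 := ⟨_, rfl⟩
  have hlet2 : ∀ n, sturmianWord α x n = 0 ∨ sturmianWord α x n = 1 := fun n => by omega
  have hword : ∀ n i, (hi : i < (φ (sturmianWord α x n)).length) →
      sturmianWord α x (k n + i) = (φ (sturmianWord α x n))[i] := fun n i hi => hkw n i hi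
  have hk : ∀ n, (k n : ℤ) = a * n + b * mm α x n := by
    intro n
    induction n with
    | zero => simp [hk0, mm_zero hx]
    | succ n ih =>
      rw [hks, mm_succ hα]
      push_cast
      rw [ih]
      rcases hlet2 n with h | h <;> rw [h] <;> simp <;> rw [hb, ha] <;> ring
  have hmk : ∀ n, mm α x (k n) = c * n + d * mm α x n := by
    intro n
    induction n with
    | zero => simp [hk0, mm_zero hx]
    | succ n ih =>
      rw [hks, mm_word hα _ _ (hword n) _ le_rfl, List.take_length, mm_succ hα, ih]
      push_cast
      rcases hlet2 n with h | h <;> rw [h] <;> simp <;> rw [hd, hc] <;> ring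
  -- the orbit
  set y : ℕ → ℝ := fun n => n * α + x - mm α x n with hy
  have hy0 : ∀ n, 0 ≤ y n := fun n => by
    have := Int.floor_le ((n : ℝ) * α + x); simp only [hy, mm]; linarith
  have hy1 : ∀ n, y n < 1 := fun n => by
    have := Int.lt_floor_add_one ((n : ℝ) * α + x); simp only [hy, mm]; linarith
  have hdense : ∀ u v : ℝ, 0 ≤ u → u < v → v ≤ 1 → ∃ n, u < y n ∧ y n < v :=
    fun u v h1 h2 h3 => dense_orbit hirr x u v h1 h2 h3
  have hkr : ∀ n, (k n : ℝ) = a * n + b * mm α x n := fun n => by exact_mod_cast hk n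
  have hmkr : ∀ n, (mm α x (k n) : ℝ) = c * n + d * mm α x n := fun n => by
    exact_mod_cast hmk n
  have hyk : ∀ n, y (k n) = n * ((a * α - c) + (b * α - d) * α) + x
      + (b * α - d) * (x - y n) := by
    intro n
    simp only [hy]
    rw [hkr, hmkr]
    ring
  have hX : (a * α - c) + (b * α - d) * α = 0 := by
    apply bounded_mul_nat (K := 2 + |b * α - d|)
    intro n
    have e : n * ((a * α - c) + (b * α - d) * α) = y (k n) - x - (b * α - d) * (x - y n) := by
      rw [hyk]; ring
    rw [e]
    have t1 : |y (k n) - x| ≤ 2 := by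
      rw [abs_le]; constructor <;> linarith [hy0 (k n), hy1 (k n), hx.1, hx.2]
    have t2 : |x - y n| ≤ 1 := by
      rw [abs_le]; constructor <;> linarith [hy0 n, hy1 n, hx.1, hx.2]
    calc _ ≤ |y (k n) - x| + |(b * α - d) * (x - y n)| := abs_sub _ _
      _ ≤ _ := by
        rw [abs_mul]
        have := mul_le_mul_of_nonneg_left t2 (abs_nonneg (b * α - d))
        linarith
  set mu : ℝ := d - b * α with hmu
  set T : ℝ → ℝ := fun z => mu * (z - x) + x with hT
  have hyT : ∀ n, y (k n) = T (y n) := by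
    intro n
    rw [hyk, hX]; simp only [hT, hmu]; ring
  have hmule : |mu| ≤ 1 := by
    by_contra hc'
    push Not at hc'
    have hpos : 0 < |mu| := by linarith
    have hlt : 1 / |mu| < 1 := by rw [div_lt_one hpos]; exact hc'
    set δ := (1 - 1 / |mu|) / 2 with hδ
    have hδ0 : 0 < δ := by rw [hδ]; linarith
    have hδ1 : δ < 1 := by
      have : 0 < 1 / |mu| := by positivity
      rw [hδ]; linarith
    obtain ⟨n, -, hn⟩ := hdense 0 δ le_rfl hδ0 hδ1.le
    obtain ⟨n', hn', -⟩ := hdense (1 - δ) 1 (by linarith) (by linarith) le_rfl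
    have hdiff : 1 / |mu| ≤ y n' - y n := by rw [hδ] at hn hn'; linarith
    have e : y (k n') - y (k n) = mu * (y n' - y n) := by
      rw [hyT, hyT]; simp only [hT]; ring
    have h1 : |y (k n') - y (k n)| < 1 := by
      rw [abs_lt]; constructor <;> linarith [hy0 (k n), hy1 (k n), hy0 (k n'), hy1 (k n')]
    rw [e, abs_mul] at h1
    have h2 := le_abs_self (y n' - y n)
    have h3 : |mu| * (1 / |mu|) ≤ |mu| * |y n' - y n| :=
      mul_le_mul_of_nonneg_left (by linarith) hpos.le
    rw [mul_one_div_cancel hpos.ne'] at h3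
    linarith
  have hb0 : b ≠ 0 := by
    intro hb0
    have e1 : ((-c : ℤ) : ℝ) + ((a - d : ℤ) : ℝ) * α = 0 := by
      push_cast
      rw [hb0] at hX
      push_cast at hX
      linarith
    have had : a - d = 0 := by
      by_contra h
      exact hirr1 _ _ h e1
    have hc0 : c = 0 := by
      rw [had] at e1
      push_cast at e1
      have : (c : ℝ) = 0 := by linarith
      exact_mod_cast this
    have hd1 : d ≤ 1 := by
      have h := (abs_le.1 hmule).2
      rw [hmu, hb0] at h
      push_cast at h
      have : (d : ℝ) ≤ 1 := by linarith
      exact_mod_cast this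
    have l0 : (φ 0).length = 1 := by omega
    have l1 : (φ 1).length = 1 := by omega
    have c0 : (φ 0).count 1 = 0 := by omega
    have c1 : (φ 1).count 1 = 1 := by omega
    obtain ⟨p0, hp0⟩ := List.length_eq_one_iff.1 l0
    obtain ⟨p1, hp1⟩ := List.length_eq_one_iff.1 l1
    rw [hp0] at c0
    rw [hp1] at c1
    rw [hp0, hp1] at hid
    revert hid c0 c1
    clear * -
    revert p0 p1
    decide
  have hbr : (b : ℝ) ≠ 0 := by exact_mod_cast hb0
  have hmu_irr : ∀ m : ℤ, mu ≠ m := by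
    intro m hm
    apply hirr1 (d - m) (-b) (by omega)
    push_cast
    rw [hmu] at hm
    linarith
  have hmulr : |mu| < 1 := by
    apply lt_of_le_of_ne hmule
    intro h
    rcases eq_or_eq_neg_of_abs_eq h with h | h
    · exact hmu_irr 1 (by push_cast; exact h)
    · exact hmu_irr (-1) (by push_cast; exact h)
  obtain ⟨hmul, hmur⟩ := abs_lt.1 hmulr
  have hmu0 : mu ≠ 0 := fun h => hmu_irr 0 (by push_cast; exact h)
  have har : (1 : ℝ) ≤ a := by
    have : (1 : ℤ) ≤ a := by omega
    exact_mod_cast this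
  have habr : (1 : ℝ) ≤ a + b := by
    have : (1 : ℤ) ≤ a + b := by omega
    exact_mod_cast this
  set lam : ℝ := a + b * α with hlam
  have hlam1 : 1 < lam := by
    have e : lam - 1 = (a - 1) * (1 - α) + (a + b - 1) * α := by rw [hlam]; ring
    have h1 : 0 ≤ (a - 1) * (1 - α) := mul_nonneg (by linarith) (by linarith)
    have h2 : 0 ≤ (a + b - 1) * α := mul_nonneg (by linarith) (by linarith)
    rcases h1.lt_or_eq with h1' | h1'
    · linarith
    · have ha1 : (a : ℝ) = 1 := by
        rcases mul_eq_zero.1 h1'.symm with h | h <;> linarith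
      have : 0 < (a + b - 1) * α := by
        apply mul_pos _ hα0
        apply lt_of_le_of_ne (by linarith)
        intro h
        apply hbr
        linarith
      linarith
  obtain ⟨β, hβ⟩ : ∃ β : ℝ, β = -((a - d : ℤ) : ℝ) / (b : ℝ) - α := ⟨_, rfl⟩
  have hbβ : b * β = d - a - b * α := by rw [hβ]; push_cast; field_simp; ring
  have hmuβ : mu = a + b * β := by rw [hbβ, hmu]; ring
  have hXβ : (a * β - c) + (b * β - d) * β = 0 := by
    linear_combination hX + (β - α) * hbβ
  have hβ01 : β ∉ Set.Ioo (0 : ℝ) 1 := by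
    rintro ⟨h0, h1⟩
    have h2 : 0 ≤ (a - 1) * (1 - β) := mul_nonneg (by linarith) (by linarith)
    have h3 : 0 ≤ (a + b - 1) * β := mul_nonneg (by linarith) (by linarith)
    linarith
  have hcase : β < 0 ∨ 1 < β := by
    have hβ0 : β ≠ 0 := by
      intro h
      apply hirr1 (d - a) (-b) (by omega)
      rw [h] at hbβ
      push_cast
      linarith
    have hβ1 : β ≠ 1 := by
      intro h
      apply hirr1 (d - a - b) (-b) (by omega)
      rw [h] at hbβ
      push_cast
      linarith
    rcases lt_or_gt_of_ne hβ0 with h | h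
    · exact Or.inl h
    · right
      by_contra hc'
      push Not at hc'
      exact hβ01 ⟨h, lt_of_le_of_ne hc' hβ1⟩
  have hT01 : ∀ z, 0 < z → z < 1 → 0 < T z ∧ T z < 1 := by
    intro z hz0 hz1
    obtain ⟨n, hn0, hn⟩ := hdense 0 z le_rfl hz0 hz1.le
    obtain ⟨n', hn', hn1⟩ := hdense z 1 hz0.le hz1 le_rfl
    have e1 := hy0 (k n)
    have e2 := hy1 (k n)
    have e3 := hy0 (k n')
    have e4 := hy1 (k n')
    rw [hyT] at e1 e2 e3 e4
    simp only [hT] at e1 e2 e3 e4 ⊢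
    rcases lt_or_gt_of_ne hmu0 with h | h
    · have g1 := mul_pos_of_neg_of_neg h (sub_neg.2 hn)
      have g2 := mul_pos_of_neg_of_neg h (sub_neg.2 hn')
      constructor <;> linarith
    · have g1 := mul_pos h (sub_pos.2 hn)
      have g2 := mul_pos h (sub_pos.2 hn')
      constructor <;> linarith
  obtain ⟨ht0, ht1⟩ := hT01 (1 - α) (by linarith) (by linarith)
  obtain ⟨hu0, hu1⟩ := hT01 α hα0 hα1
  set L : ℕ := (φ 0).length + (φ 1).length with hL
  have hLr : (L : ℝ) = 2 * a + b := by
    have : (L : ℤ) = 2 * a + b := by omega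
    exact_mod_cast this
  -- the discontinuity
  obtain ⟨j, i, hj1, hjL, hij⟩ : ∃ (j : ℕ) (i : ℤ), 1 ≤ j ∧ j + 1 ≤ L ∧
      (j : ℝ) * α + T (1 - α) = i := by
    by_contra hcon
    push Not at hcon
    have hni : ∀ j ∈ Finset.range L, ∀ i : ℤ, (j : ℝ) * α + T (1 - α) ≠ i := by
      intro j hj i
      rw [Finset.mem_range] at hj
      rcases Nat.eq_zero_or_pos j with rfl | hjp
      · intro h
        simp at h
        rw [h] at ht0 ht1
        have h1 : 0 < i := by exact_mod_cast ht0
        have h2 : i < 1 := by exact_mod_cast ht1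
        omega
      · exact hcon j i hjp hj
    have hTc : Continuous T := by simp only [hT]; fun_prop
    have hev : ∀ᶠ z in nhds (1 - α), ∀ j ∈ Finset.range L,
        ⌊(j : ℝ) * α + T z⌋ = ⌊(j : ℝ) * α + T (1 - α)⌋ := by
      rw [Filter.eventually_all_finset]
      intro j hj
      have hcj : Continuous (fun z => (j : ℝ) * α + T z) := by fun_prop
      exact (hcj.tendsto (1 - α)).eventually (floor_locally_const (hni j hj))
    obtain ⟨ε, hε, hball⟩ := Metric.eventually_nhds_iff.1 hev
    have hm1 : 0 < min ε (min α (1 - α)) :=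
      lt_min hε (lt_min hα0 (by linarith))
    set η := min ε (min α (1 - α)) with hη
    have hηε : η ≤ ε := min_le_left _ _
    have hηα : η ≤ α := (min_le_right _ _).trans (min_le_left _ _)
    have hηα' : η ≤ 1 - α := (min_le_right _ _).trans (min_le_right _ _)
    obtain ⟨n, hn1, hn2⟩ := hdense (1 - α - η) (1 - α) (by linarith) (by linarith) (by linarith)
    obtain ⟨n', hn1', hn2'⟩ := hdense (1 - α) (1 - α + η) (by linarith) (by linarith)
      (by linarith)
    have hnc := hball (y := y n) (by rw [Real.dist_eq, abs_lt]; constructor <;> linarith)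
    have hnc' := hball (y := y n') (by rw [Real.dist_eq, abs_lt]; constructor <;> linarith)
    have s1 : sturmianWord α x n = 0 := (letter_eq hα n).2 hn2
    have s1' : sturmianWord α x n' = 1 := by
      rcases hlet2 n' with h | h
      · have := (letter_eq hα n').1 h
        exact absurd this (not_lt.2 hn1'.le)
      · exact h
    have ys : y (n + 1) = y n + α := by
      simp only [hy]
      rw [mm_succ hα, s1]
      push_cast
      simp
      ring
    have ys' : y (n' + 1) = y n' + α - 1 := by
      simp only [hy]
      rw [mm_succ hα, s1']
      push_cast
      simp
      ring
    have s2 : sturmianWord α x (n + 1) = 1 := by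
      rcases hlet2 (n + 1) with h | h
      · have := (letter_eq hα (n + 1)).1 h
        change y (n + 1) < 1 - α at this
        linarith
      · exact h
    have s2' : sturmianWord α x (n' + 1) = 0 := by
      apply (letter_eq hα (n' + 1)).2
      change y (n' + 1) < 1 - α
      linarith
    have hcat : ∀ r, ∀ i, (hi : i < (φ (sturmianWord α x r) ++
        φ (sturmianWord α x (r + 1))).length) → sturmianWord α x (k r + i) =
        (φ (sturmianWord α x r) ++ φ (sturmianWord α x (r + 1)))[i] := by
      intro r i hi
      rw [List.getElem_append]
      split_ifs with h
      · exact hword r i h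
      · rw [List.length_append] at hi
        have := hword (r + 1) (i - (φ (sturmianWord α x r)).length) (by omega)
        rw [← this, hks]
        congr 1
        omega
    have w1 := mm_word hα _ _ (hcat n)
    have w2 := mm_word hα _ _ (hcat n')
    rw [s1, s2] at w1
    rw [s1', s2'] at w2
    have hfloor : ∀ r j : ℕ, mm α x (k r + j) = mm α x (k r) + ⌊(j : ℝ) * α + T (y r)⌋ := by
      intro r j
      rw [← hyT]
      unfold mm
      rw [← Int.floor_intCast_add]
      congr 1
      simp only [hy, mm]
      push_cast
      ring
    have heq : φ 0 ++ φ 1 = φ 1 ++ φ 0 := by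
      apply list_ext_count _ _ (by simp [add_comm])
      intro j hj
      have hj' : j ≤ (φ 1 ++ φ 0).length := by simp at hj ⊢; omega
      rcases hj.lt_or_eq with hlt | rfl
      · have hjL : j ∈ Finset.range L := by
          rw [Finset.mem_range, hL, ← List.length_append]; exact hlt
        have q1 := w1 j hj
        have q2 := w2 j hj'
        rw [hfloor, hnc j hjL] at q1
        rw [hfloor, hnc' j hjL] at q2
        omega
      · rw [List.take_length, List.take_of_length_le (by simp [add_comm])]
        simp [List.count_append, add_comm]
    have hprop := list_prop _ _ heq
    have hdet : a * (c + d) = (a + b) * c := by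
      have e1 : a + b = (φ 1).length := by omega
      have e2 : c + d = (φ 1).count 1 := by omega
      rw [e1, e2, ha, hc]
      exact_mod_cast hprop
    have hdetr : (a : ℝ) * (c + d) = (a + b) * c := by exact_mod_cast hdet
    have : lam * mu = 0 := by
      rw [hlam, hmu]
      linear_combination hdetr - b * hX
    rcases mul_eq_zero.1 this with h | h
    · linarith
    · exact hmu0 h
  -- consequences
  have hj1r : (1 : ℝ) ≤ j := by exact_mod_cast hj1
  have hjLr : (j : ℝ) + 1 ≤ L := by exact_mod_cast hjL
  have hTα : T (1 - α) + L * α - (2 * c + d) = T α := by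
    rw [hLr]; simp only [hT, hmu]; linear_combination 2 * hX
  have P1 : 0 < (j : ℝ) * α := mul_pos (by linarith) hα0
  have P2 : 0 ≤ (j : ℝ) * (1 - α) := mul_nonneg (by linarith) (by linarith)
  have P3 : 0 ≤ ((L : ℝ) - j - 1) * α := mul_nonneg (by linarith) hα0.le
  have P4 : 0 ≤ ((L : ℝ) - j - 1) * (1 - α) := mul_nonneg (by linarith) (by linarith)
  have hi1 : (1 : ℝ) ≤ i := by
    have : (0 : ℝ) < i := by linarith
    have : 0 < i := by exact_mod_cast this
    exact_mod_cast this
  have hi2 : (i : ℝ) ≤ j := by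
    have : (i : ℝ) < j + 1 := by linarith
    have : i < j + 1 := by exact_mod_cast this
    have : i ≤ j := by omega
    exact_mod_cast this
  have hi3 : (i : ℝ) ≤ 2 * c + d := by
    have : (i : ℝ) < 2 * c + d + 1 := by linarith
    have : i < 2 * c + d + 1 := by exact_mod_cast this
    have : i ≤ 2 * c + d := by omega
    exact_mod_cast this
  have hi4 : (2 * c + d : ℝ) - i ≤ L - j - 1 := by
    have : (2 * c + d : ℝ) - i < L - j := by linarith
    have : (2 * c + d) - i < L - j := by exact_mod_cast this
    have : (2 * c + d) - i ≤ L - j - 1 := by omega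
    exact_mod_cast this
  -- solving for the intercept
  obtain ⟨D, hD⟩ : ∃ D : ℚ, D = (1 - d) * (1 - a) - b * c := ⟨_, rfl⟩
  have hDr : (D : ℝ) = (1 - lam) * (1 - mu) := by
    rw [hD]; push_cast; rw [hlam, hmu]
    linear_combination b * hX
  have hD0 : (D : ℝ) ≠ 0 := by
    rw [hDr]; exact mul_ne_zero (by linarith) (by linarith)
  obtain ⟨p, hp⟩ : ∃ p : ℚ, p = ((1 - a) * (i - d - c) - c * (a + b - j)) / D := ⟨_, rfl⟩
  obtain ⟨q, hq⟩ : ∃ q : ℚ, q = ((1 - d) * (a + b - j) - b * (i - d - c)) / D := ⟨_, rfl⟩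
  have hpD : (p : ℝ) * D = (1 - a) * (i - d - c) - c * (a + b - j) := by
    rw [hp]; push_cast; field_simp
  have hqD : (q : ℝ) * D = (1 - d) * (a + b - j) - b * (i - d - c) := by
    rw [hq]; push_cast; field_simp
  have hDr2 : (D : ℝ) = (1 - d) * (1 - a) - b * c := by rw [hD]; push_cast; ring
  have sys1 : (1 - d) * (p : ℝ) + c * q = i - d - c := by
    apply mul_right_cancel₀ hD0
    linear_combination (1 - d : ℝ) * hpD + c * hqD - (i - d - c : ℝ) * hDr2
  have sys2 : (b : ℝ) * p + (1 - a) * q = a + b - j := by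
    apply mul_right_cancel₀ hD0
    linear_combination (b : ℝ) * hpD + (1 - a : ℝ) * hqD - (a + b - j : ℝ) * hDr2
  have hxpq : x = p + q * α := by
    have hne : (1 - mu) ≠ 0 := by linarith
    apply mul_right_cancel₀ hne
    have e1 : x * (1 - mu) = i - j * α - mu * (1 - α) := by
      rw [← hij]; simp only [hT]; ring
    rw [e1, hmu]
    linear_combination (-1 : ℝ) * sys1 - α * sys2 - (q + 1) * hX
  have hlamβ : lam = d - b * β := by rw [hbβ, hlam]; ring
  have hx' : (p + q * β) * (1 - lam) = i - j * β - lam * (1 - β) := by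
    rw [hlamβ]
    linear_combination sys1 + β * sys2 + (q + 1) * hXβ
  set x' := (p : ℝ) + q * β with hx'd
  have hLβ : lam * (1 - 2 * β) = 2 * c + d - L * β := by
    rw [hLr, hlamβ]; linear_combination (2 : ℝ) * hXβ
  have hl0 : 0 < lam - 1 := by linarith
  refine ⟨b, a - d, -c, p, q, hb0, ?_, ?_, hxpq, ?_, ?_⟩
  · push_cast; linear_combination hX
  · rw [← hβ]; exact hβ01
  · rw [← hβ]
    rcases hcase with h | h
    · rw [min_eq_left (by linarith)]
      have g1 : 0 ≤ ((L : ℝ) - j - 1) * (-β) := mul_nonneg (by linarith) (by linarith)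
      have : 0 ≤ (x' - β) * (lam - 1) := by linarith
      linarith [nonneg_of_mul_nonneg_left this hl0]
    · rw [min_eq_right (by linarith)]
      have g1 : 0 ≤ ((j : ℝ) - 1) * (β - 1) := mul_nonneg (by linarith) (by linarith)
      have : 0 ≤ (x' - (1 - β)) * (lam - 1) := by linarith
      linarith [nonneg_of_mul_nonneg_left this hl0]
  · rw [← hβ]
    rcases hcase with h | h
    · rw [max_eq_right (by linarith)]
      have g1 : 0 ≤ ((j : ℝ) - 1) * (-β) := mul_nonneg (by linarith) (by linarith)
      have : 0 ≤ ((1 - β) - x') * (lam - 1) := by linarith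
      linarith [nonneg_of_mul_nonneg_left this hl0]
    · rw [max_eq_left (by linarith)]
      have g1 : 0 ≤ ((L : ℝ) - j - 1) * (β - 1) := mul_nonneg (by linarith) (by linarith)
      have : 0 ≤ (β - x') * (lam - 1) := by linarith
      linarith [nonneg_of_mul_nonneg_left this hl0]

end SturmSub

theorem sturmian_substitution_invariance
    (α x₀ : ℝ) (hirr : Irrational α) (hα : α ∈ Set.Ioo (0 : ℝ) 1)
    (hx₀ : x₀ ∈ Set.Ico (0 : ℝ) 1) :
    (∃ φ : Fin 2 → List (Fin 2), (∀ a, φ a ≠ []) ∧ (φ 0 ≠ [0] ∨ φ 1 ≠ [1]) ∧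
        IsFixedPointSubst φ (sturmianWord α x₀)) ↔
    (∃ (A B C : ℤ) (p q : ℚ),
      A ≠ 0 ∧ (A : ℝ) * α ^ 2 + (B : ℝ) * α + (C : ℝ) = 0 ∧
      (-(B : ℝ) / (A : ℝ) - α) ∉ Set.Ioo (0 : ℝ) 1 ∧
      x₀ = (p : ℝ) + (q : ℝ) * α ∧
      min (-(B : ℝ) / (A : ℝ) - α) (1 - (-(B : ℝ) / (A : ℝ) - α))
        ≤ (p : ℝ) + (q : ℝ) * (-(B : ℝ) / (A : ℝ) - α) ∧
      (p : ℝ) + (q : ℝ) * (-(B : ℝ) / (A : ℝ) - α)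
        ≤ max (-(B : ℝ) / (A : ℝ) - α) (1 - (-(B : ℝ) / (A : ℝ) - α))) := by
  constructor
  · rintro ⟨φ, h1, h2, h3⟩
    exact SturmSub.nec hirr hα hx₀ φ h1 h2 h3
  · rintro ⟨A, B, C, p, q, hA, hq, hβ, hx, h1, h2⟩
    exact SturmSub.suff hirr hα hx₀ A B C p q hA hq _ rfl hβ hx h1 h2
end

section
/- Let ε, η be irrational reals with ε ≠ −η and let l > 0. Then there exist Δ₁, Δ₂ ∈ ℤ + ηℤ with Δ₁ > 0, Δ₂ > 0, Δ₁* > 0, Δ₂* < 0 and Δ₁* − Δ₂* ≥ l > max(Δ₁*, −Δ₂*), such that for every c ∈ ℝ and every x ∈ Σ := Σ_{ε,η}([c, c+l)): the set Σ ∩ (x, ∞) has a least element y, and y = x + Δ₁ if x* ∈ [c, c+l−Δ₁*), y = x + Δ₁ + Δ₂ if x* ∈ [c+l−Δ₁*, c−Δ₂*), and y = x + Δ₂ if x* ∈ [c−Δ₂*, c+l). In particular Δ₁ and Δ₂ depend only on ε, η and the length l, not on c. -/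
/-- The cut-and-project set `Σ_{ε,η}(Ω) = {a + bη : a, b ∈ ℤ, a − bε ∈ Ω}`. -/
def cutProject (ε η : ℝ) (Ω : Set ℝ) : Set ℝ :=
  {x | ∃ a b : ℤ, x = (a : ℝ) + (b : ℝ) * η ∧ (a : ℝ) - (b : ℝ) * ε ∈ Ω}

section Core

variable {G : Type*} [AddCommGroup G] (X S : G →+ ℝ)

theorem cp_far (hfin : ∀ M : ℝ, {g : G | |X g| ≤ M ∧ |S g| ≤ M}.Finite)
    (hd : ∀ t : ℝ, 0 < t → ∃ g, 0 < S g ∧ S g < t) (t M : ℝ) (ht : 0 < t) :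
    ∃ q, 0 < S q ∧ S q < t ∧ M < |X q| := by
  by_contra! hcon
  have hF : {g : G | 0 < S g ∧ S g < t}.Finite := by
    refine (hfin (max M t)).subset ?_
    rintro g ⟨h1, h2⟩
    refine ⟨(hcon g h1 h2).trans (le_max_left _ _), ?_⟩
    rw [abs_of_pos h1]
    exact h2.le.trans (le_max_right _ _)
  obtain ⟨m, ⟨hm1, hm2⟩, hm⟩ := Set.exists_min_image _ S hF (hd t ht)
  obtain ⟨g, h1, h2⟩ := hd (S m) hm1
  have := hm g ⟨h1, h2.trans hm2⟩
  linarith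

theorem cp_exists (hX : ∀ g, X g = 0 → g = 0)
    (hfin : ∀ M : ℝ, {g : G | |X g| ≤ M ∧ |S g| ≤ M}.Finite)
    (hd : ∀ t : ℝ, 0 < t → ∃ g, 0 < S g ∧ S g < t) (l : ℝ) (hl : 0 < l) :
    (∃ g, 0 < X g ∧ 0 < S g ∧ S g < l) ∧ (∃ g, 0 < X g ∧ -l < S g ∧ S g < 0) := by
  obtain ⟨p, hp0, hpl⟩ := hd l hl
  obtain ⟨q, hq0, hqp, hq⟩ := cp_far X S hfin hd (S p) |X p| hp0
  have hpX : X p ≠ 0 := by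
    intro h
    rw [hX p h, map_zero] at hp0
    exact lt_irrefl _ hp0
  have hnq : ∀ g, X (-g) = - X g ∧ S (-g) = - S g := fun g => ⟨map_neg _ _, map_neg _ _⟩
  have hsub : ∀ g h, X (g - h) = X g - X h ∧ S (g - h) = S g - S h :=
    fun g h => ⟨map_sub _ _ _, map_sub _ _ _⟩
  rcases lt_or_gt_of_ne hpX with h | h
  · rw [abs_of_neg h] at hq
    refine ⟨?_, -p, ?_⟩
    · rcases lt_abs.1 hq with h' | h'
      · exact ⟨q, by linarith, hq0, by linarith⟩
      · refine ⟨p - q, ?_⟩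
        rw [(hsub p q).1, (hsub p q).2]
        exact ⟨by linarith, by linarith, by linarith⟩
    · rw [(hnq p).1, (hnq p).2]
      exact ⟨by linarith, by linarith, by linarith⟩
  · rw [abs_of_pos h] at hq
    refine ⟨⟨p, h, hp0, hpl⟩, ?_⟩
    rcases lt_abs.1 hq with h' | h'
    · refine ⟨q - p, ?_⟩
      rw [(hsub q p).1, (hsub q p).2]
      exact ⟨by linarith, by linarith, by linarith⟩
    · refine ⟨-q, ?_⟩
      rw [(hnq q).1, (hnq q).2]
      exact ⟨by linarith, by linarith, by linarith⟩

theorem cp_min (hfin : ∀ M : ℝ, {g : G | |X g| ≤ M ∧ |S g| ≤ M}.Finite)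
    (P : ℝ → Prop) (l : ℝ) (hP : ∀ s, P s → |s| ≤ l) (hex : ∃ g, 0 < X g ∧ P (S g)) :
    ∃ m, 0 < X m ∧ P (S m) ∧ ∀ g, 0 < X g → P (S g) → X m ≤ X g := by
  obtain ⟨g₀, h0, h1⟩ := hex
  have hF : {g : G | 0 < X g ∧ X g ≤ X g₀ ∧ P (S g)}.Finite := by
    refine (hfin (max (X g₀) l)).subset ?_
    rintro g ⟨h1, h2, h3⟩
    refine ⟨?_, (hP _ h3).trans (le_max_right _ _)⟩
    rw [abs_of_pos h1]
    exact h2.trans (le_max_left _ _)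
  obtain ⟨m, ⟨hm1, hm2, hm3⟩, hm⟩ := Set.exists_min_image _ X hF ⟨g₀, h0, le_rfl, h1⟩
  refine ⟨m, hm1, hm3, fun g hg hg' => ?_⟩
  rcases le_total (X g) (X g₀) with h | h
  · exact hm g ⟨hg, h, hg'⟩
  · exact hm2.trans h

theorem cp_core (hX : ∀ g, X g = 0 → g = 0) (hS : ∀ g, S g = 0 → g = 0)
    (hfin : ∀ M : ℝ, {g : G | |X g| ≤ M ∧ |S g| ≤ M}.Finite)
    (hd : ∀ t : ℝ, 0 < t → ∃ g, 0 < S g ∧ S g < t) (l : ℝ) (hl : 0 < l) :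
    ∃ u v : G, 0 < X u ∧ 0 < X v ∧ 0 < S u ∧ S v < 0 ∧ l ≤ S u - S v ∧ S u < l ∧ -S v < l ∧
      ∀ c : ℝ, ∀ p : G, c ≤ S p → S p < c + l →
        (S p < c + l - S u → ∀ z, c ≤ S z → S z < c + l → X p < X z → X p + X u ≤ X z) ∧
        (c + l - S u ≤ S p → S p < c - S v → ∀ z, c ≤ S z → S z < c + l → X p < X z →
          X p + X u + X v ≤ X z) ∧
        (c - S v ≤ S p → ∀ z, c ≤ S z → S z < c + l → X p < X z → X p + X v ≤ X z) := by
  obtain ⟨hu, hv⟩ := cp_exists X S hX hfin hd l hl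
  obtain ⟨u, hu1, ⟨hu2, hu3⟩, hum⟩ := cp_min X S hfin (fun s => 0 < s ∧ s < l) l
    (fun s h => abs_le.2 ⟨by linarith [h.1], h.2.le⟩) hu
  obtain ⟨v, hv1, ⟨hv2, hv3⟩, hvm⟩ := cp_min X S hfin (fun s => -l < s ∧ s < 0) l
    (fun s h => abs_le.2 ⟨h.1.le, by linarith [h.2]⟩) hv
  have hsX : ∀ g h, X (g - h) = X g - X h := map_sub X
  have hsS : ∀ g h, S (g - h) = S g - S h := map_sub S
  have hinj : ∀ g h, X g = X h → S g = S h := by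
    intro g h e
    have := hX (g - h) (by rw [hsX]; linarith)
    rw [sub_eq_zero.1 this]
  have A : ∀ g, 0 < X g → 0 < S g → S g < l → X u ≤ X g := fun g h1 h2 h3 => hum g h1 ⟨h2, h3⟩
  have B : ∀ g, 0 < X g → -l < S g → S g < 0 → X v ≤ X g := fun g h1 h2 h3 => hvm g h1 ⟨h2, h3⟩
  have hsign : ∀ g, 0 < X g → S g < 0 ∨ 0 < S g := by
    intro g hg
    refine lt_or_gt_of_ne fun h => ?_
    rw [hS g h, map_zero] at hg
    exact lt_irrefl _ hg
  refine ⟨u, v, hu1, hv1, hu2, hv3, ?_, hu3, by linarith, ?_⟩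
  · by_contra! hlt
    rcases lt_trichotomy (X u) (X v) with h | h | h
    · have := B (v - u) (by rw [hsX]; linarith) (by rw [hsS]; linarith) (by rw [hsS]; linarith)
      rw [hsX] at this
      linarith
    · have := hinj u v h
      linarith
    · have := A (u - v) (by rw [hsX]; linarith) (by rw [hsS]; linarith) (by rw [hsS]; linarith)
      rw [hsX] at this
      linarith
  · intro c p hp1 hp2
    refine ⟨fun h z hz1 hz2 hz => ?_, fun h h' z hz1 hz2 hz => ?_, fun h z hz1 hz2 hz => ?_⟩
    all_goals
      obtain ⟨d, rfl⟩ : ∃ d, z = p + d := ⟨z - p, by abel⟩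
      rw [map_add] at hz1 hz2 hz ⊢
      have hd0 : 0 < X d := by linarith
    · by_contra! hlt
      rcases hsign d hd0 with hs | hs
      · have := A (u - d) (by rw [hsX]; linarith) (by rw [hsS]; linarith) (by rw [hsS]; linarith)
        rw [hsX] at this
        have := B d hd0 (by linarith) hs
        linarith
      · have := A d hd0 hs (by linarith)
        linarith
    · rcases hsign d hd0 with hs | hs
      · have h1 := B d hd0 (by linarith) hs
        have h2 : X v ≠ X d := fun e => by have := hinj _ _ e; linarith
        have h3 := lt_of_le_of_ne h1 h2
        have := A (d - v) (by rw [hsX]; linarith) (by rw [hsS]; linarith) (by rw [hsS]; linarith)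
        rw [hsX] at this
        linarith
      · have h1 := A d hd0 hs (by linarith)
        have h2 : X u ≠ X d := fun e => by have := hinj _ _ e; linarith
        have h3 := lt_of_le_of_ne h1 h2
        have := B (d - u) (by rw [hsX]; linarith) (by rw [hsS]; linarith) (by rw [hsS]; linarith)
        rw [hsX] at this
        linarith
    · by_contra! hlt
      rcases hsign d hd0 with hs | hs
      · have := B d hd0 (by linarith) hs
        linarith
      · have := B (v - d) (by rw [hsX]; linarith) (by rw [hsS]; linarith) (by rw [hsS]; linarith)
        rw [hsX] at this
        have := A d hd0 hs (by linarith)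
        linarith

end Core

/-- The homomorphism `(a, b) ↦ a + bθ`. -/
noncomputable def cpHom (θ : ℝ) : ℤ × ℤ →+ ℝ where
  toFun p := (p.1 : ℝ) + (p.2 : ℝ) * θ
  map_zero' := by simp
  map_add' p q := by
    simp only [Prod.fst_add, Prod.snd_add, Int.cast_add]
    ring

theorem cpHom_apply (θ : ℝ) (p : ℤ × ℤ) : cpHom θ p = (p.1 : ℝ) + (p.2 : ℝ) * θ := rfl

theorem cpHom_inj (θ : ℝ) (h : Irrational θ) (p : ℤ × ℤ) (hp : cpHom θ p = 0) : p = 0 := by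
  rw [cpHom_apply] at hp
  have h2 : p.2 = 0 := by
    by_contra hne
    have := (h.intCast_mul hne).intCast_add p.1
    rw [hp] at this
    exact this ⟨0, by simp⟩
  have h1 : p.1 = 0 := by
    rw [h2] at hp
    simpa using hp
  exact Prod.ext h1 h2

theorem cpHom_dense (θ : ℝ) (h : Irrational θ) (t : ℝ) (ht : 0 < t) :
    ∃ p, 0 < cpHom θ p ∧ cpHom θ p < t := by
  have hD : Dense (AddSubgroup.closure {θ, 1} : Set ℝ) := by
    rw [dense_addSubgroupClosure_pair_iff]
    simpa using h
  obtain ⟨s, hs, hs1, hs2⟩ := hD.exists_between ht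
  rw [SetLike.mem_coe, AddSubgroup.mem_closure_pair] at hs
  obtain ⟨m, n, rfl⟩ := hs
  refine ⟨(n, m), ?_⟩
  have : cpHom θ (n, m) = m • θ + n • (1 : ℝ) := by
    rw [cpHom_apply]
    simp
    ring
  rw [this]
  exact ⟨hs1, hs2⟩

theorem cpHom_finite (θ φ : ℝ) (h : θ ≠ φ) (M : ℝ) :
    {p : ℤ × ℤ | |cpHom θ p| ≤ M ∧ |cpHom φ p| ≤ M}.Finite := by
  have hpos : 0 < |θ - φ| := abs_pos.2 (sub_ne_zero.2 h)
  obtain ⟨K, hK⟩ := exists_nat_ge (2 * M / |θ - φ|)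
  obtain ⟨N, hN⟩ := exists_nat_ge (M + K * |θ|)
  refine ((Set.finite_Icc (-(N : ℤ)) N).prod (Set.finite_Icc (-(K : ℤ)) K)).subset ?_
  rintro ⟨a, b⟩ ⟨h1, h2⟩
  rw [cpHom_apply] at h1 h2
  dsimp only at h1 h2
  have hb : |(b : ℝ)| ≤ K := by
    refine le_trans ?_ hK
    rw [le_div_iff₀ hpos, ← abs_mul]
    have e : (b : ℝ) * (θ - φ) = (a + b * θ) - (a + b * φ) := by ring
    rw [e]
    exact (abs_sub _ _).trans (by linarith)
  have ha : |(a : ℝ)| ≤ N := by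
    refine le_trans ?_ hN
    have e : (a : ℝ) = (a + b * θ) - b * θ := by ring
    rw [e]
    refine (abs_sub _ _).trans ?_
    rw [abs_mul]
    have := mul_le_mul_of_nonneg_right hb (abs_nonneg θ)
    linarith
  rw [abs_le] at ha hb
  refine ⟨⟨?_, ?_⟩, ?_, ?_⟩
  · exact_mod_cast ha.1
  · exact_mod_cast ha.2
  · exact_mod_cast hb.1
  · exact_mod_cast hb.2

theorem cutProject_gaps (ε η l : ℝ) (hε : Irrational ε) (hη : Irrational η)
    (hne : ε ≠ -η) (hl : 0 < l) :
    ∃ a₁ b₁ a₂ b₂ : ℤ,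
      -- Δ₁ = a₁ + b₁η ∈ ℤ + ηℤ,  Δ₂ = a₂ + b₂η ∈ ℤ + ηℤ, both positive
      (0 : ℝ) < (a₁ : ℝ) + (b₁ : ℝ) * η ∧ (0 : ℝ) < (a₂ : ℝ) + (b₂ : ℝ) * η ∧
      -- Δ₁* > 0, Δ₂* < 0
      (0 : ℝ) < (a₁ : ℝ) - (b₁ : ℝ) * ε ∧ (a₂ : ℝ) - (b₂ : ℝ) * ε < 0 ∧
      -- Δ₁* − Δ₂* ≥ l > max(Δ₁*, −Δ₂*)
      l ≤ ((a₁ : ℝ) - (b₁ : ℝ) * ε) - ((a₂ : ℝ) - (b₂ : ℝ) * ε) ∧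
      max ((a₁ : ℝ) - (b₁ : ℝ) * ε) (-((a₂ : ℝ) - (b₂ : ℝ) * ε)) < l ∧
      -- for every position c of the window and every point x = a + bη of Σ
      ∀ c : ℝ, ∀ a b : ℤ, (a : ℝ) - (b : ℝ) * ε ∈ Set.Ico c (c + l) →
        ∃ y : ℝ,
          IsLeast {z ∈ cutProject ε η (Set.Ico c (c + l)) | (a : ℝ) + (b : ℝ) * η < z} y ∧
          ((a : ℝ) - (b : ℝ) * ε ∈ Set.Ico c (c + l - ((a₁ : ℝ) - (b₁ : ℝ) * ε)) →
            y = (a : ℝ) + (b : ℝ) * η + ((a₁ : ℝ) + (b₁ : ℝ) * η)) ∧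
          ((a : ℝ) - (b : ℝ) * ε ∈
              Set.Ico (c + l - ((a₁ : ℝ) - (b₁ : ℝ) * ε)) (c - ((a₂ : ℝ) - (b₂ : ℝ) * ε)) →
            y = (a : ℝ) + (b : ℝ) * η + ((a₁ : ℝ) + (b₁ : ℝ) * η) + ((a₂ : ℝ) + (b₂ : ℝ) * η)) ∧
          ((a : ℝ) - (b : ℝ) * ε ∈ Set.Ico (c - ((a₂ : ℝ) - (b₂ : ℝ) * ε)) (c + l) →
            y = (a : ℝ) + (b : ℝ) * η + ((a₂ : ℝ) + (b₂ : ℝ) * η)) := by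
  obtain ⟨⟨a₁, b₁⟩, ⟨a₂, b₂⟩, h1, h2, h3, h4, h5, h6, h7, h8⟩ :=
    cp_core (cpHom η) (cpHom (-ε)) (cpHom_inj η hη) (cpHom_inj (-ε) hε.neg)
      (cpHom_finite η (-ε) (fun h => hne (by rw [h, neg_neg]))) (cpHom_dense (-ε) hε.neg) l hl
  simp only [cpHom_apply, mul_neg, ← sub_eq_add_neg] at h1 h2 h3 h4 h5 h6 h7 h8
  refine ⟨a₁, b₁, a₂, b₂, h1, h2, h3, h4, h5, max_lt h6 h7, ?_⟩
  rintro c a b ⟨hc1, hc2⟩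
  obtain ⟨hA, hB, hC⟩ := h8 c (a, b) hc1 hc2
  dsimp only at hA hB hC
  rcases lt_or_ge ((a : ℝ) - b * ε) (c + l - (a₁ - b₁ * ε)) with hlt | hge
  · refine ⟨_, ⟨⟨⟨a + a₁, b + b₁, ?_, ?_, ?_⟩, ?_⟩, ?_⟩, fun _ => rfl, fun h => ?_, fun h => ?_⟩
    · push_cast
      ring
    · push_cast
      linarith
    · push_cast
      linarith
    · linarith
    · rintro z ⟨⟨a', b', rfl, hz1, hz2⟩, hz⟩
      exact hA hlt (a', b') hz1 hz2 hz
    · linarith [h.1]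
    · linarith [h.1]
  · rcases lt_or_ge ((a : ℝ) - b * ε) (c - (a₂ - b₂ * ε)) with hlt' | hge'
    · refine ⟨_, ⟨⟨⟨a + a₁ + a₂, b + b₁ + b₂, ?_, ?_, ?_⟩, ?_⟩, ?_⟩, fun h => ?_, fun _ => rfl,
        fun h => ?_⟩
      · push_cast
        ring
      · push_cast
        linarith
      · push_cast
        linarith
      · linarith
      · rintro z ⟨⟨a', b', rfl, hz1, hz2⟩, hz⟩
        exact hB hge hlt' (a', b') hz1 hz2 hz
      · linarith [h.2]
      · linarith [h.1]
    · refine ⟨_, ⟨⟨⟨a + a₂, b + b₂, ?_, ?_, ?_⟩, ?_⟩, ?_⟩, fun h => ?_, fun h => ?_, fun _ => rfl⟩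
      · push_cast
        ring
      · push_cast
        linarith
      · push_cast
        linarith
      · linarith
      · rintro z ⟨⟨a', b', rfl, hz1, hz2⟩, hz⟩
        exact hC hge' (a', b') hz1 hz2 hz
      · linarith [h.2]
      · linarith [h.2]
end

section
/- Let ε ∈ (0,1) and η > 0 be irrational, let l satisfy max(1−ε, ε) < l ≤ 1, and let Ω = [c, c+l). Then for every x ∈ Σ := Σ_{ε,η}(Ω), the set Σ ∩ (x, ∞) has a least element y, and: y = x + 1 + η if x* ∈ [c, c+l−1+ε); y = x + 1 + 2η if x* ∈ [c+l−1+ε, c+ε); and y = x + η if x* ∈ [c+ε, c+l). (That is, for parameters satisfying these conditions one has Δ₁ = 1 + η and Δ₂ = η.) -/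
theorem cutProject_gaps_special (ε η l c : ℝ) (hε : Irrational ε)
    (hεm : ε ∈ Set.Ioo (0 : ℝ) 1) (hη : Irrational η) (hηpos : 0 < η)
    (hl₁ : max (1 - ε) ε < l) (hl₂ : l ≤ 1) :
    -- for every point x = a + bη of Σ = Σ_{ε,η}([c, c+l)) :
    ∀ a b : ℤ, (a : ℝ) - (b : ℝ) * ε ∈ Set.Ico c (c + l) →
      ∃ y : ℝ,
        IsLeast {z ∈ cutProject ε η (Set.Ico c (c + l)) | (a : ℝ) + (b : ℝ) * η < z} y ∧
        -- Δ₁ = 1 + η :  y = x + 1 + η  if  x* ∈ [c, c+l−1+ε)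
        ((a : ℝ) - (b : ℝ) * ε ∈ Set.Ico c (c + l - 1 + ε) →
          y = (a : ℝ) + (b : ℝ) * η + (1 + η)) ∧
        -- y = x + 1 + 2η  if  x* ∈ [c+l−1+ε, c+ε)
        ((a : ℝ) - (b : ℝ) * ε ∈ Set.Ico (c + l - 1 + ε) (c + ε) →
          y = (a : ℝ) + (b : ℝ) * η + (1 + 2 * η)) ∧
        -- Δ₂ = η :  y = x + η  if  x* ∈ [c+ε, c+l)
        ((a : ℝ) - (b : ℝ) * ε ∈ Set.Ico (c + ε) (c + l) →
          y = (a : ℝ) + (b : ℝ) * η + η) := by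
  obtain ⟨hε0, hε1⟩ := hεm
  have hlε : ε < l := lt_of_le_of_lt (le_max_right _ _) hl₁
  have hlε' : 1 - ε < l := lt_of_le_of_lt (le_max_left _ _) hl₁
  intro a b hab
  obtain ⟨h1, h2⟩ := hab
  -- the coordinates of a larger point satisfy `b + 1 ≤ b'` and `a ≤ a'`
  have key : ∀ a' b' : ℤ, (a' : ℝ) - (b' : ℝ) * ε ∈ Set.Ico c (c + l) →
      (a : ℝ) + (b : ℝ) * η < (a' : ℝ) + (b' : ℝ) * η → b + 1 ≤ b' ∧ a ≤ a' := by
    intro a' b' h hlt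
    obtain ⟨h3, h4⟩ := h
    have hb : b + 1 ≤ b' := by
      by_contra hcon
      have hb' : b' ≤ b := by omega
      have hbR : (b' : ℝ) ≤ b := by exact_mod_cast hb'
      have ha : (a' : ℝ) < a + 1 := by nlinarith
      have ha' : a' < a + 1 := by exact_mod_cast ha
      have ha'' : a' ≤ a := by omega
      have haR : (a' : ℝ) ≤ a := by exact_mod_cast ha''
      nlinarith
    refine ⟨hb, ?_⟩
    have hbR : (b : ℝ) + 1 ≤ b' := by exact_mod_cast hb
    have ha : (a : ℝ) < a' + 1 := by nlinarith
    have ha' : a < a' + 1 := by exact_mod_cast ha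
    omega
  have keyR : ∀ a' b' : ℤ, (a' : ℝ) - (b' : ℝ) * ε ∈ Set.Ico c (c + l) →
      (a : ℝ) + (b : ℝ) * η < (a' : ℝ) + (b' : ℝ) * η →
      (a : ℝ) - (b : ℝ) * ε < c + ε → b + 1 ≤ b' ∧ a + 1 ≤ a' := by
    intro a' b' h hlt hc
    obtain ⟨hb, ha⟩ := key a' b' h hlt
    refine ⟨hb, ?_⟩
    by_contra hcon
    have hae : a' = a := by omega
    subst hae
    have hbR : (b : ℝ) + 1 ≤ b' := by exact_mod_cast hb
    have := h.1
    nlinarith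
  by_cases hA : (a : ℝ) - (b : ℝ) * ε < c + l - 1 + ε
  · refine ⟨(a : ℝ) + (b : ℝ) * η + (1 + η), ⟨⟨⟨a + 1, b + 1, ?_, ?_, ?_⟩, ?_⟩, ?_⟩,
      fun _ => rfl, fun h => ?_, fun h => ?_⟩
    · push_cast; ring
    · push_cast; linarith
    · push_cast; linarith
    · linarith
    · rintro z ⟨⟨a', b', rfl, h⟩, hlt⟩
      obtain ⟨hb, ha⟩ := keyR a' b' h hlt (by linarith)
      have hbR : (b : ℝ) + 1 ≤ b' := by exact_mod_cast hb
      have haR : (a : ℝ) + 1 ≤ a' := by exact_mod_cast ha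
      nlinarith
    · linarith [h.1]
    · linarith [h.1]
  by_cases hB : (a : ℝ) - (b : ℝ) * ε < c + ε
  · refine ⟨(a : ℝ) + (b : ℝ) * η + (1 + 2 * η), ⟨⟨⟨a + 1, b + 2, ?_, ?_, ?_⟩, ?_⟩, ?_⟩,
      fun h => absurd h.2 hA, fun _ => rfl, fun h => ?_⟩
    · push_cast; ring
    · push_cast; linarith
    · push_cast; linarith
    · linarith
    · rintro z ⟨⟨a', b', rfl, h⟩, hlt⟩
      obtain ⟨hb, ha⟩ := keyR a' b' h hlt hB
      have haR : (a : ℝ) + 1 ≤ a' := by exact_mod_cast ha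
      have hb2 : b + 2 ≤ b' := by
        by_contra hcon
        have hbe : b' = b + 1 := by omega
        subst hbe
        have h4 := h.2
        push_cast at h4
        linarith
      have hbR : (b : ℝ) + 2 ≤ b' := by exact_mod_cast hb2
      nlinarith
    · linarith [h.1]
  · refine ⟨(a : ℝ) + (b : ℝ) * η + η, ⟨⟨⟨a, b + 1, ?_, ?_, ?_⟩, ?_⟩, ?_⟩,
      fun h => absurd h.2 hA, fun h => absurd h.2 hB, fun _ => rfl⟩
    · push_cast; ring
    · push_cast; linarith
    · push_cast; linarith
    · linarith
    · rintro z ⟨⟨a', b', rfl, h⟩, hlt⟩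
      obtain ⟨hb, ha⟩ := key a' b' h hlt
      have hbR : (b : ℝ) + 1 ≤ b' := by exact_mod_cast hb
      have haR : (a : ℝ) ≤ a' := by exact_mod_cast ha
      nlinarith
end

section
/- Let ε ∈ (0,1) be irrational, max(ε, 1−ε) < l < 1 and c ≤ 0 < c + l, and let T be the associated exchange of three intervals on [c, c+l). Let x₀ ∈ [c, c+l). Then there exists a two-sided trajectory t : ℤ → [c, c+l) with t(0) = x₀ and t(n+1) = T(t(n)) for all n ∈ ℤ, and for any such trajectory, {t(n) : n ∈ ℤ} = (x₀ + ℤ[ε]) ∩ [c, c+l). -/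
/-- The set `ℤ[ε] = {a + bε : a, b ∈ ℤ}`. -/
def Zbr (ε : ℝ) : Set ℝ := {x | ∃ a b : ℤ, x = (a : ℝ) + (b : ℝ) * ε}

/-- The exchange of three intervals on `[c, c+l)` with parameters `ε, l, c`
(̃permutation (321)): `T(x) = x+1−ε` on `[c, c+l−1+ε)`, `T(x) = x+1−2ε` on
`[c+l−1+ε, c+ε)`, and `T(x) = x−ε` on `[c+ε, c+l)`. -/
noncomputable def T3 (ε l c : ℝ) (x : ℝ) : ℝ :=
  if x < c + l - 1 + ε then x + 1 - ε
  else if x < c + ε then x + 1 - 2 * ε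
  else x - ε

/-- Explicit inverse of the exchange. -/
noncomputable def T3inv (ε l c : ℝ) (y : ℝ) : ℝ :=
  if y < c + l - ε then y + ε
  else if y < c + 1 - ε then y - 1 + 2 * ε
  else y - 1 + ε

theorem T3_cases (ε l c x : ℝ) (hx : x ∈ Set.Ico c (c + l)) :
    (∃ a : ℤ, T3 ε l c x = x + a - ε) ∨
    (∃ a : ℤ, T3 ε l c x = x + a - 2 * ε ∧ c + l ≤ x + 1 - ε ∧ x + 1 - ε < c + 1) := by
  unfold T3
  split_ifs with h1 h2
  · exact Or.inl ⟨1, by push_cast; ring⟩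
  · exact Or.inr ⟨1, by push_cast; ring, by linarith, by linarith⟩
  · exact Or.inl ⟨0, by push_cast; ring⟩

/-- Two points of an interval shorter than one that differ by an integer agree. -/
theorem eq_of_int_diff {c l x y : ℝ} (hl : l < 1) (hx : x ∈ Set.Ico c (c + l))
    (hy : y ∈ Set.Ico c (c + l)) (a : ℤ) (h : y = x + a) : y = x := by
  obtain ⟨hx1, hx2⟩ := hx
  obtain ⟨hy1, hy2⟩ := hy
  have h1 : (a : ℝ) < 1 := by linarith
  have h2 : (-1 : ℝ) < a := by linarith
  have h1' : a < 1 := by exact_mod_cast h1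
  have h2' : -1 < a := by exact_mod_cast h2
  have : a = 0 := by omega
  subst this
  simpa using h

theorem no_middle {ε c l x y : ℝ} (hl : l < 1)
    (hy : y ∈ Set.Ico c (c + l)) (a : ℤ) (h : y = x + a - ε)
    (h1 : c + l ≤ x + 1 - ε) (h2 : x + 1 - ε < c + 1) : False := by
  obtain ⟨hy1, hy2⟩ := hy
  have h3 : (a : ℝ) < 1 := by linarith
  have h4 : (0 : ℝ) < a := by linarith
  have h3' : a < 1 := by exact_mod_cast h3
  have h4' : 0 < a := by exact_mod_cast h4
  omega

theorem forward_mem {ε l c : ℝ} (hl : l < 1) (t : ℤ → ℝ)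
    (ht : ∀ n, t n ∈ Set.Ico c (c + l)) (hT : ∀ n, t (n + 1) = T3 ε l c (t n))
    {y : ℝ} (hy : y ∈ Set.Ico c (c + l)) (b : ℕ) :
    ∀ (n a : ℤ), y = t n + a - b * ε → y ∈ Set.range t := by
  induction b using Nat.strong_induction_on with
  | _ b ih =>
    intro n a h
    rcases b with _ | b
    · exact ⟨n, (eq_of_int_diff hl (ht n) hy a (by simpa using h)).symm⟩
    rcases T3_cases ε l c (t n) (ht n) with ⟨a', h'⟩ | ⟨a', h', h1, h2⟩
    · refine ih b (by omega) (n + 1) (a - a') ?_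
      rw [hT, h', h]; push_cast; ring
    rcases b with _ | b
    · exact (no_middle hl hy a (by rw [h]; push_cast; ring) h1 h2).elim
    · refine ih b (by omega) (n + 1) (a - a') ?_
      rw [hT, h', h]; push_cast; ring

theorem backward_mem {ε l c : ℝ} (hl : l < 1) (t : ℤ → ℝ)
    (ht : ∀ n, t n ∈ Set.Ico c (c + l)) (hT : ∀ n, t (n + 1) = T3 ε l c (t n))
    {y : ℝ} (hy : y ∈ Set.Ico c (c + l)) (b : ℕ) :
    ∀ (n a : ℤ), y = t n + a + b * ε → y ∈ Set.range t := by
  induction b using Nat.strong_induction_on with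
  | _ b ih =>
    intro n a h
    rcases b with _ | b
    · exact ⟨n, (eq_of_int_diff hl (ht n) hy a (by simpa using h)).symm⟩
    have hn := hT (n - 1)
    rw [sub_add_cancel] at hn
    rcases T3_cases ε l c (t (n - 1)) (ht (n - 1)) with ⟨a', h'⟩ | ⟨a', h', h1, h2⟩
    · refine ih b (by omega) (n - 1) (a + a') ?_
      rw [h, hn, h']; push_cast; ring
    rcases b with _ | b
    · exact (no_middle hl hy (a + a') (by rw [h, hn, h']; push_cast; ring) h1 h2).elim
    · refine ih b (by omega) (n - 1) (a + a') ?_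
      rw [h, hn, h']; push_cast; ring

theorem orbit_coset {ε l c : ℝ} (t : ℤ → ℝ)
    (ht : ∀ n, t n ∈ Set.Ico c (c + l)) (hT : ∀ n, t (n + 1) = T3 ε l c (t n)) (n : ℤ) :
    ∃ a b : ℤ, t n = t 0 + (a + b * ε) := by
  induction n using Int.induction_on with
  | zero => exact ⟨0, 0, by simp⟩
  | succ n ih =>
    obtain ⟨a, b, h⟩ := ih
    rcases T3_cases ε l c (t n) (ht n) with ⟨a', h'⟩ | ⟨a', h', -⟩
    · exact ⟨a + a', b - 1, by rw [hT, h', h]; push_cast; ring⟩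
    · exact ⟨a + a', b - 2, by rw [hT, h', h]; push_cast; ring⟩
  | pred n ih =>
    obtain ⟨a, b, h⟩ := ih
    have hn := hT (-(n : ℤ) - 1)
    rw [sub_add_cancel] at hn
    rcases T3_cases ε l c (t (-(n : ℤ) - 1)) (ht _) with ⟨a', h'⟩ | ⟨a', h', -⟩
    · exact ⟨a - a', b + 1, by push_cast; linarith⟩
    · exact ⟨a - a', b + 2, by push_cast; linarith⟩

theorem threeIet_orbit (ε l c x₀ : ℝ) (hε : Irrational ε) (hεm : ε ∈ Set.Ioo (0 : ℝ) 1)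
    (hl₁ : max ε (1 - ε) < l) (hl₂ : l < 1) (hc₁ : c ≤ 0) (hc₂ : 0 < c + l)
    (hx₀ : x₀ ∈ Set.Ico c (c + l)) :
    (∃ t : ℤ → ℝ, t 0 = x₀ ∧ (∀ n, t n ∈ Set.Ico c (c + l)) ∧
      (∀ n, t (n + 1) = T3 ε l c (t n))) ∧
    ∀ t : ℤ → ℝ, t 0 = x₀ → (∀ n, t n ∈ Set.Ico c (c + l)) →
      (∀ n, t (n + 1) = T3 ε l c (t n)) →
      Set.range t = {y | ∃ z ∈ Zbr ε, y = x₀ + z} ∩ Set.Ico c (c + l) := by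
  obtain ⟨hε0, hε1⟩ := hεm
  obtain ⟨hl3, hl4⟩ := max_lt_iff.mp hl₁
  refine ⟨?_, ?_⟩
  · let e : Equiv.Perm (Set.Ico c (c + l)) :=
      { toFun := fun x => ⟨T3 ε l c x, by
          obtain ⟨x, hx1, hx2⟩ := x
          unfold T3
          dsimp only
          split_ifs <;> constructor <;> linarith⟩
        invFun := fun x => ⟨T3inv ε l c x, by
          obtain ⟨x, hx1, hx2⟩ := x
          unfold T3inv
          dsimp only
          split_ifs <;> constructor <;> linarith⟩
        left_inv := by
          rintro ⟨x, hx1, hx2⟩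
          apply Subtype.ext
          simp only [T3, T3inv]
          split_ifs <;> linarith
        right_inv := by
          rintro ⟨x, hx1, hx2⟩
          apply Subtype.ext
          simp only [T3, T3inv]
          split_ifs <;> linarith }
    refine ⟨fun n => ((e ^ n) ⟨x₀, hx₀⟩ : Set.Ico c (c + l)), by simp,
      fun n => Subtype.coe_prop _, fun n => ?_⟩
    have h : (e ^ (n + 1)) ⟨x₀, hx₀⟩ = e ((e ^ n) ⟨x₀, hx₀⟩) := by
      rw [add_comm n 1, zpow_one_add, Equiv.Perm.mul_apply]
    exact congrArg Subtype.val h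
  · intro t h0 ht hT
    ext y
    constructor
    · rintro ⟨n, rfl⟩
      obtain ⟨a, b, h⟩ := orbit_coset t ht hT n
      exact ⟨⟨_, ⟨a, b, rfl⟩, by rw [h, h0]⟩, ht n⟩
    · rintro ⟨⟨z, ⟨a, b, rfl⟩, h⟩, hy⟩
      rcases Int.eq_nat_or_neg b with ⟨k, rfl | rfl⟩
      · exact backward_mem hl₂ t ht hT hy k 0 a (by rw [h, h0]; push_cast; ring)
      · exact forward_mem hl₂ t ht hT hy k 0 a (by rw [h, h0]; push_cast; ring)
end

section
/- Let α₁, α₂, α₃ > 0 be such that α₁+α₂ and α₂+α₃ are linearly independent over ℚ, and let T̃ be the exchange of three intervals on I = [0, α₁+α₂+α₃) with permutation (321): T̃(x) = x + α₂ + α₃ for x ∈ [0, α₁), T̃(x) = x − α₁ + α₃ for x ∈ [α₁, α₁+α₂), T̃(x) = x − α₁ − α₂ for x ∈ [α₁+α₂, α₁+α₂+α₃). Let J = [ĉ, ĉ+l̂) ⊆ I with l̂ > 0. Then: (a) for every x ∈ J there exists n ≥ 1 with T̃ⁿ(x) ∈ J; and (b) denoting by r(x) the least such n and T_J(x) :=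 T̃^{r(x)}(x), there exist points β₁, β₂ with ĉ ≤ β₁ ≤ β₂ ≤ ĉ+l̂ such that, setting λ₁ = β₁ − ĉ, λ₂ = β₂ − β₁, λ₃ = ĉ + l̂ − β₂, one has T_J(x) = x + λ₂ + λ₃ for all x ∈ [ĉ, β₁), T_J(x) = x + λ₃ − λ₁ for all x ∈ [β₁, β₂), and T_J(x) = x − λ₁ − λ₂ for all x ∈ [β₂, ĉ+l̂). (Thus the first return map T_J is an exchange of three intervals with permutation (321), degenerating to an exchange of two intervals with permutation (21) when some λᵢ = 0.) -/
/-- The exchange of three intervals on `[0, α₁+α₂+α₃)` with permutation (321)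
and interval lengths `α₁, α₂, α₃`. -/
noncomputable def Tiet (α₁ α₂ α₃ : ℝ) (x : ℝ) : ℝ :=
  if x < α₁ then x + α₂ + α₃
  else if x < α₁ + α₂ then x - α₁ + α₃
  else x - α₁ - α₂

/-- `t` is a displacement of the `n`-th power of the rotation by `b` on the circle of length `L`. -/
def Disp (b L : ℝ) (n : ℤ) (t : ℝ) : Prop := ∃ j : ℤ, t = n * b + j * L

theorem Disp.add {b L : ℝ} {m n : ℤ} {s t : ℝ} (h : Disp b L m s) (h' : Disp b L n t) :
    Disp b L (m + n) (s + t) := by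
  obtain ⟨i, hi⟩ := h
  obtain ⟨j, hj⟩ := h'
  refine ⟨i + j, ?_⟩
  push_cast
  rw [hi, hj]; ring

theorem Disp.sub {b L : ℝ} {m n : ℤ} {s t : ℝ} (h : Disp b L m s) (h' : Disp b L n t) :
    Disp b L (m - n) (s - t) := by
  obtain ⟨i, hi⟩ := h
  obtain ⟨j, hj⟩ := h'
  refine ⟨i - j, ?_⟩
  push_cast
  rw [hi, hj]; ring

theorem Disp.uniq {b L : ℝ} {n : ℤ} {s t : ℝ} (h : Disp b L n s) (h' : Disp b L n t)
    (h1 : s - t < L) (h2 : t - s < L) : s = t := by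
  obtain ⟨i, hi⟩ := h
  obtain ⟨j, hj⟩ := h'
  have hL : 0 < L := by linarith
  have e : s - t = ((i - j : ℤ) : ℝ) * L := by push_cast; rw [hi, hj]; ring
  have u1 : ((i - j : ℤ) : ℝ) < 1 := by
    by_contra hh
    push Not at hh
    nlinarith
  have u2 : (-1 : ℝ) < ((i - j : ℤ) : ℝ) := by
    by_contra hh
    push Not at hh
    nlinarith
  have u1' : (i - j : ℤ) < 1 := by exact_mod_cast u1
  have u2' : (-1 : ℤ) < (i - j : ℤ) := by exact_mod_cast u2
  have : (i - j : ℤ) = 0 := by omega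
  rw [this] at e
  simp at e
  linarith

/-- Existence of small displacements of both signs. -/
theorem exists_disp {b L l : ℝ} (hL : 0 < L) (hl : 0 < l)
    (h0 : ∀ n : ℤ, Disp b L n 0 → n = 0) :
    (∃ n : ℕ, 1 ≤ n ∧ ∃ t, 0 < t ∧ t < l ∧ Disp b L n t) ∧
    (∃ n : ℕ, 1 ≤ n ∧ ∃ t, 0 < t ∧ t < l ∧ Disp b L n (-t)) := by
  obtain ⟨M, hM⟩ := exists_nat_gt (max (L / l) 1)
  have hM1 : L / l < M := lt_of_le_of_lt (le_max_left _ _) hM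
  have hM2 : (1 : ℝ) < M := lt_of_le_of_lt (le_max_right _ _) hM
  have hMp : 0 < M := by
    have : (0 : ℝ) < M := by linarith
    exact_mod_cast this
  obtain ⟨j, k, hk, -, hjk⟩ := Real.exists_int_int_abs_mul_sub_le (b / L) hMp
  have hd : ∃ d : ℝ, d ≠ 0 ∧ |d| < l ∧ |d| < L ∧ Disp b L k d := by
    have hD : Disp b L k (k * b - j * L) := ⟨-j, by push_cast; ring⟩
    have e : (k * b - j * L : ℝ) = L * (k * (b / L) - j) := by field_simp
    have habs : |(k * b - j * L : ℝ)| ≤ L * (1 / (M + 1)) := by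
      rw [e, abs_mul, abs_of_pos hL]
      exact mul_le_mul_of_nonneg_left hjk hL.le
    refine ⟨k * b - j * L, ?_, ?_, ?_, hD⟩
    · intro h
      rw [h] at hD
      have := h0 _ hD
      omega
    · refine lt_of_le_of_lt habs ?_
      rw [mul_one_div, div_lt_iff₀ (by linarith)]
      rw [div_lt_iff₀ hl] at hM1
      nlinarith
    · refine lt_of_le_of_lt habs ?_
      rw [mul_one_div, div_lt_iff₀ (by linarith)]
      nlinarith
  obtain ⟨d, hd0, hdl, hdL, hD⟩ := hd
  obtain ⟨k', rfl⟩ := Int.eq_ofNat_of_zero_le hk.le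
  have hk' : 1 ≤ k' := by omega
  have ha : 0 < |d| := abs_pos.mpr hd0
  set m : ℕ := ⌊L / |d|⌋₊ with hm
  have m1 : (m : ℝ) * |d| ≤ L := by
    have := Nat.floor_le (div_nonneg hL.le ha.le)
    rwa [le_div_iff₀ ha] at this
  have m2 : L < (m + 1) * |d| := by
    have := Nat.lt_floor_add_one (L / |d|)
    rwa [div_lt_iff₀ ha] at this
  have mpos : 1 ≤ m := by
    rw [hm]
    apply Nat.le_floor
    rw [le_div_iff₀ ha]
    simpa using hdL.le
  have hmk : 1 ≤ m * k' := Nat.one_le_iff_ne_zero.mpr (by positivity)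
  have hne : L - m * |d| ≠ 0 := by
    intro h
    have : Disp b L ((m * k' : ℕ) : ℤ) 0 := by
      obtain ⟨i, hi⟩ := hD
      push_cast at hi
      rcases abs_cases d with ⟨h1, _⟩ | ⟨h1, _⟩
      · refine ⟨m * i - 1, ?_⟩
        push_cast
        rw [h1] at h
        rw [hi] at h
        linear_combination h
      · refine ⟨m * i + 1, ?_⟩
        push_cast
        rw [h1] at h
        rw [hi] at h
        linear_combination -h
    have := h0 _ this
    omega
  have hpos : 0 < L - m * |d| := lt_of_le_of_ne (by linarith) (Ne.symm hne)
  have hsm : L - m * |d| < l := by linarith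
  rcases abs_cases d with ⟨h1, _⟩ | ⟨h1, _⟩
  · refine ⟨⟨k', hk', |d|, ha, hdl, by rw [h1]; exact hD⟩, ⟨m * k', hmk, _, hpos, hsm, ?_⟩⟩
    obtain ⟨i, hi⟩ := hD
    push_cast at hi
    refine ⟨m * i - 1, ?_⟩
    rw [h1, hi]
    push_cast
    ring
  · refine ⟨⟨m * k', hmk, _, hpos, hsm, ?_⟩, ⟨k', hk', |d|, ha, hdl, by rw [h1, neg_neg]; exact hD⟩⟩
    obtain ⟨i, hi⟩ := hD
    push_cast at hi
    refine ⟨m * i + 1, ?_⟩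
    rw [h1, hi]
    push_cast
    ring

open Classical in
theorem min_wit (p : ℕ → ℝ → Prop) (h : ∃ n : ℕ, 1 ≤ n ∧ ∃ t, p n t) :
    ∃ n : ℕ, 1 ≤ n ∧ (∃ t, p n t) ∧ ∀ m : ℕ, 1 ≤ m → ∀ t, p m t → n ≤ m :=
  ⟨Nat.find h, (Nat.find_spec h).1, (Nat.find_spec h).2,
    fun m hm t ht => Nat.find_min' h ⟨hm, t, ht⟩⟩

/-- The three gap argument. -/
theorem core {b L l c : ℝ} (hL : 0 < L) (hl : 0 < l) (hlL : l < L)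
    (h0 : ∀ n : ℤ, Disp b L n 0 → n = 0) :
    ∃ t₁ t₂ : ℝ, 0 < t₁ ∧ t₁ < l ∧ 0 < t₂ ∧ t₂ < l ∧ l ≤ t₁ + t₂ ∧
      (∀ x, c ≤ x → x < c + l → ∃ n : ℕ, 1 ≤ n ∧ ∃ t, Disp b L n t ∧ c ≤ x + t ∧ x + t < c + l) ∧
      ∀ x, c ≤ x → x < c + l → ∀ N : ℕ, 1 ≤ N → ∀ t, Disp b L N t → c ≤ x + t → x + t < c + l →
        (∀ m : ℕ, 1 ≤ m → m < N → ∀ s, Disp b L m s → c ≤ x + s → x + s < c + l → False) →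
        (x < c + l - t₁ → t = t₁) ∧ (c + l - t₁ ≤ x → x < c + t₂ → t = t₁ - t₂) ∧
        (c + t₂ ≤ x → t = -t₂) := by
  obtain ⟨e1, e2⟩ := exists_disp hL hl h0
  obtain ⟨n₁, hn₁, ⟨t₁, p1, p2, D1⟩, M1⟩ := min_wit (fun n t => 0 < t ∧ t < l ∧ Disp b L n t) e1
  obtain ⟨n₂, hn₂, ⟨t₂, q1, q2, D2⟩, M2⟩ :=
    min_wit (fun n t => 0 < t ∧ t < l ∧ Disp b L n (-t)) e2
  have M1' : ∀ m : ℤ, 1 ≤ m → ∀ t, 0 < t → t < l → Disp b L m t → (n₁ : ℤ) ≤ m := by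
    intro m hm t a b' D
    obtain ⟨k, rfl⟩ := Int.eq_ofNat_of_zero_le (by omega : 0 ≤ m)
    have := M1 k (by omega) t ⟨a, b', D⟩
    omega
  have M2' : ∀ m : ℤ, 1 ≤ m → ∀ t, t < 0 → -l < t → Disp b L m t → (n₂ : ℤ) ≤ m := by
    intro m hm t a b' D
    obtain ⟨k, rfl⟩ := Int.eq_ofNat_of_zero_le (by omega : 0 ≤ m)
    have := M2 k (by omega) (-t) ⟨by linarith, by linarith, by rwa [neg_neg]⟩
    omega
  clear M1 M2 e1 e2
  have hsum : l ≤ t₁ + t₂ := by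
    by_contra hh
    push Not at hh
    rcases lt_trichotomy n₁ n₂ with h | h | h
    · have := M2' (n₂ - n₁) (by omega) (-t₂ - t₁) (by linarith) (by linarith) (D2.sub D1)
      omega
    · subst h
      have := D1.uniq D2 (by linarith) (by linarith)
      linarith
    · have := M1' (n₁ - n₂) (by omega) (t₁ - -t₂) (by linarith) (by linarith) (D1.sub D2)
      omega
  refine ⟨t₁, t₂, p1, p2, q1, q2, hsum, ?_, ?_⟩
  · intro x hx hx'
    by_cases h : x < c + l - t₁
    · exact ⟨n₁, hn₁, t₁, D1, by linarith, by linarith⟩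
    by_cases h' : c + t₂ ≤ x
    · exact ⟨n₂, hn₂, -t₂, D2, by linarith, by linarith⟩
    refine ⟨n₁ + n₂, by omega, t₁ + -t₂, ?_, by linarith, by linarith⟩
    have := D1.add D2
    push_cast
    exact this
  · intro x hx hx' N hN t Dt ht ht' hfirst
    have hfirst' : ∀ m : ℤ, 1 ≤ m → m < N → ∀ s, Disp b L m s → c ≤ x + s → x + s < c + l →
        False := by
      intro m hm hmN s Ds
      obtain ⟨k, rfl⟩ := Int.eq_ofNat_of_zero_le (by omega : 0 ≤ m)
      exact hfirst k (by omega) (by omega) s Ds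
    have tne : t ≠ 0 := by
      rintro rfl
      have := h0 _ Dt
      omega
    refine ⟨fun h => ?_, fun h h' => ?_, fun h => ?_⟩
    · have hle : (N : ℤ) ≤ n₁ := by
        by_contra hh
        exact hfirst' n₁ (by omega) (by omega) t₁ D1 (by linarith) (by linarith)
      rcases hle.eq_or_lt with e | e
      · rw [e] at Dt
        exact Dt.uniq D1 (by linarith) (by linarith)
      · exfalso
        rcases lt_or_gt_of_ne tne with g | g
        · have := M1' (n₁ - N) (by omega) (t₁ - t) (by linarith) (by linarith) (D1.sub Dt)
          omega
        · have := M1' N (by omega) t g (by linarith) Dt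
          omega
    · have hle : (N : ℤ) ≤ n₁ + n₂ := by
        by_contra hh
        exact hfirst' (n₁ + n₂) (by omega) (by omega) (t₁ + -t₂) (D1.add D2)
          (by linarith) (by linarith)
      have hge : (N : ℤ) = n₁ + n₂ := by
        rcases lt_or_gt_of_ne tne with g | g
        · have a1 := M2' N (by omega) t g (by linarith) Dt
          have a2 : (n₂ : ℤ) ≠ N := by
            intro e
            rw [← e] at Dt
            have := Dt.uniq D2 (by linarith) (by linarith)
            linarith
          have Ds := Dt.sub D2
          have a3 : 0 < t - -t₂ := by
            by_contra hh
            exact hfirst' (N - n₂) (by omega) (by omega) _ Ds (by linarith) (by linarith)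
          have := M1' (N - n₂) (by omega) _ a3 (by linarith) Ds
          omega
        · have a1 := M1' N (by omega) t g (by linarith) Dt
          have a2 : (n₁ : ℤ) ≠ N := by
            intro e
            rw [← e] at Dt
            have := Dt.uniq D1 (by linarith) (by linarith)
            linarith
          have Ds := Dt.sub D1
          have a3 : t - t₁ < 0 := by
            by_contra hh
            exact hfirst' (N - n₁) (by omega) (by omega) _ Ds (by linarith) (by linarith)
          have := M2' (N - n₁) (by omega) _ a3 (by linarith) Ds
          omega
      rw [hge] at Dt
      have := Dt.uniq (D1.add D2) (by linarith) (by linarith)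
      linarith
    · have hle : (N : ℤ) ≤ n₂ := by
        by_contra hh
        exact hfirst' n₂ (by omega) (by omega) (-t₂) D2 (by linarith) (by linarith)
      rcases hle.eq_or_lt with e | e
      · rw [e] at Dt
        exact Dt.uniq D2 (by linarith) (by linarith)
      · exfalso
        rcases lt_or_gt_of_ne tne with g | g
        · have := M2' N (by omega) t g (by linarith) Dt
          omega
        · have := M2' (n₂ - N) (by omega) (-t₂ - t) (by linarith) (by linarith) (D2.sub Dt)
          omega

/-- Orbits of the three interval exchange are obtained by inducing the rotation. -/
theorem tiet_orbit (α₁ α₂ α₃ : ℝ) (h₁ : 0 < α₁) (h₂ : 0 < α₂) (h₃ : 0 < α₃)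
    (x : ℝ) (hx : 0 ≤ x) (hx' : x < α₁ + α₂ + α₃) (r : ℕ) :
    ∃ N : ℕ, r ≤ N ∧ (r = 0 → N = 0) ∧
      Disp (α₂ + α₃) (α₁ + 2 * α₂ + α₃) N ((Tiet α₁ α₂ α₃)^[r] x - x) ∧
      0 ≤ (Tiet α₁ α₂ α₃)^[r] x ∧ (Tiet α₁ α₂ α₃)^[r] x < α₁ + α₂ + α₃ ∧
      ∀ m : ℕ, 1 ≤ m → m < N → ∀ t, Disp (α₂ + α₃) (α₁ + 2 * α₂ + α₃) m t →
        0 ≤ x + t → x + t < α₁ + α₂ + α₃ →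
        ∃ k : ℕ, 1 ≤ k ∧ k < r ∧ (Tiet α₁ α₂ α₃)^[k] x = x + t := by
  induction r with
  | zero =>
    refine ⟨0, le_rfl, fun _ => rfl, ⟨0, by simp⟩, hx, hx', ?_⟩
    intro m _ hm
    omega
  | succ r ih =>
    obtain ⟨N, hrN, hr0, D, hy, hy', H⟩ := ih
    rw [Function.iterate_succ_apply']
    set y := (Tiet α₁ α₂ α₃)^[r] x with hydef
    have HN : ∀ m : ℕ, 1 ≤ m → m < N + 1 → ∀ t, Disp (α₂ + α₃) (α₁ + 2 * α₂ + α₃) m t →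
        0 ≤ x + t → x + t < α₁ + α₂ + α₃ →
        ∃ k : ℕ, 1 ≤ k ∧ k < r + 1 ∧ (Tiet α₁ α₂ α₃)^[k] x = x + t := by
      intro m hm hmN t Dt ht ht'
      rcases Nat.lt_succ_iff_lt_or_eq.mp hmN with h | h
      · obtain ⟨k, k1, k2, k3⟩ := H m hm h t Dt ht ht'
        exact ⟨k, k1, by omega, k3⟩
      · subst h
        have := D.uniq Dt (by linarith) (by linarith)
        refine ⟨r, ?_, by omega, by rw [← hydef]; linarith⟩
        by_contra hh
        have := hr0 (by omega)
        omega
    unfold Tiet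
    split_ifs with c1 c2
    · refine ⟨N + 1, by omega, fun h => h.elim, ?_, by linarith, by linarith, HN⟩
      have := D.add (⟨0, by push_cast; ring⟩ : Disp (α₂ + α₃) (α₁ + 2 * α₂ + α₃) 1 (α₂ + α₃))
      push_cast
      convert this using 1
      ring
    · refine ⟨N + 2, by omega, fun h => h.elim, ?_, by linarith, by linarith, ?_⟩
      · have := D.add
          (⟨-1, by push_cast; ring⟩ : Disp (α₂ + α₃) (α₁ + 2 * α₂ + α₃) 2 (α₃ - α₁))
        push_cast
        convert this using 1
        ring
      · intro m hm hmN t Dt ht ht'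
        rcases Nat.lt_succ_iff_lt_or_eq.mp hmN with h | h
        · exact HN m hm h t Dt ht ht'
        · exfalso
          subst h
          have := D.add (⟨0, by push_cast; ring⟩ : Disp (α₂ + α₃) (α₁ + 2 * α₂ + α₃) 1 (α₂ + α₃))
          push_cast at Dt
          have := Dt.uniq this (by linarith) (by linarith)
          linarith
    · refine ⟨N + 1, by omega, fun h => h.elim, ?_, by linarith, by linarith, HN⟩
      have := D.add
        (⟨-1, by push_cast; ring⟩ : Disp (α₂ + α₃) (α₁ + 2 * α₂ + α₃) 1 (-α₁ - α₂))
      push_cast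
      convert this using 1
      ring

theorem firstReturn_threeIet (α₁ α₂ α₃ : ℝ) (h₁ : 0 < α₁) (h₂ : 0 < α₂) (h₃ : 0 < α₃)
    (hind : ∀ p q : ℚ, (p : ℝ) * (α₁ + α₂) + (q : ℝ) * (α₂ + α₃) = 0 → p = 0 ∧ q = 0)
    (c l : ℝ) (hl : 0 < l) (hc : 0 ≤ c) (hsub : c + l ≤ α₁ + α₂ + α₃) :
    -- (a) every point of J = [c, c+l) returns to J
    (∀ x ∈ Set.Ico c (c + l), ∃ n : ℕ, 1 ≤ n ∧
        (Tiet α₁ α₂ α₃)^[n] x ∈ Set.Ico c (c + l)) ∧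
    -- (b) the first return map is a 3iet with permutation (321) (possibly degenerate)
    ∃ β₁ β₂ : ℝ, c ≤ β₁ ∧ β₁ ≤ β₂ ∧ β₂ ≤ c + l ∧
      ∀ x ∈ Set.Ico c (c + l), ∀ r : ℕ, 1 ≤ r →
        (Tiet α₁ α₂ α₃)^[r] x ∈ Set.Ico c (c + l) →
        (∀ m : ℕ, 1 ≤ m → m < r → (Tiet α₁ α₂ α₃)^[m] x ∉ Set.Ico c (c + l)) →
        ((x < β₁ → (Tiet α₁ α₂ α₃)^[r] x = x + (β₂ - β₁) + (c + l - β₂)) ∧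
         (β₁ ≤ x → x < β₂ →
            (Tiet α₁ α₂ α₃)^[r] x = x - (β₁ - c) + (c + l - β₂)) ∧
         (β₂ ≤ x → (Tiet α₁ α₂ α₃)^[r] x = x - (β₁ - c) - (β₂ - β₁))) := by
  have h0 : ∀ n : ℤ, Disp (α₂ + α₃) (α₁ + 2 * α₂ + α₃) n 0 → n = 0 := by
    rintro n ⟨j, hj⟩
    have := hind j (n + j) (by push_cast; linear_combination -hj)
    obtain ⟨a, b⟩ := this
    have a' : j = 0 := by exact_mod_cast a
    have b' : n + j = 0 := by exact_mod_cast b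
    omega
  obtain ⟨t₁, t₂, p1, p2, q1, q2, hs, hex, hret⟩ :=
    core (b := α₂ + α₃) (L := α₁ + 2 * α₂ + α₃) (l := l) (c := c) (by linarith) hl
      (by linarith) h0
  constructor
  · rintro x ⟨hx, hx'⟩
    obtain ⟨n, hn, t, D, ht, ht'⟩ := hex x hx hx'
    obtain ⟨N, hN, -, DN, hy, hy', H⟩ :=
      tiet_orbit α₁ α₂ α₃ h₁ h₂ h₃ x (by linarith) (by linarith) n
    rcases hN.eq_or_lt with e | e
    · subst e
      have := DN.uniq D (by linarith) (by linarith)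
      exact ⟨n, hn, by linarith, by linarith⟩
    · obtain ⟨k, k1, k2, k3⟩ := H n hn e t D (by linarith) (by linarith)
      exact ⟨k, k1, by linarith, by linarith⟩
  · refine ⟨c + l - t₁, c + t₂, by linarith, by linarith, by linarith, ?_⟩
    rintro x ⟨hx, hx'⟩ r hr ⟨hy, hy'⟩ hfirst
    obtain ⟨N, hN, -, DN, -, -, H⟩ :=
      tiet_orbit α₁ α₂ α₃ h₁ h₂ h₃ x (by linarith) (by linarith) r
    obtain ⟨g1, g2, g3⟩ := hret x hx hx' N (by omega) _ DN (by linarith) (by linarith) (by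
      intro m hm hmN s Ds hs1 hs2
      obtain ⟨k, k1, k2, k3⟩ := H m hm hmN s Ds (by linarith) (by linarith)
      exact hfirst k k1 k2 ⟨by linarith, by linarith⟩)
    refine ⟨fun h => ?_, fun h h' => ?_, fun h => ?_⟩
    · have := g1 h
      linarith
    · have := g2 h h'
      linarith
    · have := g3 h
      linarith
end

section
/- Let u be a non-degenerate 3iet word with parameters ε, l, c. If u is a fixed point of some primitive substitution over {1,2,3}, then: (i) ε is a Sturm number, i.e., ε is a quadratic irrational in (0,1) whose conjugate ε′ satisfies ε′ ∉ (0,1); and (ii) there exist rationals p₁, q₁, p₂, q₂ with c = p₁ + q₁ε and l = p₂ + q₂ε (i.e., c, l ∈ ℚ(ε)). -/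
/-- The letter (1, 2 or 3, coded as 0, 1, 2 in `Fin 3`) coding the position of `x`. -/
noncomputable def letter3 (ε l c : ℝ) (x : ℝ) : Fin 3 :=
  if x < c + l - 1 + ε then 0 else if x < c + ε then 1 else 2

/-- `u : ℤ → Fin 3` is the 3iet word with parameters `ε, l, c`, coding the orbit of `0`. -/
def IsThreeIetWord (ε l c : ℝ) (u : ℤ → Fin 3) : Prop :=
  ∃ t : ℤ → ℝ, t 0 = 0 ∧ (∀ n, t n ∈ Set.Ico c (c + l)) ∧
    (∀ n, t (n + 1) = T3 ε l c (t n)) ∧ ∀ n, u n = letter3 ε l c (t n)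

/-- A substitution is primitive if some power of it maps every letter to a word
containing all letters. -/
def IsPrimitiveSubst {A : Type*} (φ : A → List A) : Prop :=
  ∃ n : ℕ, 1 ≤ n ∧ ∀ a b : A, b ∈ (substWord φ)^[n] [a]

/-- A pointed bidirectional word `u : ℤ → A` is a fixed point of the substitution `φ`. -/
def IsFixedPointSubstZ {A : Type*} (φ : A → List A) (u : ℤ → A) : Prop :=
  ∃ k : ℤ → ℤ, StrictMono k ∧ k 0 = 0 ∧
    (∀ n, k (n + 1) = k n + (φ (u n)).length) ∧
    ∀ n : ℤ, ∀ i : ℕ, (h : i < (φ (u n)).length) → u (k n + i) = (φ (u n)).get ⟨i, h⟩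

/-- Translation of the interval exchange on each letter. -/
noncomputable def dd (ε : ℝ) : Fin 3 → ℝ := ![1 - ε, 1 - 2 * ε, -ε]

/-- Collected facts on the orbit `t` and its coding `u`. -/
structure Ctx (ε l c : ℝ) (u : ℤ → Fin 3) (t : ℤ → ℝ) : Prop where
  irr : Irrational ε
  e0 : 0 < ε
  e1 : ε < 1
  el : ε < l
  el' : 1 - ε < l
  l1 : l < 1
  nd : ∀ a b : ℤ, l ≠ a + b * ε
  t0 : t 0 = 0
  lo : ∀ n, c ≤ t n
  hi : ∀ n, t n < c + l
  step : ∀ n, t (n + 1) = t n + dd ε (u n)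
  let0 : ∀ n, u n = 0 ↔ t n < c + l - 1 + ε
  let1 : ∀ n, u n = 1 ↔ c + l - 1 + ε ≤ t n ∧ t n < c + ε
  let2 : ∀ n, u n = 2 ↔ c + ε ≤ t n

lemma irr_ne {ε : ℝ} (h : Irrational ε) (a b : ℤ) (hb : b ≠ 0) : (a : ℝ) + b * ε ≠ 0 := by
  intro h0
  have h2 : Irrational ((b : ℝ) * ε) := h.intCast_mul hb
  apply h2.ne_int (-a)
  push_cast; linarith

lemma fin3_cases (a : Fin 3) : a = 0 ∨ a = 1 ∨ a = 2 := by
  fin_cases a <;> simp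

namespace Ctx
variable {ε l c : ℝ} {u : ℤ → Fin 3} {t : ℤ → ℝ}

lemma step0 (X : Ctx ε l c u t) {n : ℤ} (h : u n = 0) : t (n + 1) = t n + 1 - ε := by
  rw [X.step, h]; simp [dd]; ring
lemma step1 (X : Ctx ε l c u t) {n : ℤ} (h : u n = 1) : t (n + 1) = t n + 1 - 2 * ε := by
  rw [X.step, h]; simp [dd]; ring
lemma step2 (X : Ctx ε l c u t) {n : ℤ} (h : u n = 2) : t (n + 1) = t n - ε := by
  rw [X.step, h]; simp [dd]; ring

lemma visit (X : Ctx ε l c u t) (n : ℤ) (s : ℕ) : ∃ i : ℕ, i ≤ s + 1 ∧ ∃ a : ℤ,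
    (t (n + i) = t n + a - s * ε) ∨
    (t (n + i) = t n + a - (s + 1) * ε ∧ c + l ≤ t n + a - s * ε ∧ t n + a - s * ε < c + 1) := by
  induction s with
  | zero => exact ⟨0, by omega, 0, Or.inl (by simp)⟩
  | succ s ih =>
    obtain ⟨i, hi, a, h | ⟨h, h1, h2⟩⟩ := ih
    · have e : n + ((i + 1 : ℕ) : ℤ) = n + i + 1 := by push_cast; ring
      rcases fin3_cases (u (n + i)) with h0 | h0 | h0
      · refine ⟨i + 1, by omega, a + 1, Or.inl ?_⟩
        rw [e, X.step0 h0, h]; push_cast; ring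
      · refine ⟨i + 1, by omega, a + 1, Or.inr ?_⟩
        rw [e, X.step1 h0, h]
        have := (X.let1 _).1 h0
        rw [h] at this
        push_cast
        refine ⟨by ring, by linarith, by linarith⟩
      · refine ⟨i + 1, by omega, a, Or.inl ?_⟩
        rw [e, X.step2 h0, h]; push_cast; ring
    · exact ⟨i, by omega, a, Or.inl (by rw [h]; push_cast; ring)⟩

lemma visit' (X : Ctx ε l c u t) (n : ℤ) (s : ℕ) (b : ℤ) (h1 : c ≤ t n + b - s * ε)
    (h2 : t n + b - s * ε < c + l) : ∃ i : ℕ, i ≤ s + 1 ∧ t (n + i) = t n + b - s * ε := by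
  obtain ⟨i, hi, a, h | ⟨h, h3, h4⟩⟩ := X.visit n s
  · refine ⟨i, hi, ?_⟩
    have l1 := X.l1
    have h5 := X.lo (n + i)
    have h6 := X.hi (n + i)
    have h7 : ((a : ℝ)) < b + 1 := by linarith
    have h8 : ((b : ℝ)) < a + 1 := by linarith
    have : a = b := by
      have : a < b + 1 := by exact_mod_cast h7
      have : b < a + 1 := by exact_mod_cast h8
      omega
    rw [h, this]
  · exfalso
    have h7 : ((b : ℝ)) < a := by linarith
    have h8 : ((a : ℝ)) < b + 1 := by linarith
    have : b < a := by exact_mod_cast h7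
    have : a < b + 1 := by exact_mod_cast h8
    omega

lemma recur (X : Ctx ε l c u t) {x y : ℝ} (hxy : x < y) (hx : c ≤ x) (hy : y ≤ c + l) :
    ∃ R : ℕ, ∀ n : ℤ, ∃ i : ℕ, i ≤ R ∧ x < t (n + i) ∧ t (n + i) < y := by
  obtain ⟨N, hN⟩ := exists_nat_one_div_lt (sub_pos.2 hxy)
  obtain ⟨j, k, hk, -, hjk⟩ := Real.exists_int_int_abs_mul_sub_le ε (Nat.succ_pos N)
  have hθ : |(k : ℝ) * ε - j| < y - x := by
    refine lt_of_le_of_lt hjk (lt_of_le_of_lt ?_ hN)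
    apply one_div_le_one_div_of_le
    · positivity
    · push_cast; linarith
  have hθ0 : (k : ℝ) * ε - j ≠ 0 := by
    have := irr_ne X.irr (-j) k hk.ne'
    intro h; apply this; push_cast; linarith
  obtain ⟨q, rfl⟩ := Int.eq_ofNat_of_zero_le hk.le
  push_cast at hθ hθ0
  set θ : ℝ := (q : ℝ) * ε - j with hθd
  have key : ∀ z : ℝ, ∃ m : ℕ, (m : ℝ) ≤ 1 / |θ| + 1 ∧ ∃ b : ℤ, x < z + b - m * θ ∧ z + b - m * θ < y := by
    intro z
    rcases lt_or_gt_of_ne hθ0 with h | h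
    · -- negative step: move right
      rw [abs_of_neg h] at hθ ⊢
      have f1 := Int.floor_le (x - z)
      have f2 := Int.lt_floor_add_one (x - z)
      set b := ⌊x - z⌋ with hb
      have hr : 0 ≤ (x - z - b) / (-θ) := div_nonneg (by linarith) (by linarith)
      have g1 := Nat.floor_le hr
      have g2 := Nat.lt_floor_add_one ((x - z - b) / (-θ))
      set m := ⌊(x - z - b) / (-θ)⌋₊ with hm
      have hn : 0 < -θ := by linarith
      rw [le_div_iff₀ hn] at g1
      rw [div_lt_iff₀ hn] at g2
      refine ⟨m + 1, ?_, b, ?_, ?_⟩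
      · have : (m : ℝ) ≤ 1 / (-θ) := by
          rw [le_div_iff₀ hn]; linarith
        push_cast; linarith
      · push_cast; linarith
      · push_cast; linarith
    · rw [abs_of_pos h] at hθ ⊢
      have f1 := Int.le_ceil (y - z)
      have f2 := Int.ceil_lt_add_one (y - z)
      set b := ⌈y - z⌉ with hb
      have hr : 0 ≤ (z + b - y) / θ := div_nonneg (by linarith) (by linarith)
      have g1 := Nat.floor_le hr
      have g2 := Nat.lt_floor_add_one ((z + b - y) / θ)
      set m := ⌊(z + b - y) / θ⌋₊ with hm
      rw [le_div_iff₀ h] at g1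
      rw [div_lt_iff₀ h] at g2
      refine ⟨m + 1, ?_, b, ?_, ?_⟩
      · have : (m : ℝ) ≤ 1 / θ := by
          rw [le_div_iff₀ h]; linarith
        push_cast; linarith
      · push_cast; linarith
      · push_cast; linarith
  refine ⟨⌊1 / |θ| + 1⌋₊ * q + 1, fun n => ?_⟩
  obtain ⟨m, hm, b, h1, h2⟩ := key (t n)
  have hm' : m ≤ ⌊1 / |θ| + 1⌋₊ := Nat.le_floor hm
  have e : t n + b - m * θ = t n + ((b + m * j : ℤ) : ℝ) - ((m * q : ℕ) : ℝ) * ε := by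
    rw [hθd]; push_cast; ring
  rw [e] at h1 h2
  obtain ⟨i, hi, hti⟩ := X.visit' n (m * q) (b + m * j) (by linarith) (by linarith)
  refine ⟨i, hi.trans ?_, by rw [hti]; exact h1, by rw [hti]; exact h2⟩
  have := Nat.mul_le_mul_right q hm'
  omega

lemma exists_near (X : Ctx ε l c u t) {x y : ℝ} (hxy : x < y) (hx : c ≤ x) (hy : y ≤ c + l) :
    ∃ n : ℤ, x < t n ∧ t n < y := by
  obtain ⟨R, hR⟩ := X.recur hxy hx hy
  obtain ⟨i, -, h⟩ := hR 0
  exact ⟨_, h⟩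

lemma cyl_right (X : Ctx ε l c u t) (N : ℕ) : ∀ A : ℤ, ∃ δ > 0, ∀ m, t A ≤ t m → t m < t A + δ →
    ∀ i : ℕ, i < N → u (m + i) = u (A + i) := by
  induction N with
  | zero => intro A; exact ⟨1, one_pos, by intros; omega⟩
  | succ N ih =>
    intro A
    obtain ⟨δ, hδ, h⟩ := ih (A + 1)
    have h0 : ∃ δ > 0, ∀ m, t A ≤ t m → t m < t A + δ → u m = u A := by
      rcases fin3_cases (u A) with h0 | h0 | h0
      · have := (X.let0 _).1 h0
        refine ⟨c + l - 1 + ε - t A, by linarith, fun m h1 h2 => ?_⟩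
        rw [h0, X.let0]; linarith
      · have := (X.let1 _).1 h0
        refine ⟨c + ε - t A, by linarith, fun m h1 h2 => ?_⟩
        rw [h0, X.let1]; constructor <;> linarith
      · have := (X.let2 _).1 h0
        refine ⟨1, by linarith, fun m h1 h2 => ?_⟩
        rw [h0, X.let2]; linarith
    obtain ⟨δ', hδ', h'⟩ := h0
    refine ⟨min δ δ', lt_min hδ hδ', fun m h1 h2 i hi => ?_⟩
    have m1 := min_le_left δ δ'
    have m2 := min_le_right δ δ'
    have hu := h' m h1 (by linarith)
    rcases i with _ | i
    · simpa using hu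
    · have s1 := X.step m
      have s2 := X.step A
      rw [hu] at s1
      have := h (m + 1) (by linarith) (by linarith) i (by omega)
      have e1 : m + ((i + 1 : ℕ) : ℤ) = m + 1 + i := by push_cast; ring
      have e2 : A + ((i + 1 : ℕ) : ℤ) = A + 1 + i := by push_cast; ring
      rw [e1, e2, this]

lemma cyl_fwd (X : Ctx ε l c u t) (N : ℕ) : ∀ y : ℝ,
    (∀ (a : ℤ) (b : ℕ), y + a - b * ε ≠ c + l - 1 + ε ∧ y + a - b * ε ≠ c + ε) →
    ∃ δ > 0, ∀ n m, |t n - y| < δ → |t m - y| < δ →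
    ∀ i : ℕ, i < N → u (n + i) = u (m + i) := by
  induction N with
  | zero => intro y _; exact ⟨1, one_pos, by intros; omega⟩
  | succ N ih =>
    intro y hy
    have hloc : ∃ a : Fin 3, ∃ δ > 0, ∀ n, |t n - y| < δ → u n = a := by
      have h0 := hy 0 0
      simp only [Int.cast_zero, Nat.cast_zero, zero_mul, add_zero, sub_zero] at h0
      have l1 := X.l1
      rcases lt_or_gt_of_ne h0.1 with h | h
      · refine ⟨0, c + l - 1 + ε - y, by linarith, fun n hn => ?_⟩
        rw [abs_lt] at hn; rw [X.let0]; linarith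
      · rcases lt_or_gt_of_ne h0.2 with h' | h'
        · refine ⟨1, min (c + ε - y) (y - (c + l - 1 + ε)), lt_min (by linarith) (by linarith), fun n hn => ?_⟩
          have m1 := min_le_left (c + ε - y) (y - (c + l - 1 + ε))
          have m2 := min_le_right (c + ε - y) (y - (c + l - 1 + ε))
          rw [abs_lt] at hn; rw [X.let1]; constructor <;> linarith
        · refine ⟨2, y - (c + ε), by linarith, fun n hn => ?_⟩
          rw [abs_lt] at hn; rw [X.let2]; linarith
    obtain ⟨x, δ', hδ', hx⟩ := hloc
    have hd : ∃ (a : ℤ) (b : ℕ), dd ε x = a - b * ε := by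
      rcases fin3_cases x with rfl | rfl | rfl
      · exact ⟨1, 1, by simp [dd]⟩
      · exact ⟨1, 2, by simp [dd]⟩
      · exact ⟨0, 1, by simp [dd]⟩
    obtain ⟨a, b, hab⟩ := hd
    obtain ⟨δ, hδ, h⟩ := ih (y + dd ε x) (by
      intro a' b'
      have := hy (a + a') (b + b')
      have e : y + dd ε x + a' - b' * ε = y + ((a + a' : ℤ) : ℝ) - ((b + b' : ℕ) : ℝ) * ε := by
        rw [hab]; push_cast; ring
      rw [e]; exact this)
    refine ⟨min δ δ', lt_min hδ hδ', fun n m h1 h2 i hi => ?_⟩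
    have un := hx n (h1.trans_le (min_le_right _ _))
    have um := hx m (h2.trans_le (min_le_right _ _))
    rcases i with _ | i
    · simpa using un.trans um.symm
    · have s1 := X.step n
      have s2 := X.step m
      rw [un] at s1
      rw [um] at s2
      have := h (n + 1) (m + 1)
        (by rw [s1, add_sub_add_right_eq_sub]; exact h1.trans_le (min_le_left _ _))
        (by rw [s2, add_sub_add_right_eq_sub]; exact h2.trans_le (min_le_left _ _)) i (by omega)
      have e1 : n + ((i + 1 : ℕ) : ℤ) = n + 1 + i := by push_cast; ring
      have e2 : m + ((i + 1 : ℕ) : ℤ) = m + 1 + i := by push_cast; ring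
      rw [e1, e2, this]

lemma prev (X : Ctx ε l c u t) (n : ℤ) :
    (u (n - 1) = 0 ∧ c + 1 - ε ≤ t n) ∨ (u (n - 1) = 1 ∧ c + l - ε ≤ t n ∧ t n < c + 1 - ε) ∨
    (u (n - 1) = 2 ∧ t n < c + l - ε) := by
  have lo := X.lo (n - 1)
  have hi := X.hi (n - 1)
  rcases fin3_cases (u (n - 1)) with h | h | h
  · left
    have := X.step0 h
    rw [sub_add_cancel] at this
    exact ⟨h, by linarith⟩
  · right; left
    have := X.step1 h
    have h2 := (X.let1 _).1 h
    rw [sub_add_cancel] at this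
    exact ⟨h, by linarith, by linarith⟩
  · right; right
    have := X.step2 h
    rw [sub_add_cancel] at this
    exact ⟨h, by linarith⟩

lemma cyl_bwd (X : Ctx ε l c u t) (N : ℕ) : ∀ y : ℝ,
    (∀ (a : ℤ) (b : ℕ), y + a + b * ε ≠ c + l - ε ∧ y + a + b * ε ≠ c + 1 - ε) →
    ∃ δ > 0, ∀ n m, |t n - y| < δ → |t m - y| < δ →
    ∀ i : ℕ, i < N → u (n - 1 - i) = u (m - 1 - i) := by
  induction N with
  | zero => intro y _; exact ⟨1, one_pos, by intros; omega⟩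
  | succ N ih =>
    intro y hy
    have hloc : ∃ a : Fin 3, ∃ δ > 0, ∀ n, |t n - y| < δ → u (n - 1) = a := by
      have h0 := hy 0 0
      simp only [Int.cast_zero, Nat.cast_zero, zero_mul, add_zero] at h0
      have l1 := X.l1
      rcases lt_or_gt_of_ne h0.1 with h | h
      · refine ⟨2, c + l - ε - y, by linarith, fun n hn => ?_⟩
        rw [abs_lt] at hn
        rcases X.prev n with ⟨h1, h2⟩ | ⟨h1, h2, h3⟩ | ⟨h1, h2⟩
        · exfalso; linarith
        · exfalso; linarith
        · exact h1
      · rcases lt_or_gt_of_ne h0.2 with h' | h'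
        · refine ⟨1, min (c + 1 - ε - y) (y - (c + l - ε)), lt_min (by linarith) (by linarith), fun n hn => ?_⟩
          have m1 := min_le_left (c + 1 - ε - y) (y - (c + l - ε))
          have m2 := min_le_right (c + 1 - ε - y) (y - (c + l - ε))
          rw [abs_lt] at hn
          rcases X.prev n with ⟨h1, h2⟩ | ⟨h1, h2, h3⟩ | ⟨h1, h2⟩
          · exfalso; linarith
          · exact h1
          · exfalso; linarith
        · refine ⟨0, y - (c + 1 - ε), by linarith, fun n hn => ?_⟩
          rw [abs_lt] at hn
          rcases X.prev n with ⟨h1, h2⟩ | ⟨h1, h2, h3⟩ | ⟨h1, h2⟩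
          · exact h1
          · exfalso; linarith
          · exfalso; linarith
    obtain ⟨x, δ', hδ', hx⟩ := hloc
    have hd : ∃ (a : ℤ) (b : ℕ), dd ε x = - a - b * ε := by
      rcases fin3_cases x with rfl | rfl | rfl
      · exact ⟨-1, 1, by simp [dd]⟩
      · exact ⟨-1, 2, by simp [dd]⟩
      · exact ⟨0, 1, by simp [dd]⟩
    obtain ⟨a, b, hab⟩ := hd
    obtain ⟨δ, hδ, h⟩ := ih (y - dd ε x) (by
      intro a' b'
      have := hy (a + a') (b + b')
      have e : y - dd ε x + a' + b' * ε = y + ((a + a' : ℤ) : ℝ) + ((b + b' : ℕ) : ℝ) * ε := by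
        rw [hab]; push_cast; ring
      rw [e]; exact this)
    refine ⟨min δ δ', lt_min hδ hδ', fun n m h1 h2 i hi => ?_⟩
    have un := hx n (h1.trans_le (min_le_right _ _))
    have um := hx m (h2.trans_le (min_le_right _ _))
    rcases i with _ | i
    · simpa using un.trans um.symm
    · have s1 := X.step (n - 1)
      have s2 := X.step (m - 1)
      rw [un, sub_add_cancel] at s1
      rw [um, sub_add_cancel] at s2
      have := h (n - 1) (m - 1)
        (by rw [s1] at h1
            rw [← add_sub_add_right_eq_sub _ _ (dd ε x), sub_add_cancel]; exact h1.trans_le (min_le_left _ _))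
        (by rw [s2] at h2
            rw [← add_sub_add_right_eq_sub _ _ (dd ε x), sub_add_cancel]; exact h2.trans_le (min_le_left _ _)) i (by omega)
      have e1 : n - 1 - ((i + 1 : ℕ) : ℤ) = n - 1 - 1 - i := by push_cast; ring
      have e2 : m - 1 - ((i + 1 : ℕ) : ℤ) = m - 1 - 1 - i := by push_cast; ring
      rw [e1, e2, this]

end Ctx

/-- Birkhoff sums along equal words have equal increments. -/
lemma incr_eq {u : ℤ → Fin 3} {v : Fin 3 → ℝ} {S : ℤ → ℝ} (hS : ∀ n, S (n + 1) = S n + v (u n))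
    {n m : ℤ} {N : ℕ} (h : ∀ i : ℕ, i < N → u (n + i) = u (m + i)) (j : ℕ) (hj : j ≤ N) :
    S (n + j) - S n = S (m + j) - S m := by
  induction j with
  | zero => simp
  | succ j ih =>
    have h1 := ih (by omega)
    have e1 : n + ((j + 1 : ℕ) : ℤ) = n + j + 1 := by push_cast; ring
    have e2 : m + ((j + 1 : ℕ) : ℤ) = m + j + 1 := by push_cast; ring
    rw [e1, e2, hS, hS, h j (by omega)]
    linarith

namespace Ctx
variable {ε l c : ℝ} {u : ℤ → Fin 3} {t : ℤ → ℝ}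

lemma gh (X : Ctx ε l c u t) {v : Fin 3 → ℝ} {S : ℤ → ℝ} (hS : ∀ n, S (n + 1) = S n + v (u n))
    {C : ℝ} (hC : ∀ n, |S n| ≤ C) {η : ℝ} (hη : 0 < η) :
    ∃ R : ℕ, ∀ n m : ℤ, (∀ i : ℕ, i < R → u (n + i) = u (m + i)) → |S n - S m| ≤ 2 * η := by
  have ba : BddAbove (Set.range S) := ⟨C, by rintro _ ⟨n, rfl⟩; exact (abs_le.1 (hC n)).2⟩
  have bb : BddBelow (Set.range S) := ⟨-C, by rintro _ ⟨n, rfl⟩; exact (abs_le.1 (hC n)).1⟩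
  obtain ⟨_, ⟨p, rfl⟩, hp⟩ := exists_lt_of_lt_csSup (Set.range_nonempty S) (sub_lt_self (sSup (Set.range S)) hη)
  obtain ⟨_, ⟨q, rfl⟩, hq⟩ := exists_lt_of_csInf_lt (Set.range_nonempty S) (lt_add_of_pos_right (sInf (Set.range S)) hη)
  have hsup : ∀ n, S n ≤ sSup (Set.range S) := fun n => le_csSup ba ⟨n, rfl⟩
  have hinf : ∀ n, sInf (Set.range S) ≤ S n := fun n => csInf_le bb ⟨n, rfl⟩
  obtain ⟨a, ha⟩ := Int.eq_ofNat_of_zero_le (sub_nonneg.2 (min_le_left p q))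
  obtain ⟨b, hb⟩ := Int.eq_ofNat_of_zero_le (sub_nonneg.2 (min_le_right p q))
  set A := min p q with hA
  have hp' : p = A + a := by omega
  have hq' : q = A + b := by omega
  obtain ⟨δ, hδ, hcyl⟩ := X.cyl_right (a + b) A
  obtain ⟨R, hR⟩ := X.recur (x := t A) (y := min (t A + δ) (c + l)) (lt_min (by linarith) (X.hi A)) (X.lo A) (min_le_right _ _)
  refine ⟨R + (a + b), fun n m hnm => ?_⟩
  obtain ⟨i, hi, h1, h2⟩ := hR n
  have w1 := hcyl (n + i) h1.le (h2.trans_le (min_le_left _ _))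
  have w2 : ∀ j : ℕ, j < a + b → u (m + i + j) = u (A + j) := by
    intro j hj
    rw [← w1 j hj]
    have := hnm (i + j) (by omega)
    push_cast at this
    rw [add_assoc, add_assoc, this]
  have n1 := incr_eq hS w1 a (by omega)
  have n2 := incr_eq hS w1 b (by omega)
  have m1 := incr_eq hS w2 a (by omega)
  have m2 := incr_eq hS w2 b (by omega)
  have k := incr_eq hS hnm i (by omega)
  rw [hp'] at hp
  rw [hq'] at hq
  have s1 := hsup (n + i + a)
  have s2 := hsup (m + i + a)
  have s3 := hinf (n + i + b)
  have s4 := hinf (m + i + b)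
  rw [abs_le]; constructor <;> linarith

/-- Points on both sides of the second discontinuity. -/
lemma near_beta (X : Ctx ε l c u t) {δ : ℝ} (hδ : 0 < δ) : ∃ n m : ℤ, |t n - (c + ε)| < δ ∧
    |t m - (c + ε)| < δ ∧ u n = 1 ∧ u m = 2 ∧ u (m + 1) = 0 := by
  have l1 := X.l1
  have el := X.el
  have el' := X.el'
  have e0 := X.e0
  obtain ⟨n, h1, h2⟩ := X.exists_near (x := max (c + ε - δ) (c + l - 1 + ε)) (y := c + ε)
    (max_lt (by linarith) (by linarith)) (le_max_of_le_right (by linarith)) (by linarith)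
  obtain ⟨m, h3, h4⟩ := X.exists_near (x := c + ε) (y := min (c + ε + δ) (min (c + l) (c + l - 1 + ε + ε)))
    (lt_min (by linarith) (lt_min (by linarith) (by linarith))) (by linarith)
    ((min_le_right _ _).trans (min_le_left _ _))
  rw [max_lt_iff] at h1
  rw [lt_min_iff, lt_min_iff] at h4
  have um : u m = 2 := (X.let2 _).2 h3.le
  refine ⟨n, m, ?_, ?_, (X.let1 _).2 ⟨h1.2.le, h2⟩, um, ?_⟩
  · rw [abs_lt]; constructor <;> linarith
  · rw [abs_lt]; constructor <;> linarith
  · rw [X.let0, X.step2 um]; linarith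

/-- Points on both sides of the first discontinuity. -/
lemma near_alpha (X : Ctx ε l c u t) {δ : ℝ} (hδ : 0 < δ) : ∃ n m : ℤ, |t n - (c + l - 1 + ε)| < δ ∧
    |t m - (c + l - 1 + ε)| < δ ∧ u n = 1 ∧ u m = 0 ∧ u (m + 1) = 2 := by
  have l1 := X.l1
  have el := X.el
  have el' := X.el'
  have e0 := X.e0
  obtain ⟨n, h1, h2⟩ := X.exists_near (x := c + l - 1 + ε) (y := min (c + l - 1 + ε + δ) (c + ε))
    (lt_min (by linarith) (by linarith)) (by linarith) ((min_le_right _ _).trans (by linarith))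
  obtain ⟨m, h3, h4⟩ := X.exists_near (x := max (c + l - 1 + ε - δ) (max c (c + ε - 1 + ε)))
    (y := c + l - 1 + ε)
    (max_lt (by linarith) (max_lt (by linarith) (by linarith))) (le_max_of_le_right (le_max_left _ _))
    (by linarith)
  rw [lt_min_iff] at h2
  rw [max_lt_iff, max_lt_iff] at h3
  have um : u m = 0 := (X.let0 _).2 h4
  refine ⟨n, m, ?_, ?_, (X.let1 _).2 ⟨h1.le, h2.2⟩, um, ?_⟩
  · rw [abs_lt]; constructor <;> linarith
  · rw [abs_lt]; constructor <;> linarith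
  · rw [X.let2, X.step0 um]; linarith

/-- Kesten-type lemma: bounded Birkhoff sums force `v 1 = v 0 + v 2`. -/
lemma kesten (X : Ctx ε l c u t) {v : Fin 3 → ℝ} {S : ℤ → ℝ} (hS : ∀ n, S (n + 1) = S n + v (u n))
    {C : ℝ} (hC : ∀ n, |S n| ≤ C) : v 1 = v 0 + v 2 := by
  have main : ∀ η : ℝ, 0 < η → |v 1 - (v 0 + v 2)| ≤ 4 * η := by
    intro η hη
    obtain ⟨R, hR⟩ := X.gh hS hC hη
    obtain ⟨δ₁, hδ₁, c1⟩ := X.cyl_fwd R (c + 1 - ε) (by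
      intro a b
      constructor
      · intro h
        apply X.nd (2 + a) (-2 - b)
        push_cast; linarith
      · intro h
        apply irr_ne X.irr (a + 1) (-2 - b) (by omega)
        push_cast; linarith)
    obtain ⟨δ₂, hδ₂, c2⟩ := X.cyl_bwd R (c + ε) (by
      intro a b
      constructor
      · intro h
        apply X.nd a (2 + b)
        push_cast; linarith
      · intro h
        apply irr_ne X.irr (a - 1) (2 + b) (by omega)
        push_cast; linarith)
    obtain ⟨n, m, hn, hm, un, um, um'⟩ := X.near_beta (lt_min hδ₁ hδ₂)
    rw [lt_min_iff] at hn hm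
    have w1 := c2 n m hn.2 hm.2
    have w2 := c1 (n + 1) (m + 1 + 1)
      (by rw [X.step1 un, show t n + 1 - 2 * ε - (c + 1 - ε) = t n - (c + ε) by ring]; exact hn.1)
      (by rw [X.step0 um', X.step2 um, show t m - ε + 1 - ε - (c + 1 - ε) = t m - (c + ε) by ring]; exact hm.1)
    have r2 := hR _ _ w2
    have w1' : ∀ i : ℕ, i < R → u (n - R + i) = u (m - R + i) := by
      intro i hi
      have := w1 (R - 1 - i) (by omega)
      have e : ((R - 1 - i : ℕ) : ℤ) = R - 1 - i := by omega
      rw [e] at this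
      rw [show n - R + i = n - 1 - (R - 1 - i) by ring, this]
      congr 1; ring
    have r1 := hR _ _ w1'
    have k := incr_eq hS w1' R le_rfl
    rw [sub_add_cancel, sub_add_cancel] at k
    have s1 := hS n
    have s2 := hS m
    have s3 := hS (m + 1)
    rw [un] at s1
    rw [um] at s2
    rw [um'] at s3
    rw [abs_le] at r1 r2 ⊢
    constructor <;> linarith
  by_contra hne
  have hpos : 0 < |v 1 - (v 0 + v 2)| := abs_pos.2 (sub_ne_zero.2 hne)
  have := main (|v 1 - (v 0 + v 2)| / 8) (by positivity)
  linarith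

lemma kesten' (X : Ctx ε l c u t) {v : Fin 3 → ℝ} {S : ℤ → ℝ} (hS : ∀ n, S (n + 1) = S n + v (u n))
    {C : ℝ} (hC : ∀ n, |S n| ≤ C) : ∃ r : ℝ, ∀ a, v a = r * dd ε a := by
  have h1 := X.kesten hS hC
  have hε : 0 < 1 - ε := by linarith [X.e1]
  set r := v 0 / (1 - ε) with hr
  have hv0 : v 0 = r * (1 - ε) := by rw [hr]; field_simp
  set γ := v 2 + r * ε with hγ
  by_cases hg : γ = 0
  · refine ⟨r, fun a => ?_⟩
    rcases fin3_cases a with rfl | rfl | rfl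
    · simpa [dd] using hv0
    · simp [dd]; rw [h1]; linarith
    · simp [dd]; linarith
  · exfalso
    -- the function `H` grows linearly but is bounded
    have inc : ∀ n, 1 - ε ≤ ((S (n + 1) - r * t (n + 1)) / γ + t (n + 1)) - ((S n - r * t n) / γ + t n) := by
      intro n
      have e : ((S (n + 1) - r * t (n + 1)) / γ + t (n + 1)) - ((S n - r * t n) / γ + t n)
        = (v (u n) - r * dd ε (u n)) / γ + dd ε (u n) := by
        rw [hS, X.step]; field_simp; ring
      rw [e]
      rcases fin3_cases (u n) with h | h | h
      · rw [h]; simp [dd, hv0]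
      · rw [h]; simp only [dd]
        have : v 1 - r * (1 - 2 * ε) = γ := by rw [h1, hv0, hγ]; ring
        simp [this, div_self hg]; linarith
      · rw [h]; simp only [dd]
        have : v 2 - r * (-ε) = γ := by rw [hγ]; ring
        simp [this, div_self hg, -mul_neg]
    have grow : ∀ n : ℕ, n * (1 - ε) ≤ ((S n - r * t n) / γ + t n) - ((S 0 - r * t 0) / γ + t 0) := by
      intro n
      induction n with
      | zero => simp
      | succ n ih => have := inc n; push_cast; linarith
    have tb : ∀ n, |t n| ≤ |c| + 1 := by
      intro n
      have := X.lo n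
      have := X.hi n
      have := X.l1
      have := neg_abs_le c
      have := le_abs_self c
      rw [abs_le]; constructor <;> linarith
    have bd : ∀ n : ℤ, |(S n - r * t n) / γ + t n| ≤ (C + |r| * (|c| + 1)) / |γ| + (|c| + 1) := by
      intro n
      refine (abs_add_le _ _).trans (add_le_add ?_ (tb n))
      rw [abs_div]
      refine div_le_div_of_nonneg_right ?_ (abs_nonneg _)
      refine (abs_sub _ _).trans (add_le_add (hC n) ?_)
      rw [abs_mul]
      exact mul_le_mul_of_nonneg_left (tb n) (abs_nonneg _)
    set B := (C + |r| * (|c| + 1)) / |γ| + (|c| + 1)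
    obtain ⟨n, hn⟩ := exists_nat_gt (2 * B / (1 - ε))
    rw [div_lt_iff₀ hε] at hn
    have g := grow n
    have b1 := (abs_le.1 (bd n)).2
    have b2 := (abs_le.1 (bd 0)).1
    linarith

lemma t_inj (X : Ctx ε l c u t) : Function.Injective t := by
  have key : ∀ n : ℤ, ∀ i : ℕ, ∃ a b : ℤ, (i : ℤ) ≤ b ∧ t (n + i) = t n + a - b * ε := by
    intro n i
    induction i with
    | zero => exact ⟨0, 0, by simp, by simp⟩
    | succ i ih =>
      obtain ⟨a, b, hb, h⟩ := ih
      have e1 : n + ((i + 1 : ℕ) : ℤ) = n + i + 1 := by push_cast; ring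
      rcases fin3_cases (u (n + i)) with h0 | h0 | h0
      · refine ⟨a + 1, b + 1, by push_cast; omega, ?_⟩
        rw [e1, X.step0 h0, h]; push_cast; ring
      · refine ⟨a + 1, b + 2, by push_cast; omega, ?_⟩
        rw [e1, X.step1 h0, h]; push_cast; ring
      · refine ⟨a, b + 1, by push_cast; omega, ?_⟩
        rw [e1, X.step2 h0, h]; push_cast; ring
  have lt : ∀ n m : ℤ, n < m → t n ≠ t m := by
    intro n m hnm h
    obtain ⟨i, hi⟩ := Int.eq_ofNat_of_zero_le (sub_nonneg.2 hnm.le)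
    obtain ⟨a, b, hb, h'⟩ := key n i
    rw [show n + (i : ℤ) = m by omega] at h'
    apply irr_ne X.irr a (-b) (by omega)
    push_cast; linarith
  intro n m h
  rcases lt_trichotomy n m with h1 | h1 | h1
  · exact absurd h (lt _ _ h1)
  · exact h1
  · exact absurd h.symm (lt _ _ h1)

end Ctx

/-- Sums over the images of letters (the action of the incidence matrix). -/
def subM (φ : Fin 3 → List (Fin 3)) (v : Fin 3 → ℝ) (a : Fin 3) : ℝ := ((φ a).map v).sum

lemma list_sum {u : ℤ → Fin 3} {v : Fin 3 → ℝ} {S : ℤ → ℝ} (hS : ∀ n, S (n + 1) = S n + v (u n))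
    (L : List (Fin 3)) : ∀ x : ℤ, (∀ i : ℕ, (h : i < L.length) → u (x + i) = L.get ⟨i, h⟩) →
    S (x + L.length) = S x + (L.map v).sum := by
  induction L with
  | nil => intro x _; simp
  | cons a L ih =>
    intro x h
    have h0 := h 0 (by simp)
    have h1 := ih (x + 1) (by
      intro i hi
      have := h (i + 1) (by simpa using hi)
      push_cast at this
      rw [show x + 1 + (i : ℤ) = x + (i + 1) by ring, this]; simp)
    simp at h0
    have : x + ((a :: L).length : ℤ) = x + 1 + L.length := by simp; ring
    rw [this, h1, hS, h0]; simp; ring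

lemma subM_lin (φ : Fin 3 → List (Fin 3)) (v w : Fin 3 → ℝ) (r s : ℝ) (a : Fin 3) :
    subM φ (fun b => r * v b + s * w b) a = r * subM φ v a + s * subM φ w a := by
  unfold subM
  induction φ a with
  | nil => simp
  | cons b L ih => simp only [List.map_cons, List.sum_cons, ih]; ring

lemma subM_sum (φ : Fin 3 → List (Fin 3)) (v : Fin 3 → ℝ) (a : Fin 3) :
    subM φ v a = ∑ b, ((φ a).count b : ℝ) * v b := by
  unfold subM
  induction φ a with
  | nil => simp
  | cons b L ih =>
    simp only [List.map_cons, List.sum_cons, ih, List.count_cons, Fin.sum_univ_three]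
    rcases fin3_cases b with rfl | rfl | rfl <;> simp <;> ring

lemma exists_prim (f : ℤ → ℝ) : ∃ S : ℤ → ℝ, S 0 = 0 ∧ ∀ n, S (n + 1) = S n + f n := by
  refine ⟨fun n => ∑ i ∈ Finset.range n.toNat, f i - ∑ i ∈ Finset.range (-n).toNat, f (-(i + 1)), by simp, ?_⟩
  intro n
  rcases le_or_gt 0 n with h | h
  · obtain ⟨k, rfl⟩ := Int.eq_ofNat_of_zero_le h
    have e1 : (-(k : ℤ)).toNat = 0 := by omega
    have e2 : (-((k : ℤ) + 1)).toNat = 0 := by omega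
    have e3 : ((k : ℤ) + 1).toNat = k + 1 := by omega
    simp only [e1, e2, e3, Finset.sum_range_succ]
    simp
  · obtain ⟨k, hk⟩ := Int.eq_ofNat_of_zero_le (show 0 ≤ -n - 1 by omega)
    have hn : n = -((k : ℤ) + 1) := by omega
    have e1 : n.toNat = 0 := by omega
    have e2 : (n + 1).toNat = 0 := by omega
    have e3 : (-n).toNat = k + 1 := by omega
    have e4 : (-(n + 1)).toNat = k := by omega
    simp only [e1, e2, e3, e4, Finset.sum_range_succ]
    rw [hn]; simp

/-- The data of a fixed point of a substitution. -/
structure FixPt (φ : Fin 3 → List (Fin 3)) (u : ℤ → Fin 3) (k : ℤ → ℤ) : Prop where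
  mono : StrictMono k
  k0 : k 0 = 0
  kstep : ∀ n, k (n + 1) = k n + (φ (u n)).length
  kget : ∀ n : ℤ, ∀ i : ℕ, (h : i < (φ (u n)).length) → u (k n + i) = (φ (u n)).get ⟨i, h⟩

namespace FixPt
variable {ε l c : ℝ} {u : ℤ → Fin 3} {t : ℤ → ℝ} {φ : Fin 3 → List (Fin 3)} {k : ℤ → ℤ}

lemma sum_step (F : FixPt φ u k) {v : Fin 3 → ℝ} {S : ℤ → ℝ} (hS : ∀ n, S (n + 1) = S n + v (u n)) (n : ℤ) :
    S (k (n + 1)) = S (k n) + subM φ v (u n) := by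
  rw [F.kstep]
  exact list_sum hS _ _ (F.kget n)

lemma eig (F : FixPt φ u k) (X : Ctx ε l c u t) : ∃ r : ℝ, (∀ a, subM φ (dd ε) a = r * dd ε a) ∧
    ∀ n, t (k n) = r * t n := by
  have tb : ∀ n, |t n| ≤ |c| + 1 := by
    intro n
    have := X.lo n
    have := X.hi n
    have := X.l1
    have := neg_abs_le c
    have := le_abs_self c
    rw [abs_le]; constructor <;> linarith
  have hs := F.sum_step X.step
  obtain ⟨r, hr⟩ := X.kesten' (S := fun n => t (k n)) hs (fun n => tb (k n))
  refine ⟨r, hr, fun n => ?_⟩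
  induction n using Int.induction_on with
  | zero => simp [F.k0, X.t0]
  | succ n ih => rw [hs, hr, ih, X.step]; ring
  | pred n ih =>
    have h1 := hs (-(n : ℤ) - 1)
    have h2 := X.step (-(n : ℤ) - 1)
    rw [sub_add_cancel] at h1 h2
    rw [hr] at h1
    rw [h1, h2] at ih
    linarith

lemma lam_le (X : Ctx ε l c u t) {r : ℝ} (hr : ∀ n, t (k n) = r * t n) :
    |r| ≤ 1 := by
  by_contra h
  push Not at h
  have ht : t 1 ≠ 0 := by
    intro h1
    have := X.t_inj (h1.trans X.t0.symm)
    omega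
  have it : ∀ j : ℕ, t (k^[j] 1) = r ^ j * t 1 := by
    intro j
    induction j with
    | zero => simp
    | succ j ih => rw [Function.iterate_succ_apply', hr, ih]; ring
  obtain ⟨j, hj⟩ := pow_unbounded_of_one_lt ((|c| + 1) / |t 1|) h
  rw [div_lt_iff₀ (abs_pos.2 ht)] at hj
  have e : |t (k^[j] 1)| = |r| ^ j * |t 1| := by rw [it, abs_mul, abs_pow]
  have b : |t (k^[j] 1)| ≤ |c| + 1 := by
    have := X.lo (k^[j] 1)
    have := X.hi (k^[j] 1)
    have := X.l1
    have := neg_abs_le c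
    have := le_abs_self c
    rw [abs_le]; constructor <;> linarith
  linarith

lemma letters (X : Ctx ε l c u t) (a : Fin 3) : ∃ n, u n = a := by
  obtain ⟨n, m, -, -, h1, h2, h3⟩ := X.near_beta one_pos
  rcases fin3_cases a with rfl | rfl | rfl
  · exact ⟨_, h3⟩
  · exact ⟨_, h1⟩
  · exact ⟨_, h2⟩

lemma not_id (F : FixPt φ u k) (X : Ctx ε l c u t) (hp : IsPrimitiveSubst φ) (h : ∀ n, k (k n) = n) :
    False := by
  have hk : ∀ n, k n = n := by
    intro n
    rcases lt_trichotomy (k n) n with h1 | h1 | h1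
    · have := F.mono h1; rw [h] at this; omega
    · exact h1
    · have := F.mono h1; rw [h] at this; omega
  have len : ∀ a, (φ a).length = 1 := by
    intro a
    obtain ⟨n, rfl⟩ := letters X a
    have := F.kstep n
    rw [hk, hk] at this
    omega
  have lenw : ∀ w : List (Fin 3), (substWord φ w).length = w.length := by
    intro w
    unfold substWord
    induction w with
    | nil => simp
    | cons a w ih => rw [List.flatMap_cons, List.length_append, ih, len]; simp; ring
  obtain ⟨n, -, hn⟩ := hp
  have : ∀ j : ℕ, ((substWord φ)^[j] [0]).length = 1 := by
    intro j
    induction j with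
    | zero => simp
    | succ j ih => rw [Function.iterate_succ_apply', lenw, ih]
  obtain ⟨x, hx⟩ := List.length_eq_one_iff.1 (this n)
  have h0 := hn 0 0
  have h1 := hn 0 1
  rw [hx, List.mem_singleton] at h0 h1
  rw [← h0] at h1
  exact absurd h1 (by decide)

lemma lam_ne (F : FixPt φ u k) (X : Ctx ε l c u t) (hp : IsPrimitiveSubst φ) {r : ℝ}
    (hr : ∀ n, t (k n) = r * t n) : r ≠ 0 ∧ r ^ 2 ≠ 1 := by
  constructor
  · rintro rfl
    have : t (k 0) = t (k 1) := by rw [hr, hr]; simp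
    have := F.mono.injective (X.t_inj this)
    omega
  · intro h
    apply F.not_id X hp
    intro n
    apply X.t_inj
    rw [hr, hr, ← mul_assoc, ← sq, h, one_mul]

/-- If the incidence rows are dependent we get a contradiction. -/
lemma no_dep (F : FixPt φ u k) (X : Ctx ε l c u t) {r : ℝ} (hr0 : r ≠ 0)
    (hr : ∀ a, subM φ (dd ε) a = r * dd ε a)
    (h : ∀ v, subM φ v 1 = subM φ v 0 + subM φ v 2) : False := by
  let M : Matrix (Fin 3) (Fin 3) ℝ := Matrix.of fun a b => ((φ a).count b : ℝ)
  have hM : ∀ v, M.mulVec v = subM φ v := by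
    intro v; ext a
    rw [subM_sum]; rfl
  have hdet : M.det = 0 := by
    rw [← Matrix.exists_vecMul_eq_zero_iff]
    refine ⟨![1, -1, 1], ?_, ?_⟩
    · intro h0; have := congrFun h0 0; simp at this
    · ext b
      have := h (Pi.single b 1)
      simp only [subM_sum, Pi.single_apply] at this
      simp at this
      simp [Matrix.vecMul, dotProduct, Fin.sum_univ_three, M]
      linarith
  obtain ⟨z, hz, hMz⟩ := Matrix.exists_mulVec_eq_zero_iff.2 hdet
  rw [hM] at hMz
  obtain ⟨S, hS0, hS⟩ := exists_prim (fun n => z (u n))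
  have hs := F.sum_step hS
  have hSk : ∀ n, S (k n) = 0 := by
    intro n
    induction n using Int.induction_on with
    | zero => rw [F.k0, hS0]
    | succ n ih => rw [hs, ih, hMz]; simp
    | pred n ih =>
      have h1 := hs (-(n : ℤ) - 1)
      rw [sub_add_cancel, ih, hMz] at h1
      simp at h1
      exact h1.symm
  set Z := |z 0| + |z 1| + |z 2| with hZ
  have hZ' : ∀ a, |z a| ≤ Z := by
    have := abs_nonneg (z 0)
    have := abs_nonneg (z 1)
    have := abs_nonneg (z 2)
    intro a
    rcases fin3_cases a with rfl | rfl | rfl <;> linarith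
  have hZ0 : 0 ≤ Z := (abs_nonneg _).trans (hZ' 0)
  have loc : ∀ n : ℤ, ∀ i : ℕ, |S (k n + i)| ≤ i * Z := by
    intro n i
    induction i with
    | zero => simp [hSk]
    | succ i ih =>
      have e1 : k n + ((i + 1 : ℕ) : ℤ) = k n + i + 1 := by push_cast; ring
      rw [e1, hS]
      have := abs_add_le (S (k n + i)) (z (u (k n + i)))
      have := hZ' (u (k n + i))
      push_cast; linarith
  have kge : ∀ n : ℕ, (n : ℤ) ≤ k n := by
    intro n
    induction n with
    | zero => simp [F.k0]
    | succ n ih =>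
      have := F.mono (show (n : ℤ) < n + 1 by omega)
      push_cast; omega
  have kle : ∀ n : ℕ, k (-(n : ℤ)) ≤ -n := by
    intro n
    induction n with
    | zero => simp [F.k0]
    | succ n ih =>
      have := F.mono (show -((n + 1 : ℕ) : ℤ) < -n by omega)
      push_cast at *; omega
  have cover : ∀ x : ℤ, ∃ n, k n ≤ x ∧ x < k (n + 1) := by
    intro x
    obtain ⟨n, hn, hmax⟩ := Int.exists_greatest_of_bdd (P := fun n => k n ≤ x)
      ⟨(x.natAbs : ℤ), by
        intro n hn
        by_contra hlt
        have := kge x.natAbs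
        have := F.mono (show (x.natAbs : ℤ) < n by omega)
        omega⟩
      ⟨-(x.natAbs : ℤ), by have := kle x.natAbs; omega⟩
    refine ⟨n, hn, ?_⟩
    by_contra h1
    have := hmax (n + 1) (by simpa using h1)
    omega
  set Lm := (φ 0).length + (φ 1).length + (φ 2).length with hLm
  have hL : ∀ a, (φ a).length ≤ Lm := by
    intro a
    rcases fin3_cases a with rfl | rfl | rfl <;> omega
  obtain ⟨s, hs'⟩ := X.kesten' (C := Lm * Z) hS (by
    intro x
    obtain ⟨n, h1, h2⟩ := cover x
    obtain ⟨i, hi⟩ := Int.eq_ofNat_of_zero_le (sub_nonneg.2 h1)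
    rw [F.kstep] at h2
    have := hL (u n)
    have hx : x = k n + i := by omega
    rw [hx]
    refine (loc n i).trans (mul_le_mul_of_nonneg_right ?_ hZ0)
    have : i ≤ Lm := by omega
    exact_mod_cast this)
  have hz' : z = fun b => s * dd ε b + 0 * dd ε b := by ext a; rw [hs']; ring
  have e := subM_lin φ (dd ε) (dd ε) s 0 0
  rw [← hz', hMz, hr] at e
  have h1ε : 1 - ε ≠ 0 := by linarith [X.e1]
  simp [dd, hr0, h1ε] at e
  apply hz
  ext a; rw [hs', e]; simp

lemma trick (F : FixPt φ u k) (X : Ctx ε l c u t) {r : ℝ} (hr0 : r ≠ 0) (hr1 : |r| ≤ 1)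
    (hr : ∀ a, subM φ (dd ε) a = r * dd ε a) (hrt : ∀ n, t (k n) = r * t n) (y : ℝ) (p q : Fin 3)
    (hpq : p = 2 ∧ q = 0 ∨ p = 0 ∧ q = 2)
    (hy : ∀ δ : ℝ, 0 < δ → ∃ n m : ℤ, |t n - y| < δ ∧ |t m - y| < δ ∧ u n = 1 ∧ u m = p ∧ u (m + 1) = q) :
    ∃ (a : ℤ) (b : ℕ), r * y + a - b * ε = c + l - 1 + ε ∨ r * y + a - b * ε = c + ε := by
  by_contra hno
  push Not at hno
  apply F.no_dep X hr0 hr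
  intro v
  obtain ⟨δ, hδ, hcyl⟩ := X.cyl_fwd ((φ 0).length + (φ 1).length + (φ 2).length) (r * y) hno
  obtain ⟨n, m, hn, hm, un, um, um'⟩ := hy δ hδ
  have scale : ∀ x : ℝ, |x - y| < δ → |r * x - r * y| < δ := by
    intro x hx
    rw [← mul_sub, abs_mul]
    exact (mul_le_of_le_one_left (abs_nonneg _) hr1).trans_lt hx
  have w := hcyl (k n) (k m) (by rw [hrt]; exact scale _ hn) (by rw [hrt]; exact scale _ hm)
  have k1 := F.kstep n
  have k2 := F.kstep m
  have k3 := F.kstep (m + 1)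
  rw [un] at k1
  rw [um] at k2
  rw [um'] at k3
  have k4 : k (m + 1 + 1) = k m + (((φ 0).length + (φ 2).length : ℕ) : ℤ) := by
    rcases hpq with ⟨rfl, rfl⟩ | ⟨rfl, rfl⟩ <;> (push_cast; omega)
  have key : ∀ v : Fin 3 → ℝ, ∀ S : ℤ → ℝ, (∀ n, S (n + 1) = S n + v (u n)) →
      S (k n + (φ 1).length) - S (k n) = subM φ v 1 ∧
      S (k n + (((φ 0).length + (φ 2).length : ℕ) : ℤ)) - S (k n) = subM φ v 0 + subM φ v 2 := by
    intro v S hS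
    have s1 := F.sum_step hS n
    have s2 := F.sum_step hS m
    have s3 := F.sum_step hS (m + 1)
    rw [un, k1] at s1
    rw [um] at s2
    rw [um', k4, s2] at s3
    have i2 := incr_eq hS w ((φ 0).length + (φ 2).length) (by omega)
    refine ⟨by linarith, ?_⟩
    rw [i2, s3]
    rcases hpq with ⟨rfl, rfl⟩ | ⟨rfl, rfl⟩ <;> ring
  have kt := key _ t X.step
  have hl : (φ 1).length = (φ 0).length + (φ 2).length := by
    have e : t (k n + (φ 1).length) = t (k n + (((φ 0).length + (φ 2).length : ℕ) : ℤ)) := by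
      have h1 := kt.1
      have h2 := kt.2
      rw [hr] at h1
      rw [hr, hr] at h2
      simp [dd] at h1 h2 ⊢
      linarith
    have := X.t_inj e
    omega
  obtain ⟨S, -, hS⟩ := exists_prim (fun n => v (u n))
  have ks := key v S hS
  rw [← hl] at ks
  rw [← ks.1, ks.2]

end FixPt

/-- Membership in `ℚ + ℚ ε`. -/
def InK (ε x : ℝ) : Prop := ∃ p q : ℚ, x = (p : ℝ) + (q : ℝ) * ε

namespace InK
variable {ε x y : ℝ}

lemma add (hx : InK ε x) (hy : InK ε y) : InK ε (x + y) := by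
  obtain ⟨p, q, rfl⟩ := hx
  obtain ⟨p', q', rfl⟩ := hy
  exact ⟨p + p', q + q', by push_cast; ring⟩

lemma sub (hx : InK ε x) (hy : InK ε y) : InK ε (x - y) := by
  obtain ⟨p, q, rfl⟩ := hx
  obtain ⟨p', q', rfl⟩ := hy
  exact ⟨p - p', q - q', by push_cast; ring⟩

lemma of_int (a : ℤ) : InK ε (a : ℝ) := ⟨a, 0, by simp⟩
lemma of_eps : InK ε ε := ⟨0, 1, by simp⟩
lemma one : InK ε 1 := ⟨1, 0, by simp⟩

lemma mul {b c : ℚ} (hq : ε ^ 2 = b * ε + c) (hx : InK ε x) (hy : InK ε y) : InK ε (x * y) := by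
  obtain ⟨p, q, rfl⟩ := hx
  obtain ⟨p', q', rfl⟩ := hy
  refine ⟨p * p' + q * q' * c, p * q' + q * p' + q * q' * b, ?_⟩
  push_cast
  linear_combination (q : ℝ) * q' * hq

lemma inv {b c : ℚ} (hi : Irrational ε) (hq : ε ^ 2 = b * ε + c) (hx : InK ε x) (h0 : x ≠ 0) :
    InK ε x⁻¹ := by
  obtain ⟨p, q, rfl⟩ := hx
  have hn : ((p : ℝ) + q * ε) * ((p + q * b : ℚ) - q * ε) = ((p * (p + q * b) - q * q * c : ℚ) : ℝ) := by
    push_cast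
    linear_combination (-(q : ℝ) * q) * hq
  have hc : ((p + q * b : ℚ) : ℝ) - q * ε ≠ 0 := by
    intro h
    by_cases hq0 : q = 0
    · subst hq0
      apply h0
      simp at h ⊢
      exact h
    · apply (hi.ratCast_mul hq0).ne_rat (p + q * b)
      linarith
  have hN : ((p * (p + q * b) - q * q * c : ℚ) : ℝ) ≠ 0 := by
    rw [← hn]; exact mul_ne_zero h0 hc
  set N : ℚ := p * (p + q * b) - q * q * c
  refine ⟨(p + q * b) / N, -q / N, ?_⟩
  rw [inv_eq_one_div, div_eq_iff h0]
  have : ((((p + q * b) / N : ℚ) : ℝ) + ((-q / N : ℚ) : ℝ) * ε) = ((p + q * b : ℚ) - q * ε) / N := by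
    push_cast; ring
  rw [this, div_mul_eq_mul_div, mul_comm, hn, div_self hN]

lemma of_mul {b c : ℚ} (hi : Irrational ε) (hq : ε ^ 2 = b * ε + c) {r : ℝ} (hr : InK ε r) (h0 : r ≠ 0)
    (h : InK ε (r * x)) : InK ε x := by
  have := mul hq (inv hi hq hr h0) h
  rwa [inv_mul_cancel_left₀ h0] at this

end InK

/-- Weights `(1, 2, 1)`. -/
def ww : Fin 3 → ℝ := ![1, 2, 1]

lemma subM_dd (φ : Fin 3 → List (Fin 3)) : ∃ P Q : Fin 3 → ℤ, ∀ a, ∀ x : ℝ,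
    subM φ (dd x) a = P a - Q a * x := by
  refine ⟨fun a => (φ a).count 0 + (φ a).count 1,
    fun a => (φ a).count 0 + 2 * (φ a).count 1 + (φ a).count 2, fun a x => ?_⟩
  rw [subM_sum, Fin.sum_univ_three]
  simp [dd]
  ring

lemma subM_ge (φ : Fin 3 → List (Fin 3)) (hne : ∀ a, φ a ≠ []) (v : Fin 3 → ℝ) (hv : ∀ a, 1 ≤ v a)
    (a : Fin 3) : 1 ≤ subM φ v a := by
  unfold subM
  have h : ∀ L : List (Fin 3), 0 ≤ (L.map v).sum := by
    intro L
    apply List.sum_nonneg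
    intro x hx
    obtain ⟨b, -, rfl⟩ := List.mem_map.1 hx
    linarith [hv b]
  have := hne a
  cases hL : φ a with
  | nil => exact absurd hL this
  | cons b L => rw [List.map_cons, List.sum_cons]; linarith [hv b, h L]

lemma sturm_core {ε x r r' : ℝ} {φ : Fin 3 → List (Fin 3)} (hne : ∀ a, φ a ≠ [])
    (e0 : 0 < ε) (e1 : ε < 1) (hr1 : |r| < 1) (hx : x ≠ ε)
    (hr : ∀ a, subM φ (dd ε) a = r * dd ε a) (hr' : ∀ a, subM φ (dd x) a = r' * dd x a) :
    x ∉ Set.Ioo (0 : ℝ) 1 := by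
  rintro ⟨x0, x1⟩
  have hW : ∀ j : ℕ, ∀ a, 1 ≤ (subM φ)^[j] ww a := by
    intro j
    induction j with
    | zero => intro a; rcases fin3_cases a with rfl | rfl | rfl <;> simp [ww]
    | succ j ih => intro a; rw [Function.iterate_succ_apply']; exact subM_ge φ hne _ ih a
  have rel : ∀ j : ℕ, ∀ a, (ε - x) * (subM φ)^[j] ww a = r' ^ j * dd x a + (-r ^ j) * dd ε a := by
    intro j
    induction j with
    | zero =>
      intro a
      rcases fin3_cases a with rfl | rfl | rfl <;> simp [ww, dd] <;> ring
    | succ j ih =>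
      intro a
      rw [Function.iterate_succ_apply']
      have h1 := subM_lin φ (dd x) (dd ε) (r' ^ j) (-r ^ j) a
      have h2 := subM_lin φ ((subM φ)^[j] ww) (dd ε) (ε - x) 0 a
      have e : (fun b => (ε - x) * (subM φ)^[j] ww b + 0 * dd ε b) =
          (fun b => r' ^ j * dd x b + -r ^ j * dd ε b) := by
        ext b; rw [ih]; ring
      rw [e, h1, hr, hr'] at h2
      rw [pow_succ, pow_succ]
      linarith
  obtain ⟨j, hj⟩ := exists_pow_lt_of_lt_one (abs_pos.2 (sub_ne_zero.2 hx.symm)) hr1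
  rw [← abs_pow] at hj
  have r0 := rel j 0
  have r2 := rel j 2
  have w0 := hW j 0
  have w2 := hW j 2
  set W0 := (subM φ)^[j] ww 0
  set W2 := (subM φ)^[j] ww 2
  simp [dd] at r0 r2
  set s := r ^ j
  set s' := r' ^ j
  have b1 := neg_abs_le s
  have b2 := le_abs_self s
  have bb := abs_nonneg s
  have u1 : |s * (1 - ε)| ≤ |s| := by
    rw [abs_mul, abs_of_pos (by linarith : 0 < 1 - ε)]
    exact mul_le_of_le_one_right bb (by linarith)
  have u2 : |s * ε| ≤ |s| := by
    rw [abs_mul, abs_of_pos e0]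
    exact mul_le_of_le_one_right bb e1.le
  rw [abs_le] at u1 u2
  rcases lt_or_gt_of_ne hx with h | h
  · rw [abs_of_pos (by linarith : 0 < ε - x)] at hj
    have v0 : ε - x ≤ (ε - x) * W0 := le_mul_of_one_le_right (by linarith) w0
    have v2 : ε - x ≤ (ε - x) * W2 := le_mul_of_one_le_right (by linarith) w2
    have g0 : 0 < s' * (1 - x) := by linarith
    have g2 : s' * x < 0 := by linarith
    have := pos_of_mul_pos_left g0 (by linarith : (0:ℝ) ≤ 1 - x)
    linarith [mul_pos this x0]
  · rw [abs_of_neg (by linarith : ε - x < 0)] at hj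
    have v0 : x - ε ≤ (x - ε) * W0 := le_mul_of_one_le_right (by linarith) w0
    have v2 : x - ε ≤ (x - ε) * W2 := le_mul_of_one_le_right (by linarith) w2
    have g0 : s' * (1 - x) < 0 := by linarith
    have g2 : 0 < s' * x := by linarith
    have := pos_of_mul_pos_left g2 x0.le
    linarith [mul_pos this (by linarith : 0 < 1 - x)]

lemma ctx_of {ε l c : ℝ} {u : ℤ → Fin 3} {t : ℤ → ℝ}
    (hε : Irrational ε) (hεm : ε ∈ Set.Ioo (0 : ℝ) 1)
    (hl₁ : max ε (1 - ε) < l) (hl₂ : l < 1)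
    (hnd : l ∉ Zbr ε) (t0 : t 0 = 0) (tm : ∀ n, t n ∈ Set.Ico c (c + l))
    (ts : ∀ n, t (n + 1) = T3 ε l c (t n)) (tu : ∀ n, u n = letter3 ε l c (t n)) : Ctx ε l c u t := by
  rw [max_lt_iff] at hl₁
  refine ⟨hε, hεm.1, hεm.2, hl₁.1, hl₁.2, hl₂, fun a b h => hnd ⟨a, b, h⟩, t0, fun n => (tm n).1,
    fun n => (tm n).2, ?_, ?_, ?_, ?_⟩
  · intro n
    rw [ts, tu]; unfold T3 letter3 dd
    split_ifs <;> simp <;> ring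
  · intro n
    rw [tu]; unfold letter3
    split_ifs <;> simp <;> linarith
  · intro n
    rw [tu]; unfold letter3
    split_ifs <;> simp <;> (try intros) <;> (try constructor) <;> linarith
  · intro n
    rw [tu]; unfold letter3
    split_ifs <;> simp <;> linarith

theorem threeIet_subst_invariant_necessary (ε l c : ℝ) (u : ℤ → Fin 3)
    (hε : Irrational ε) (hεm : ε ∈ Set.Ioo (0 : ℝ) 1)
    (hl₁ : max ε (1 - ε) < l) (hl₂ : l < 1) (hc₁ : c ≤ 0) (hc₂ : 0 < c + l)
    (hnd : l ∉ Zbr ε) (hu : IsThreeIetWord ε l c u)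
    (φ : Fin 3 → List (Fin 3)) (hne : ∀ a, φ a ≠ [])
    (hprim : IsPrimitiveSubst φ) (hfix : IsFixedPointSubstZ φ u) :
    (∃ A B C : ℤ, A ≠ 0 ∧ (A : ℝ) * ε ^ 2 + (B : ℝ) * ε + (C : ℝ) = 0 ∧
        (-(B : ℝ) / (A : ℝ) - ε) ∉ Set.Ioo (0 : ℝ) 1) ∧
    (∃ p₁ q₁ p₂ q₂ : ℚ, c = (p₁ : ℝ) + (q₁ : ℝ) * ε ∧ l = (p₂ : ℝ) + (q₂ : ℝ) * ε) := by
  obtain ⟨t, t0, tm, ts, tu⟩ := hu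
  have X : Ctx ε l c u t := ctx_of hε hεm hl₁ hl₂ hnd t0 tm ts tu
  obtain ⟨k, km, k0, ks, kg⟩ := hfix
  have F : FixPt φ u k := ⟨km, k0, ks, kg⟩
  obtain ⟨r, hr, hrt⟩ := F.eig X
  have hr1 := FixPt.lam_le X hrt
  obtain ⟨hr0, hrsq⟩ := F.lam_ne X hprim hrt
  have hr1' : |r| < 1 := by
    refine lt_of_le_of_ne hr1 fun h => hrsq ?_
    rw [← sq_abs, h, one_pow]
  obtain ⟨P, Q, hPQ⟩ := subM_dd φ
  have q0 := hr 0
  have q1 := hr 1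
  have q2 := hr 2
  rw [hPQ] at q0 q1 q2
  simp [dd] at q0 q1 q2
  have hrv : r = P 0 - P 2 - (Q 0 - Q 2) * ε := by linarith
  have quad : ((Q 0 : ℝ) - Q 2) * ε ^ 2 + (P 2 + Q 2 - P 0) * ε - P 2 = 0 := by
    rw [hrv] at q2
    linear_combination -q2
  have hA : Q 0 - Q 2 ≠ 0 := by
    intro h
    have h' : (Q 0 : ℝ) - Q 2 = 0 := by exact_mod_cast h
    rw [h', zero_mul, sub_zero] at hrv
    have h1 := abs_lt.1 hr1'
    have h2 : (-1 : ℝ) < ((P 0 - P 2 : ℤ) : ℝ) := by push_cast; linarith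
    have h3 : ((P 0 - P 2 : ℤ) : ℝ) < 1 := by push_cast; linarith
    have h4 : -1 < P 0 - P 2 := by exact_mod_cast h2
    have h5 : P 0 - P 2 < 1 := by exact_mod_cast h3
    have h6 : P 0 - P 2 = 0 := by omega
    apply hr0
    rw [hrv]
    exact_mod_cast h6
  have hAR : (Q 0 : ℝ) - Q 2 ≠ 0 := by exact_mod_cast hA
  have rows : (P 1 = P 0 + P 2) ∧ (Q 1 = Q 0 + Q 2) := by
    have e : ((P 1 - P 0 - P 2 : ℤ) : ℝ) + ((-(Q 1 - Q 0 - Q 2) : ℤ) : ℝ) * ε = 0 := by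
      push_cast; linarith
    have hQ : Q 1 - Q 0 - Q 2 = 0 := by
      by_contra h
      exact irr_ne hε _ _ (neg_ne_zero.2 h) e
    rw [hQ] at e
    simp at e
    have hP : P 1 - P 0 - P 2 = 0 := by exact_mod_cast e
    omega
  constructor
  · refine ⟨Q 0 - Q 2, P 2 + Q 2 - P 0, -P 2, hA, by push_cast; linarith, ?_⟩
    set x : ℝ := -((P 2 + Q 2 - P 0 : ℤ) : ℝ) / ((Q 0 - Q 2 : ℤ) : ℝ) - ε with hx
    have hx' : ((Q 0 : ℝ) - Q 2) * (x + ε) = -(P 2 + Q 2 - P 0) := by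
      rw [hx]; push_cast; field_simp; ring
    have quad' : ((Q 0 : ℝ) - Q 2) * x ^ 2 + (P 2 + Q 2 - P 0) * x - P 2 = 0 := by
      linear_combination quad + (x - ε) * hx'
    have hne' : x ≠ ε := by
      intro h
      rw [h] at hx'
      apply irr_ne hε (P 2 + Q 2 - P 0) (2 * (Q 0 - Q 2)) (by omega)
      push_cast; linarith
    refine sturm_core (r := r) (r' := P 0 - P 2 - (Q 0 - Q 2) * x) hne hεm.1 hεm.2 hr1' hne' hr ?_
    intro a
    rw [hPQ]
    rcases fin3_cases a with rfl | rfl | rfl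
    · simp [dd]; linear_combination -quad'
    · rw [rows.1, rows.2]; simp [dd]; linear_combination -2 * quad'
    · simp [dd]; linear_combination -quad'
  · have hq : ε ^ 2 = ((-(P 2 + Q 2 - P 0) / (Q 0 - Q 2) : ℚ) : ℝ) * ε + ((P 2 / (Q 0 - Q 2) : ℚ) : ℝ) := by
      push_cast; field_simp; linarith
    have kr : InK ε r := ⟨P 0 - P 2, -(Q 0 - Q 2), by push_cast; linarith⟩
    have kr1 : InK ε (r - 1) := kr.sub InK.one
    have hrm : r - 1 ≠ 0 := by
      intro h; apply hrsq; rw [show r = 1 by linarith]; norm_num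
    have hrp : r + 1 ≠ 0 := by
      intro h; apply hrsq; rw [show r = -1 by linarith]; norm_num
    have kab : ∀ (a : ℤ) (b : ℕ), InK ε (a - b * ε) := fun a b => ⟨a, -b, by push_cast; ring⟩
    have kre : InK ε (r * ε) := kr.mul hq InK.of_eps
    obtain ⟨a, b, hβ⟩ := F.trick X hr0 hr1 hr hrt (c + ε) 2 0 (by simp) (fun δ hδ => X.near_beta hδ)
    obtain ⟨a', b', hα⟩ := F.trick X hr0 hr1 hr hrt (c + l - 1 + ε) 0 2 (by simp) (fun δ hδ => X.near_alpha hδ)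
    have k1 := kab a b
    have k2 := kab a' b'
    have ke : InK ε ε := InK.of_eps
    have ko : InK ε 1 := InK.one
    have fin : InK ε c ∧ InK ε l := by
      rcases hβ with hβ | hβ
      · have f1 : InK ε ((r - 1) * c - l) := by
          rw [show (r - 1) * c - l = ε - 1 - r * ε - (a - b * ε) by linarith]
          exact ((ke.sub ko).sub kre).sub k1
        have hl : InK ε l := by
          rcases hα with hα | hα
          · have f2 : InK ε ((r - 1) * (c + l)) := by
              rw [show (r - 1) * (c + l) = r + ε - 1 - r * ε - (a' - b' * ε) by linarith]
              exact (((kr.add ke).sub ko).sub kre).sub k2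
            have f3 : InK ε (r * l) := by
              have := f2.sub f1
              rwa [show (r - 1) * (c + l) - ((r - 1) * c - l) = r * l by ring] at this
            exact InK.of_mul hε hq kr hr0 f3
          · have f2 : InK ε ((r - 1) * c + r * l) := by
              rw [show (r - 1) * c + r * l = r + ε - r * ε - (a' - b' * ε) by linarith]
              exact ((kr.add ke).sub kre).sub k2
            have f3 : InK ε ((r + 1) * l) := by
              have := f2.sub f1
              rwa [show (r - 1) * c + r * l - ((r - 1) * c - l) = (r + 1) * l by ring] at this
            exact InK.of_mul hε hq (kr.add ko) hrp f3
        refine ⟨InK.of_mul hε hq kr1 hrm ?_, hl⟩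
        have := f1.add hl
        rwa [sub_add_cancel] at this
      · have hc : InK ε c := by
          apply InK.of_mul hε hq kr1 hrm
          rw [show (r - 1) * c = ε - r * ε - (a - b * ε) by linarith]
          exact (ke.sub kre).sub k1
        refine ⟨hc, ?_⟩
        rcases hα with hα | hα
        · have f2 : InK ε ((r - 1) * (c + l)) := by
            rw [show (r - 1) * (c + l) = r + ε - 1 - r * ε - (a' - b' * ε) by linarith]
            exact (((kr.add ke).sub ko).sub kre).sub k2
          have := (InK.of_mul hε hq kr1 hrm f2).sub hc
          rwa [add_sub_cancel_left] at this
        · have f2 : InK ε ((r - 1) * c + r * l) := by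
            rw [show (r - 1) * c + r * l = r + ε - r * ε - (a' - b' * ε) by linarith]
            exact ((kr.add ke).sub kre).sub k2
          have := f2.sub (kr1.mul hq hc)
          rw [add_sub_cancel_left] at this
          exact InK.of_mul hε hq kr hr0 this
    obtain ⟨⟨p₁, q₁, h1⟩, ⟨p₂, q₂, h2⟩⟩ := fin
    exact ⟨p₁, q₁, p₂, q₂, h1, h2⟩
end
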